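/- There exists ε₀ > 0 such that for every ε ∈ (0,ε₀) and every global C^∞ solution u of the Cauchy problem, for each fixed (σ,ω) ∈ ℝ×S¹ and j = 1,2, the limit V_j⁺(σ,ω) = lim_{t→+∞} V_j(t;σ,ω) exists. -/

import Mathlib

/-!
The outgoing profile `V = ½(∂_r - ∂ₜ)(√r u₁)` satisfies, along each ray `r = t + σ`, a transport
equation whose cubic term has a damping sign. With the incoming profile `A = ½(∂_r + ∂ₜ)(√r u₁)`
one has `√r ∂ₜu₁ = A - V`, and (`V_hasDerivAt`)

  `V' = ½ (∂ₜu₂)² (A - V) - ½ r^{-3/2} (Ω² + ¼) u₁`.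

If `A → 0` along the ray and the last term is integrable in time, then from late times on neither
`max(V, η)` nor `max(-V, η)` can rise by more than `η` (`fence`). Hence `V` does not oscillate
between two levels, and it converges (`tendsto_of_barriers`, `prof_tendsto`). No information about
the size of `∂ₜu₂` beyond its square being nonnegative enters here.

The two facts used about `A` and `Ω²u` come from global decay for small data (`global_WB`), proved by
a continuity argument on the bootstrap bound `(1 + t)(∂ₜu_j)² ≤ κ²` (`BA`).

* The nonlinearity is damping, so the energy does not increase and the speed of propagation is
  finite (`finite_speed`, `base_growth`). Spatial translations and the rotation are divergence-free
  Killing fields which commute with `∂ₜ`; Gagliardo–Nirenberg inequalities along a single such field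
  (`gn4`, `gn6`, `cubic3`) bound the commuted cubic source in `L²` by `κ²/(1 + t)` times the commuted
  energy. Boosts are needed only once, and are commuted directly. Grönwall's inequality yields
  energies growing at most like `ε² (1 + t)^{1/16}` (`energy_bounds`).
* In the region `|x| ≤ t/2` the boosts give decay of the second derivatives, and a
  Gagliardo–Nirenberg inequality gives `(∂ₜu)² ≲ ε²/t` (`interior_decay`).
* In the region `|x| ≥ t/2` three rotations and a Sobolev inequality in polar coordinates give
  `|(Ω² + ¼)u| ≲ ε t^{1/4}` (`wave_ang`), so the last term above is `O(t^{-5/4})`. The profile `A`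
  vanishes outside the light cone; integrating its own transport equation inwards bounds it by
  `O(κ³ + ε)`, and by `O(1/t)` at bounded distance from the cone (`A_bound`). Following `V` from the
  point where the ray enters the region bounds `√r ∂ₜu` by `O(κ³ + ε)` (`wave_decay`).

Together these improve the bootstrap constant from `κ` to `κ/2` (`improved`), and `continuation`
extends the bound to all times.

The calculus of vector fields is carried out in the algebra `SF` of smooth functions of
`(t, x₁, x₂)`, where they are derivations and all commutator identities are algebraic; integrals are
taken over a fixed large square, outside of which everything vanishes.
-/

open Real MeasureTheory Filter Topology

noncomputable section

/-- Partial derivative in `t`. -/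
def pt (u : ℝ → ℝ → ℝ → ℝ) : ℝ → ℝ → ℝ → ℝ :=
  fun t x1 x2 => deriv (fun s => u s x1 x2) t

/-- Partial derivative in `x₁`. -/
def p1 (u : ℝ → ℝ → ℝ → ℝ) : ℝ → ℝ → ℝ → ℝ :=
  fun t x1 x2 => deriv (fun y => u t y x2) x1

/-- Partial derivative in `x₂`. -/
def p2 (u : ℝ → ℝ → ℝ → ℝ) : ℝ → ℝ → ℝ → ℝ :=
  fun t x1 x2 => deriv (fun y => u t x1 y) x2

/-- The d'Alembertian `□ = ∂ₜ² − ∂₁² − ∂₂²`. -/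
def dAlembert (u : ℝ → ℝ → ℝ → ℝ) : ℝ → ℝ → ℝ → ℝ :=
  fun t x1 x2 => pt (pt u) t x1 x2 - p1 (p1 u) t x1 x2 - p2 (p2 u) t x1 x2

/-- `u : ℝ×ℝ² → ℝ` (curried) is C^∞. -/
def Smooth3 (u : ℝ → ℝ → ℝ → ℝ) : Prop :=
  ContDiff ℝ (⊤ : ℕ∞) (fun p : ℝ × ℝ × ℝ => u p.1 p.2.1 p.2.2)

/-- Compactly supported C^∞ function on ℝ². -/
def SmoothCompact2 (f : ℝ → ℝ → ℝ) : Prop :=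
  ContDiff ℝ (⊤ : ℕ∞) (fun p : ℝ × ℝ => f p.1 p.2) ∧
    HasCompactSupport (fun p : ℝ × ℝ => f p.1 p.2)

/-- Global C^∞ solution of the Cauchy problem
`□u₁ = −(∂ₜu₂)²∂ₜu₁`, `□u₂ = −(∂ₜu₁)²∂ₜu₂` with data `(εf_j, εg_j)`. -/
structure IsSolution (ε : ℝ) (f1 f2 g1 g2 : ℝ → ℝ → ℝ)
    (u1 u2 : ℝ → ℝ → ℝ → ℝ) : Prop where
  smooth1 : Smooth3 u1
  smooth2 : Smooth3 u2
  pde1 : ∀ t x1 x2 : ℝ, 0 < t →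
    dAlembert u1 t x1 x2 = -(pt u2 t x1 x2) ^ 2 * pt u1 t x1 x2
  pde2 : ∀ t x1 x2 : ℝ, 0 < t →
    dAlembert u2 t x1 x2 = -(pt u1 t x1 x2) ^ 2 * pt u2 t x1 x2
  init1 : ∀ x1 x2 : ℝ, u1 0 x1 x2 = ε * f1 x1 x2
  init2 : ∀ x1 x2 : ℝ, u2 0 x1 x2 = ε * f2 x1 x2
  initd1 : ∀ x1 x2 : ℝ, pt u1 0 x1 x2 = ε * g1 x1 x2
  initd2 : ∀ x1 x2 : ℝ, pt u2 0 x1 x2 = ε * g2 x1 x2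

/-- `‖u(t)‖_E²  = ½∫ ((∂ₜu)² + (∂₁u)² + (∂₂u)²) dx`. -/
def energySq (u : ℝ → ℝ → ℝ → ℝ) (t : ℝ) : ℝ :=
  (1 / 2) * ∫ x : ℝ × ℝ,
    ((pt u t x.1 x.2) ^ 2 + (p1 u t x.1 x.2) ^ 2 + (p2 u t x.1 x.2) ^ 2)

/-- The energy norm `‖u(t)‖_E`. -/
def energyNorm (u : ℝ → ℝ → ℝ → ℝ) (t : ℝ) : ℝ :=
  Real.sqrt (energySq u t)

/-- `|x|` in coordinates. -/
def radius (x1 x2 : ℝ) : ℝ := Real.sqrt (x1 ^ 2 + x2 ^ 2)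

/-- The Japanese bracket `⟨z⟩ = (1+z²)^{1/2}`. -/
def jb (z : ℝ) : ℝ := Real.sqrt (1 + z ^ 2)

/-- `U(t,x) = D(|x|^{1/2}u(t,x))` where `D = ½(∂_r − ∂ₜ)`. -/
def Uop (u : ℝ → ℝ → ℝ → ℝ) : ℝ → ℝ → ℝ → ℝ :=
  fun t x1 x2 =>
    (1 / 2) * ((x1 / radius x1 x2) *
        p1 (fun s y1 y2 => radius y1 y2 ^ ((1 : ℝ) / 2) * u s y1 y2) t x1 x2
      + (x2 / radius x1 x2) *
        p2 (fun s y1 y2 => radius y1 y2 ^ ((1 : ℝ) / 2) * u s y1 y2) t x1 x2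
      - pt (fun s y1 y2 => radius y1 y2 ^ ((1 : ℝ) / 2) * u s y1 y2) t x1 x2)

/-- `V(t;σ,ω) = U(t,(t+σ)ω)`. -/
def Vop (u : ℝ → ℝ → ℝ → ℝ) (t σ ω1 ω2 : ℝ) : ℝ :=
  Uop u t ((t + σ) * ω1) ((t + σ) * ω2)

/-- The rotation vector field `Ω = x₁∂₂ − x₂∂₁`. -/
def rot (u : ℝ → ℝ → ℝ → ℝ) : ℝ → ℝ → ℝ → ℝ :=
  fun t x1 x2 => x1 * p2 u t x1 x2 - x2 * p1 u t x1 x2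

/-- `H` for component `a` (the other component being `b`):
`H_a = ½(|x|^{1/2}(∂ₜu_b)²(∂ₜu_a) + t⁻¹U_b²U_a) − (8|x|^{3/2})⁻¹(4Ω²+1)u_a`. -/
def Hfun (ua ub : ℝ → ℝ → ℝ → ℝ) (t x1 x2 : ℝ) : ℝ :=
  (1 / 2) * (radius x1 x2 ^ ((1 : ℝ) / 2) * (pt ub t x1 x2) ^ 2 * pt ua t x1 x2
      + (1 / t) * (Uop ub t x1 x2) ^ 2 * Uop ua t x1 x2)
    - (1 / (8 * radius x1 x2 ^ ((3 : ℝ) / 2))) *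
        (4 * rot (rot ua) t x1 x2 + ua t x1 x2)

/-- `K_a(t;σ,ω) = H_a(t,(t+σ)ω)`. -/
def Kfun (ua ub : ℝ → ℝ → ℝ → ℝ) (t σ ω1 ω2 : ℝ) : ℝ :=
  Hfun ua ub t ((t + σ) * ω1) ((t + σ) * ω2)

/-- `ρ = V₁K₁ − V₂K₂`. -/
def rhoFun (u1 u2 : ℝ → ℝ → ℝ → ℝ) (t σ ω1 ω2 : ℝ) : ℝ :=
  Vop u1 t σ ω1 ω2 * Kfun u1 u2 t σ ω1 ω2 -
    Vop u2 t σ ω1 ω2 * Kfun u2 u1 t σ ω1 ω2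

/-- The Radon transform: line integral of `φ` over `{y : y·ω = s}`. -/
def Rline (φ : ℝ → ℝ → ℝ) (s ω1 ω2 : ℝ) : ℝ :=
  ∫ τ : ℝ, φ (s * ω1 - τ * ω2) (s * ω2 + τ * ω1)

/-- `R₂[φ](σ,ω) = (2√2π)⁻¹ ∫_σ^∞ R[φ](s,ω)(s−σ)^{−1/2} ds`. -/
def R2 (φ : ℝ → ℝ → ℝ) (σ ω1 ω2 : ℝ) : ℝ :=
  (1 / (2 * Real.sqrt 2 * Real.pi)) *
    ∫ s in Set.Ioi σ, Rline φ s ω1 ω2 / Real.sqrt (s - σ)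

/-- The Friedlander radiation field `F₀[φ,ψ] = −∂_σR₂[φ] + R₂[ψ]`. -/
def F0 (φ ψ : ℝ → ℝ → ℝ) (σ ω1 ω2 : ℝ) : ℝ :=
  -deriv (fun σ' => R2 φ σ' ω1 ω2) σ + R2 ψ σ ω1 ω2

/-- `∂_σF₀[φ,ψ]`. -/
def dF0 (φ ψ : ℝ → ℝ → ℝ) (σ ω1 ω2 : ℝ) : ℝ :=
  deriv (fun σ' => F0 φ ψ σ' ω1 ω2) σ

/-- The vector fields `Γ = (S, L₁, L₂, Ω, ∂ₜ, ∂₁, ∂₂)`. -/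
def Gam (i : Fin 7) (u : ℝ → ℝ → ℝ → ℝ) : ℝ → ℝ → ℝ → ℝ :=
  match i with
  | 0 => fun t x1 x2 => t * pt u t x1 x2 + x1 * p1 u t x1 x2 + x2 * p2 u t x1 x2
  | 1 => fun t x1 x2 => t * p1 u t x1 x2 + x1 * pt u t x1 x2
  | 2 => fun t x1 x2 => t * p2 u t x1 x2 + x2 * pt u t x1 x2
  | 3 => rot u
  | 4 => pt u
  | 5 => p1 u
  | 6 => p2 u

/-- `Γ^α = Γ₀^{α₀}⋯Γ₆^{α₆}`. -/
def GamMulti (α : Fin 7 → ℕ) (u : ℝ → ℝ → ℝ → ℝ) : ℝ → ℝ → ℝ → ℝ :=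
  (Gam 0)^[α 0] ((Gam 1)^[α 1] ((Gam 2)^[α 2] ((Gam 3)^[α 3]
    ((Gam 4)^[α 4] ((Gam 5)^[α 5] ((Gam 6)^[α 6] u))))))

/-- Pointwise norm `|φ(t,x)|_s = Σ_{|α|≤s}|Γ^αφ(t,x)|`, for a (finite) family of
components, `|Γ^αφ|` being the Euclidean norm of the vector of components. -/
def ptwiseNorm (s : ℕ) (us : List (ℝ → ℝ → ℝ → ℝ)) (t x1 x2 : ℝ) : ℝ :=
  ∑ α : Fin 7 → Fin (s + 1),
    if (∑ i, (α i : ℕ)) ≤ s then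
      Real.sqrt ((us.map fun u => (GamMulti (fun i => (α i : ℕ)) u t x1 x2) ^ 2).sum)
    else 0

/-- `‖φ(t)‖_s = Σ_{|α|≤s}‖Γ^αφ(t,·)‖_{L²(ℝ²)}`. -/
def sobNorm (s : ℕ) (us : List (ℝ → ℝ → ℝ → ℝ)) (t : ℝ) : ℝ :=
  ∑ α : Fin 7 → Fin (s + 1),
    if (∑ i, (α i : ℕ)) ≤ s then
      Real.sqrt (∫ x : ℝ × ℝ,
        (us.map fun u => (GamMulti (fun i => (α i : ℕ)) u t x.1 x.2) ^ 2).sum)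
    else 0

/-- The components of `∂u = (∂ₜu₁,∂₁u₁,∂₂u₁,∂ₜu₂,∂₁u₂,∂₂u₂)`. -/
def dList (u1 u2 : ℝ → ℝ → ℝ → ℝ) : List (ℝ → ℝ → ℝ → ℝ) :=
  [pt u1, p1 u1, p2 u1, pt u2, p1 u2, p2 u2]

/-- Smooth solution of the free wave equation with data `(φ0,φ1)`. -/
def IsFreeSolution (φ0 φ1 : ℝ → ℝ → ℝ) (φ : ℝ → ℝ → ℝ → ℝ) : Prop :=
  Smooth3 φ ∧ (∀ t x1 x2 : ℝ, 0 < t → dAlembert φ t x1 x2 = 0) ∧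
    (∀ x1 x2 : ℝ, φ 0 x1 x2 = φ0 x1 x2) ∧
    (∀ x1 x2 : ℝ, pt φ 0 x1 x2 = φ1 x1 x2)

/-- Mixed space-time partial `∂^α = ∂ₜ^{α₀}∂₁^{α₁}∂₂^{α₂}`. -/
def dmix (α : Fin 3 → ℕ) (u : ℝ → ℝ → ℝ → ℝ) : ℝ → ℝ → ℝ → ℝ :=
  pt^[α 0] (p1^[α 1] (p2^[α 2] u))

namespace DampedWave

/-! ### Smooth functions on space-time and vector fields -/

/-- The algebra of `C^∞` functions of `(t, x₁, x₂)`. -/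
def SF : Subalgebra ℝ (ℝ × ℝ × ℝ → ℝ) where
  carrier := {F | ContDiff ℝ (⊤ : ℕ∞) F}
  mul_mem' := by
    intro F G (hF : ContDiff ℝ (⊤ : ℕ∞) F) (hG : ContDiff ℝ (⊤ : ℕ∞) G)
    exact hF.mul hG
  add_mem' := by
    intro F G (hF : ContDiff ℝ (⊤ : ℕ∞) F) (hG : ContDiff ℝ (⊤ : ℕ∞) G)
    exact hF.add hG
  algebraMap_mem' := fun r => (contDiff_const : ContDiff ℝ (⊤ : ℕ∞) fun _ : ℝ × ℝ × ℝ => r)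

instance : CoeFun SF (fun _ => ℝ × ℝ × ℝ → ℝ) := ⟨fun F => F.1⟩

theorem SF.contDiff (F : SF) : ContDiff ℝ (⊤ : ℕ∞) F := F.2

theorem SF.continuous (F : SF) : Continuous F := (SF.contDiff F).continuous

theorem SF.differentiable (F : SF) : Differentiable ℝ F :=
  (SF.contDiff F).differentiable (by simp)

theorem SF.hasFDerivAt (F : SF) (p : ℝ × ℝ × ℝ) : HasFDerivAt F (fderiv ℝ F p) p :=
  ((SF.differentiable F) p).hasFDerivAt

@[simp] theorem SF.add_app (F G : SF) (p : ℝ × ℝ × ℝ) : (F + G) p = F p + G p := rfl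
@[simp] theorem SF.sub_app (F G : SF) (p : ℝ × ℝ × ℝ) : (F - G) p = F p - G p := rfl
@[simp] theorem SF.neg_app (F : SF) (p : ℝ × ℝ × ℝ) : (-F) p = -F p := rfl
@[simp] theorem SF.mul_app (F G : SF) (p : ℝ × ℝ × ℝ) : (F * G) p = F p * G p := rfl
@[simp] theorem SF.smul_app (c : ℝ) (F : SF) (p : ℝ × ℝ × ℝ) : (c • F) p = c * F p := rfl
@[simp] theorem SF.pow_app (F : SF) (n : ℕ) (p : ℝ × ℝ × ℝ) : (F ^ n) p = F p ^ n := rfl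
@[simp] theorem SF.zero_app (p : ℝ × ℝ × ℝ) : (0 : SF) p = 0 := rfl
@[simp] theorem SF.one_app (p : ℝ × ℝ × ℝ) : (1 : SF) p = 1 := rfl
@[simp] theorem SF.algebraMap_app (c : ℝ) (p : ℝ × ℝ × ℝ) : (algebraMap ℝ SF c) p = c := rfl
@[simp] theorem SF.natCast_app (n : ℕ) (p : ℝ × ℝ × ℝ) : (n : SF) p = n := rfl
@[simp] theorem SF.ofNat_app (n : ℕ) [n.AtLeastTwo] (p : ℝ × ℝ × ℝ) :
    (OfNat.ofNat n : SF) p = OfNat.ofNat n := rfl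

theorem SF.ext' {F G : SF} (h : ∀ p, F p = G p) : F = G := Subtype.ext (funext h)

/-- The derivation of `SF` given by the constant vector field `v`. -/
def dV (v : ℝ × ℝ × ℝ) : Derivation ℝ SF SF where
  toFun F := ⟨fun p => fderiv ℝ F p v, show ContDiff ℝ (⊤ : ℕ∞) _ from
    ((SF.contDiff F).fderiv_right (m := (⊤ : ℕ∞)) (by simp)).clm_apply contDiff_const⟩
  map_add' F G := SF.ext' fun p => by
    change fderiv ℝ (F.1 + G.1) p v = fderiv ℝ F.1 p v + fderiv ℝ G.1 p v
    rw [fderiv_add ((SF.differentiable F) p) ((SF.differentiable G) p)]; rfl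
  map_smul' c F := SF.ext' fun p => by
    change fderiv ℝ (c • F.1) p v = c * fderiv ℝ F.1 p v
    rw [fderiv_const_smul ((SF.differentiable F) p)]; rfl
  map_one_eq_zero' := SF.ext' fun p => by
    change fderiv ℝ (fun _ : ℝ × ℝ × ℝ => (1 : ℝ)) p v = 0
    simp
  leibniz' F G := SF.ext' fun p => by
    change fderiv ℝ (F.1 * G.1) p v = F.1 p * fderiv ℝ G.1 p v + G.1 p * fderiv ℝ F.1 p v
    rw [fderiv_mul ((SF.differentiable F) p) ((SF.differentiable G) p)]
    simp

theorem dV_app (v : ℝ × ℝ × ℝ) (F : SF) (p : ℝ × ℝ × ℝ) : (dV v F) p = fderiv ℝ F p v := rfl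

theorem dV_comm (v w : ℝ × ℝ × ℝ) (F : SF) : dV v (dV w F) = dV w (dV v F) := by
  refine SF.ext' fun p => ?_
  have hd : DifferentiableAt ℝ (fderiv ℝ F.1) p :=
    (((SF.contDiff F).fderiv_right (m := (⊤ : ℕ∞)) (by simp)).differentiable (by simp)) p
  have key : ∀ a b : ℝ × ℝ × ℝ,
      (dV a (dV b F)) p = fderiv ℝ (fderiv ℝ F.1) p a b := by
    intro a b
    change fderiv ℝ (fun q => fderiv ℝ F.1 q b) p a = _
    rw [fderiv_clm_apply hd (differentiableAt_const b)]
    simp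
  rw [key, key]
  have hs : IsSymmSndFDerivAt ℝ F.1 p :=
    ((SF.contDiff F).contDiffAt).isSymmSndFDerivAt
      (by simp only [minSmoothness_of_isRCLikeNormedField]; exact WithTop.coe_le_coe.2 (le_top : (2 : ℕ∞) ≤ ⊤))
  exact hs.eq v w

/-- `∂ₜ`. -/
def dT : Derivation ℝ SF SF := dV (1, 0, 0)
/-- `∂₁`. -/
def d1 : Derivation ℝ SF SF := dV (0, 1, 0)
/-- `∂₂`. -/
def d2 : Derivation ℝ SF SF := dV (0, 0, 1)

theorem d1_dT (F : SF) : d1 (dT F) = dT (d1 F) := dV_comm _ _ F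
theorem d2_dT (F : SF) : d2 (dT F) = dT (d2 F) := dV_comm _ _ F
theorem d2_d1 (F : SF) : d2 (d1 F) = d1 (d2 F) := dV_comm _ _ F

/-- The coordinate `t`. -/
def cT : SF := ⟨fun p => p.1, show ContDiff ℝ (⊤ : ℕ∞) _ from contDiff_fst⟩
/-- The coordinate `x₁`. -/
def c1 : SF := ⟨fun p => p.2.1, show ContDiff ℝ (⊤ : ℕ∞) _ from contDiff_fst.comp contDiff_snd⟩
/-- The coordinate `x₂`. -/
def c2 : SF := ⟨fun p => p.2.2, show ContDiff ℝ (⊤ : ℕ∞) _ from contDiff_snd.comp contDiff_snd⟩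

@[simp] theorem cT_app (p : ℝ × ℝ × ℝ) : cT p = p.1 := rfl
@[simp] theorem c1_app (p : ℝ × ℝ × ℝ) : c1 p = p.2.1 := rfl
@[simp] theorem c2_app (p : ℝ × ℝ × ℝ) : c2 p = p.2.2 := rfl

theorem dV_cT (v : ℝ × ℝ × ℝ) : dV v cT = algebraMap ℝ SF v.1 := SF.ext' fun p => by
  change fderiv ℝ (fun p : ℝ × ℝ × ℝ => p.1) p v = v.1
  rw [fderiv_fst]; rfl
theorem dV_c1 (v : ℝ × ℝ × ℝ) : dV v c1 = algebraMap ℝ SF v.2.1 := SF.ext' fun p => by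
  change fderiv ℝ (fun p : ℝ × ℝ × ℝ => p.2.1) p v = v.2.1
  have : HasFDerivAt (fun p : ℝ × ℝ × ℝ => p.2.1)
    ((ContinuousLinearMap.fst ℝ ℝ ℝ).comp (ContinuousLinearMap.snd ℝ ℝ (ℝ × ℝ))) p :=
    hasFDerivAt_fst.comp p hasFDerivAt_snd
  rw [this.fderiv]; rfl
theorem dV_c2 (v : ℝ × ℝ × ℝ) : dV v c2 = algebraMap ℝ SF v.2.2 := SF.ext' fun p => by
  change fderiv ℝ (fun p : ℝ × ℝ × ℝ => p.2.2) p v = v.2.2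
  have : HasFDerivAt (fun p : ℝ × ℝ × ℝ => p.2.2)
    ((ContinuousLinearMap.snd ℝ ℝ ℝ).comp (ContinuousLinearMap.snd ℝ ℝ (ℝ × ℝ))) p :=
    hasFDerivAt_snd.comp p hasFDerivAt_snd
  rw [this.fderiv]; rfl

@[simp] theorem dT_cT : dT cT = 1 := by simp [dT, dV_cT]
@[simp] theorem d1_cT : d1 cT = 0 := by simp [d1, dV_cT]
@[simp] theorem d2_cT : d2 cT = 0 := by simp [d2, dV_cT]
@[simp] theorem dT_c1 : dT c1 = 0 := by simp [dT, dV_c1]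
@[simp] theorem d1_c1 : d1 c1 = 1 := by simp [d1, dV_c1]
@[simp] theorem d2_c1 : d2 c1 = 0 := by simp [d2, dV_c1]
@[simp] theorem dT_c2 : dT c2 = 0 := by simp [dT, dV_c2]
@[simp] theorem d1_c2 : d1 c2 = 0 := by simp [d1, dV_c2]
@[simp] theorem d2_c2 : d2 c2 = 1 := by simp [d2, dV_c2]

/-- The d'Alembertian on `SF`. -/
def box (F : SF) : SF := dT (dT F) - d1 (d1 F) - d2 (d2 F)

/-- The Killing field `(a - c x₂)∂₁ + (b + c x₁)∂₂`: a combination of spatial translations and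
the rotation, hence divergence free and commuting with `∂ₜ` and `□`. -/
def XF (a b c : ℝ) : Derivation ℝ SF SF :=
  (algebraMap ℝ SF a - algebraMap ℝ SF c * c2) • d1 +
    (algebraMap ℝ SF b + algebraMap ℝ SF c * c1) • d2

theorem XF_apply (a b c : ℝ) (F : SF) : XF a b c F =
    (algebraMap ℝ SF a - algebraMap ℝ SF c * c2) * d1 F +
    (algebraMap ℝ SF b + algebraMap ℝ SF c * c1) * d2 F := rfl

/-- The Lorentz boost `t∂₁ + x₁∂ₜ`. -/
def L1 : Derivation ℝ SF SF := cT • d1 + c1 • dT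
/-- The Lorentz boost `t∂₂ + x₂∂ₜ`. -/
def L2 : Derivation ℝ SF SF := cT • d2 + c2 • dT

theorem L1_apply (F : SF) : L1 F = cT * d1 F + c1 * dT F := rfl
theorem L2_apply (F : SF) : L2 F = cT * d2 F + c2 * dT F := rfl

theorem leib (D : Derivation ℝ SF SF) (F G : SF) : D (F * G) = F * D G + G * D F := by
  simp [Derivation.leibniz]

@[simp] theorem der_const (D : Derivation ℝ SF SF) (c : ℝ) : D (algebraMap ℝ SF c) = 0 :=
  D.map_algebraMap c

theorem XF_dT (a b c : ℝ) (F : SF) : XF a b c (dT F) = dT (XF a b c F) := by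
  simp only [XF_apply, map_add, map_sub, leib, der_const, dT_c1, dT_c2, d1_dT, d2_dT]
  ring

theorem XF_box (a b c : ℝ) (F : SF) : box (XF a b c F) = XF a b c (box F) := by
  simp only [XF_apply, box, map_add, map_sub, leib, der_const, dT_c1, dT_c2, d1_c1, d1_c2, d2_c1,
    d2_c2, d1_dT, d2_dT, d2_d1, mul_zero, mul_one, add_zero, zero_add, sub_zero,
    zero_sub, map_neg]
  ring

theorem L1_box (F : SF) : box (L1 F) = L1 (box F) := by
  simp only [L1_apply, box, map_add, map_sub, leib, dT_c1, d1_c1, d2_c1, dT_cT, d1_cT, d2_cT,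
    d1_dT, d2_dT, d2_d1, mul_zero, mul_one, add_zero]
  ring

theorem L2_box (F : SF) : box (L2 F) = L2 (box F) := by
  simp only [L2_apply, box, map_add, map_sub, leib, dT_c2, d1_c2, d2_c2, dT_cT, d1_cT, d2_cT,
    d1_dT, d2_dT, d2_d1, mul_zero, mul_one, add_zero]
  ring

/-- The energy density `½(w_t² + w_1² + w_2²)`. -/
def en (w : SF) : SF := (1 / 2 : ℝ) • (dT w ^ 2 + d1 w ^ 2 + d2 w ^ 2)

theorem en_app (w : SF) (p : ℝ × ℝ × ℝ) :
    en w p = (1 / 2) * ((dT w) p ^ 2 + (d1 w) p ^ 2 + (d2 w) p ^ 2) := rfl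

/-- The local energy identity, in divergence form. -/
theorem dT_en (w : SF) :
    dT (en w) = d1 (dT w * d1 w) + d2 (dT w * d2 w) + dT w * box w := by
  have h : en w = (1 / 2 : ℝ) • (dT w * dT w + d1 w * d1 w + d2 w * d2 w) := by
    simp only [en, pow_two]
  rw [h]
  simp only [box, Derivation.map_smul, map_add, leib, d1_dT, d2_dT]
  refine SF.ext' fun p => ?_
  simp only [SF.add_app, SF.mul_app, SF.smul_app, SF.sub_app]
  ring

/-! ### Functions vanishing on a set -/

/-- If `F` vanishes on an open set, so do its derivatives. -/
theorem dV_zero_of_open {F : SF} {U : Set (ℝ × ℝ × ℝ)} (hU : IsOpen U)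
    (h : ∀ p ∈ U, F p = 0) (v : ℝ × ℝ × ℝ) : ∀ p ∈ U, (dV v F) p = 0 := by
  intro p hp
  have : F.1 =ᶠ[𝓝 p] fun _ => (0 : ℝ) := by
    filter_upwards [hU.mem_nhds hp] with q hq using h q hq
  rw [dV_app, this.fderiv_eq]; simp

/-- `F` vanishes for `t > 0`. -/
def ZeroPos (F : SF) : Prop := ∀ p : ℝ × ℝ × ℝ, 0 < p.1 → F p = 0

theorem isOpen_pos : IsOpen {p : ℝ × ℝ × ℝ | 0 < p.1} :=
  isOpen_lt continuous_const continuous_fst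

theorem ZeroPos.dV {F : SF} (h : ZeroPos F) (v : ℝ × ℝ × ℝ) : ZeroPos (dV v F) :=
  fun p hp => dV_zero_of_open isOpen_pos h v p hp

theorem ZeroPos.dT {F : SF} (h : ZeroPos F) : ZeroPos (dT F) := h.dV _
theorem ZeroPos.d1 {F : SF} (h : ZeroPos F) : ZeroPos (d1 F) := h.dV _
theorem ZeroPos.d2 {F : SF} (h : ZeroPos F) : ZeroPos (d2 F) := h.dV _
theorem ZeroPos.XF {F : SF} (h : ZeroPos F) (a b c : ℝ) : ZeroPos (XF a b c F) := fun p hp => by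
  simp [XF_apply, h.d1 p hp, h.d2 p hp]
theorem ZeroPos.L1 {F : SF} (h : ZeroPos F) : ZeroPos (L1 F) := fun p hp => by
  simp [L1_apply, h.d1 p hp, h.dT p hp]
theorem ZeroPos.L2 {F : SF} (h : ZeroPos F) : ZeroPos (L2 F) := fun p hp => by
  simp [L2_apply, h.d2 p hp, h.dT p hp]

theorem tendsto_line (F : SF) (x : ℝ × ℝ) (t : ℝ) :
    Tendsto (fun s : ℝ => F (s, x)) (𝓝[>] t) (𝓝 (F (t, x))) := by
  have : Continuous fun s : ℝ => F (s, x) := (SF.continuous F).comp (by fun_prop)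
  exact (this.tendsto t).mono_left nhdsWithin_le_nhds

theorem ZeroPos.zero {F : SF} (h : ZeroPos F) (x : ℝ × ℝ) : F (0, x) = 0 := by
  refine tendsto_nhds_unique (tendsto_line F x 0) ?_
  refine tendsto_const_nhds.congr' ?_
  filter_upwards [self_mem_nhdsWithin] with s hs
  exact (h (s, x) hs).symm

/-- `F` vanishes in the exterior `{|x| > t + R, t > 0}` of a light cone. -/
def Supp (R : ℝ) (F : SF) : Prop :=
  ∀ p : ℝ × ℝ × ℝ, 0 < p.1 → (p.1 + R) ^ 2 < p.2.1 ^ 2 + p.2.2 ^ 2 → F p = 0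

theorem Supp.dV {R : ℝ} {F : SF} (h : Supp R F) (v : ℝ × ℝ × ℝ) : Supp R (dV v F) := by
  intro p hp hp'
  have ho : IsOpen {p : ℝ × ℝ × ℝ | 0 < p.1 ∧ (p.1 + R) ^ 2 < p.2.1 ^ 2 + p.2.2 ^ 2} :=
    isOpen_pos.inter (isOpen_lt
      (show Continuous fun p : ℝ × ℝ × ℝ => (p.1 + R) ^ 2 by fun_prop)
      (show Continuous fun p : ℝ × ℝ × ℝ => p.2.1 ^ 2 + p.2.2 ^ 2 by fun_prop))
  exact dV_zero_of_open ho (fun q hq => h q hq.1 hq.2) v p ⟨hp, hp'⟩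

theorem Supp.dT {R : ℝ} {F : SF} (h : Supp R F) : Supp R (dT F) := h.dV _
theorem Supp.d1 {R : ℝ} {F : SF} (h : Supp R F) : Supp R (d1 F) := h.dV _
theorem Supp.d2 {R : ℝ} {F : SF} (h : Supp R F) : Supp R (d2 F) := h.dV _
theorem Supp.add {R : ℝ} {F G : SF} (h : Supp R F) (h' : Supp R G) : Supp R (F + G) :=
  fun p h1 h2 => by simp [h p h1 h2, h' p h1 h2]
theorem Supp.sub {R : ℝ} {F G : SF} (h : Supp R F) (h' : Supp R G) : Supp R (F - G) :=
  fun p h1 h2 => by simp [h p h1 h2, h' p h1 h2]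
theorem Supp.mul_left {R : ℝ} {F : SF} (h : Supp R F) (G : SF) : Supp R (G * F) :=
  fun p h1 h2 => by simp [h p h1 h2]
theorem Supp.mul_right {R : ℝ} {F : SF} (h : Supp R F) (G : SF) : Supp R (F * G) :=
  fun p h1 h2 => by simp [h p h1 h2]
theorem Supp.XF {R : ℝ} {F : SF} (h : Supp R F) (a b c : ℝ) : Supp R (XF a b c F) := by
  rw [XF_apply]; exact (h.d1.mul_left _).add (h.d2.mul_left _)
theorem Supp.L1 {R : ℝ} {F : SF} (h : Supp R F) : Supp R (L1 F) := by
  rw [L1_apply]; exact (h.d1.mul_left _).add (h.dT.mul_left _)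
theorem Supp.L2 {R : ℝ} {F : SF} (h : Supp R F) : Supp R (L2 F) := by
  rw [L2_apply]; exact (h.d2.mul_left _).add (h.dT.mul_left _)
theorem Supp.en {R : ℝ} {F : SF} (h : Supp R F) : Supp R (en F) := fun p h1 h2 => by
  simp [en_app, h.dT p h1 h2, h.d1 p h1 h2, h.d2 p h1 h2]

/-- By continuity the vanishing persists at `t = 0`. -/
theorem Supp.eq_zero {R : ℝ} {F : SF} (h : Supp R F) {t : ℝ} (ht : 0 ≤ t) {x : ℝ × ℝ}
    (hx : (t + R) ^ 2 < x.1 ^ 2 + x.2 ^ 2) : F (t, x) = 0 := by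
  refine tendsto_nhds_unique (tendsto_line F x t) ?_
  refine tendsto_const_nhds.congr' ?_
  have h2 : ∀ᶠ s in 𝓝 t, (s + R) ^ 2 < x.1 ^ 2 + x.2 ^ 2 :=
    (show Continuous fun s : ℝ => (s + R) ^ 2 by fun_prop).tendsto t |>.eventually
      (gt_mem_nhds hx)
  filter_upwards [self_mem_nhdsWithin, nhdsWithin_le_nhds h2] with s hs hs2
  exact (h (s, x) (lt_of_le_of_lt ht hs) hs2).symm

/-- `F` vanishes at `t = 0`. -/
def Zero0 (F : SF) : Prop := ∀ x : ℝ × ℝ, F (0, x) = 0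

theorem Zero0.dx {F : SF} (h : Zero0 F) (v : ℝ × ℝ) : Zero0 (dV (0, v) F) := by
  intro x
  have h1 : HasFDerivAt (fun y : ℝ × ℝ => F (0, y))
      ((fderiv ℝ F (0, x)).comp (ContinuousLinearMap.inr ℝ ℝ (ℝ × ℝ))) x :=
    ((SF.hasFDerivAt F) (0, x)).comp x (hasFDerivAt_prodMk_right (0 : ℝ) x)
  have h2 : (fun y : ℝ × ℝ => F (0, y)) = fun _ => 0 := funext h
  rw [h2] at h1
  have h3 := h1.unique (hasFDerivAt_const (0 : ℝ) x)
  have := congrArg (fun T : ℝ × ℝ →L[ℝ] ℝ => T v) h3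
  simpa [dV_app] using this

theorem Zero0.d1 {F : SF} (h : Zero0 F) : Zero0 (d1 F) := h.dx _
theorem Zero0.d2 {F : SF} (h : Zero0 F) : Zero0 (d2 F) := h.dx _
theorem Zero0.XF {F : SF} (h : Zero0 F) (a b c : ℝ) : Zero0 (XF a b c F) := fun p => by
  simp [XF_apply, h.d1 p, h.d2 p]

/-! ### Integrals over space -/

/-- The square `[-ρ, ρ]²`. -/
abbrev KK (ρ : ℝ) : Set (ℝ × ℝ) := Metric.closedBall 0 ρ

theorem slice_cont (F : SF) (t : ℝ) : Continuous fun x : ℝ × ℝ => F (t, x) :=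
  (SF.continuous F).comp (by fun_prop)

theorem slice_int (F : SF) (t ρ : ℝ) : IntegrableOn (fun x : ℝ × ℝ => F (t, x)) (KK ρ) :=
  (slice_cont F t).continuousOn.integrableOn_compact (isCompact_closedBall _ _)

/-- `J ρ t F = ∫_{[-ρ, ρ]²} F(t, x) dx`, as a linear functional of `F`. -/
def J (ρ t : ℝ) : SF →ₗ[ℝ] ℝ where
  toFun F := ∫ x in KK ρ, F (t, x)
  map_add' F G := integral_add (slice_int F t ρ) (slice_int G t ρ)
  map_smul' c _ := integral_const_mul c _

theorem J_apply (ρ t : ℝ) (F : SF) : J ρ t F = ∫ x in KK ρ, F (t, x) := rfl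

theorem J_mono {ρ t : ℝ} {F G : SF} (h : ∀ x, F (t, x) ≤ G (t, x)) : J ρ t F ≤ J ρ t G :=
  integral_mono (slice_int F t ρ) (slice_int G t ρ) h

theorem J_congr {ρ t : ℝ} {F G : SF} (h : ∀ x, F (t, x) = G (t, x)) : J ρ t F = J ρ t G := by
  rw [J_apply, J_apply]; simp only [h]

theorem J_nonneg {ρ t : ℝ} {F : SF} (h : ∀ x, 0 ≤ F (t, x)) : 0 ≤ J ρ t F :=
  integral_nonneg h

theorem hasDerivAt_t (F : SF) (s : ℝ) (x : ℝ × ℝ) :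
    HasDerivAt (fun s => F (s, x)) ((dT F) (s, x)) s :=
  (SF.hasFDerivAt F (s, x)).comp_hasDerivAt s ((hasDerivAt_id s).prodMk (hasDerivAt_const s x))

theorem J_hasDerivAt (ρ t : ℝ) (F : SF) : HasDerivAt (fun s => J ρ s F) (J ρ t (dT F)) t := by
  have hK : IsCompact (Set.Icc (t - 1) (t + 1) ×ˢ KK ρ) :=
    isCompact_Icc.prod (isCompact_closedBall _ _)
  obtain ⟨C, hC⟩ := hK.exists_bound_of_continuousOn (SF.continuous (dT F)).continuousOn
  refine (hasDerivAt_integral_of_dominated_loc_of_deriv_le (μ := volume.restrict (KK ρ))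
    (F := fun s (x : ℝ × ℝ) => F (s, x)) (F' := fun s (x : ℝ × ℝ) => (dT F) (s, x))
    (bound := fun _ => C) (Icc_mem_nhds (by linarith : t - 1 < t) (by linarith : t < t + 1))
    (Eventually.of_forall fun s => (slice_cont F s).aestronglyMeasurable) (slice_int F t ρ)
    (slice_cont (dT F) t).aestronglyMeasurable ?_ ?_ ?_).2
  · refine (ae_restrict_iff' Metric.isClosed_closedBall.measurableSet).2
      (Eventually.of_forall fun x hx s hs => hC (s, x) ⟨hs, hx⟩)
  · exact (continuous_const.continuousOn.integrableOn_compact (isCompact_closedBall _ _))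
  · exact Eventually.of_forall fun x s _ => hasDerivAt_t F s x

theorem J_continuous (ρ : ℝ) (F : SF) : Continuous fun s => J ρ s F :=
  continuous_iff_continuousAt.2 fun t => (J_hasDerivAt ρ t F).continuousAt

/-- `F(t, ·)` vanishes outside `[-ρ, ρ]²`. -/
def Out (ρ t : ℝ) (F : SF) : Prop := ∀ x : ℝ × ℝ, x ∉ KK ρ → F (t, x) = 0

theorem Out.mul_left {ρ t : ℝ} {F : SF} (h : Out ρ t F) (G : SF) : Out ρ t (G * F) :=
  fun x hx => by simp [h x hx]
theorem Out.mul_right {ρ t : ℝ} {F : SF} (h : Out ρ t F) (G : SF) : Out ρ t (F * G) :=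
  fun x hx => by simp [h x hx]

theorem Supp.out {R ρ t : ℝ} {F : SF} (h : Supp R F) (hR : 0 ≤ R) (ht : 0 ≤ t) (hρ : t + R ≤ ρ) :
    Out ρ t F := by
  intro x hx
  apply h.eq_zero ht
  have h1 : ρ < max |x.1| |x.2| := by
    simpa [KK, Prod.norm_def, Real.norm_eq_abs, -lt_sup_iff, -sup_le_iff] using hx
  have h2 : 0 ≤ t + R := by linarith
  rcases lt_max_iff.1 h1 with h3 | h3
  · have : (t + R) ^ 2 < |x.1| ^ 2 := by gcongr; linarith
    rw [sq_abs] at this; nlinarith [sq_nonneg x.2]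
  · have : (t + R) ^ 2 < |x.2| ^ 2 := by gcongr; linarith
    rw [sq_abs] at this; nlinarith [sq_nonneg x.1]

theorem J_eq_integral {ρ t : ℝ} {F : SF} (h : Out ρ t F) : J ρ t F = ∫ x : ℝ × ℝ, F (t, x) :=
  setIntegral_eq_integral_of_forall_compl_eq_zero h

theorem Out.compact {ρ t : ℝ} {F : SF} (h : Out ρ t F) :
    HasCompactSupport fun x : ℝ × ℝ => F (t, x) :=
  HasCompactSupport.intro (isCompact_closedBall 0 ρ) h

theorem Out.integrable {ρ t : ℝ} {F : SF} (h : Out ρ t F) :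
    Integrable fun x : ℝ × ℝ => F (t, x) :=
  (slice_cont F t).integrable_of_hasCompactSupport h.compact

theorem slice_hasFDerivAt (F : SF) (t : ℝ) (x : ℝ × ℝ) :
    HasFDerivAt (fun y : ℝ × ℝ => F (t, y))
      ((fderiv ℝ F (t, x)).comp (ContinuousLinearMap.inr ℝ ℝ (ℝ × ℝ))) x :=
  (SF.hasFDerivAt F (t, x)).comp x (hasFDerivAt_prodMk_right t x)

theorem slice_fderiv (F : SF) (t : ℝ) (x v : ℝ × ℝ) :
    fderiv ℝ (fun y : ℝ × ℝ => F (t, y)) x v = (dV (0, v) F) (t, x) := by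
  rw [(slice_hasFDerivAt F t x).fderiv]; simp [dV_app]

theorem Out.dx {ρ t : ℝ} {F : SF} (h : Out ρ t F) (v : ℝ × ℝ) : Out ρ t (dV (0, v) F) := by
  intro x hx
  have : (fun y : ℝ × ℝ => F (t, y)) =ᶠ[𝓝 x] fun _ => (0 : ℝ) := by
    filter_upwards [Metric.isClosed_closedBall.isOpen_compl.mem_nhds hx] with y hy using h y hy
  rw [← slice_fderiv, this.fderiv_eq]; simp

theorem Out.d1 {ρ t : ℝ} {F : SF} (h : Out ρ t F) : Out ρ t (d1 F) := h.dx _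
theorem Out.d2 {ρ t : ℝ} {F : SF} (h : Out ρ t F) : Out ρ t (d2 F) := h.dx _

/-- The integral of a spatial derivative of a compactly supported function is zero. -/
theorem J_dx {ρ t : ℝ} {F : SF} (h : Out ρ t F) (v : ℝ × ℝ) : J ρ t (dV (0, v) F) = 0 := by
  rw [J_eq_integral (h.dx v)]
  have := integral_mul_fderiv_eq_neg_fderiv_mul_of_integrable (𝕜 := ℝ) (μ := volume)
    (f := fun _ : ℝ × ℝ => (1 : ℝ)) (g := fun x : ℝ × ℝ => F (t, x)) (v := v)
    (by simp) (by simpa [slice_fderiv] using (h.dx v).integrable)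
    (by simpa using h.integrable) (fun x _ => by fun_prop)
    (fun x _ => (slice_hasFDerivAt F t x).differentiableAt)
  simpa [slice_fderiv] using this

theorem J_d1 {ρ t : ℝ} {F : SF} (h : Out ρ t F) : J ρ t (d1 F) = 0 := J_dx h _
theorem J_d2 {ρ t : ℝ} {F : SF} (h : Out ρ t F) : J ρ t (d2 F) = 0 := J_dx h _

/-- Killing fields are divergence free. -/
theorem J_XF {ρ t : ℝ} {F : SF} (h : Out ρ t F) (a b c : ℝ) : J ρ t (XF a b c F) = 0 := by
  have : XF a b c F = d1 ((algebraMap ℝ SF a - algebraMap ℝ SF c * c2) * F) +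
      d2 ((algebraMap ℝ SF b + algebraMap ℝ SF c * c1) * F) := by
    simp only [XF_apply, leib, map_sub, map_add, der_const, d1_c2, d2_c1]
    ring
  rw [this, map_add, J_d1 (h.mul_left _), J_d2 (h.mul_left _), add_zero]

/-- Differential form of the energy identity, for spatially compactly supported waves. -/
theorem J_en_hasDerivAt {ρ t : ℝ} {w : SF} (h : Out ρ t (dT w)) :
    HasDerivAt (fun s => J ρ s (en w)) (J ρ t (dT w * box w)) t := by
  have h1 := J_hasDerivAt ρ t (en w)
  rw [dT_en, map_add, map_add, J_d1 (h.mul_right _), J_d2 (h.mul_right _), zero_add,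
    zero_add] at h1
  exact h1

theorem en_nonneg (w : SF) (p : ℝ × ℝ × ℝ) : 0 ≤ en w p := by
  rw [en_app]; positivity

/-- A nonnegative function with zero integral vanishes inside the square. -/
theorem eq_zero_of_J {ρ t : ℝ} {F : SF} (h0 : ∀ x, 0 ≤ F (t, x)) (h : J ρ t F = 0) (x : ℝ × ℝ)
    (hx : x ∈ Metric.ball (0 : ℝ × ℝ) ρ) : F (t, x) = 0 := by
  by_contra hne
  have hae : ∀ᵐ y ∂(volume.restrict (KK ρ)), F (t, y) = 0 := by
    have := (setIntegral_eq_zero_iff_of_nonneg_ae (Eventually.of_forall h0)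
      (slice_int F t ρ)).1 h
    exact this
  have hae2 : ∀ᵐ y ∂(volume.restrict (Metric.ball (0 : ℝ × ℝ) ρ)), F (t, y) = 0 :=
    ae_mono (Measure.restrict_mono Metric.ball_subset_closedBall le_rfl) hae
  have := Measure.eqOn_open_of_ae_eq (f := fun y => F (t, y)) (g := fun _ => (0 : ℝ)) hae2
    Metric.isOpen_ball (slice_cont F t).continuousOn continuousOn_const
  exact hne (this hx)

/-! ### Finite speed of propagation -/

/-- Composition of a smooth function of one variable with an element of `SF`. -/
def comp1 (φ : ℝ → ℝ) (hφ : ContDiff ℝ (⊤ : ℕ∞) φ) (G : SF) : SF :=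
  ⟨fun p => φ (G p), show ContDiff ℝ (⊤ : ℕ∞) _ from hφ.comp (SF.contDiff G)⟩

theorem dV_comp1 (φ : ℝ → ℝ) (hφ : ContDiff ℝ (⊤ : ℕ∞) φ) (G : SF) (v p : ℝ × ℝ × ℝ) :
    (dV v (comp1 φ hφ G)) p = deriv φ (G p) * (dV v G) p := by
  have h1 : HasDerivAt φ (deriv φ (G p)) (G p) :=
    ((hφ.differentiable (by simp)) (G p)).hasDerivAt
  have h2 := (h1.comp_hasFDerivAt p (SF.hasFDerivAt G p)).fderiv
  change fderiv ℝ (φ ∘ G.1) p v = _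
  rw [h2]; rfl

theorem expNegInvGlue_deriv_nonneg (q : ℝ) : 0 ≤ deriv expNegInvGlue q :=
  expNegInvGlue.monotone.deriv_nonneg

theorem expNegInvGlue_deriv_zero {q : ℝ} (hq : q < 0) : deriv expNegInvGlue q = 0 := by
  have : expNegInvGlue =ᶠ[𝓝 q] fun _ => 0 := by
    filter_upwards [gt_mem_nhds hq] with r hr using expNegInvGlue.zero_of_nonpos hr.le
  rw [this.deriv_eq]; simp

/-- The defining function `(τ - t)² - |x - x₀|²` of the light cone with vertex `(τ, x₀)`. -/
def coneQ (τ : ℝ) (x0 : ℝ × ℝ) : SF :=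
  (algebraMap ℝ SF τ - cT) * (algebraMap ℝ SF τ - cT) -
    (c1 - algebraMap ℝ SF x0.1) * (c1 - algebraMap ℝ SF x0.1) -
    (c2 - algebraMap ℝ SF x0.2) * (c2 - algebraMap ℝ SF x0.2)

/-- A smooth weight, positive precisely inside the light cone with vertex `(τ, x₀)`; it is used for
`t ≤ τ` only. -/
def coneW (τ : ℝ) (x0 : ℝ × ℝ) : SF :=
  comp1 expNegInvGlue (expNegInvGlue.contDiff) (coneQ τ x0)

theorem cone_ineq {m a b ut u1 u2 : ℝ} (hm : 0 ≤ m) (h : a ^ 2 + b ^ 2 ≤ m ^ 2) :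
    (a * u1 + b * u2) * ut ≤ m * ((1 / 2) * (ut ^ 2 + u1 ^ 2 + u2 ^ 2)) := by
  rcases hm.eq_or_lt with rfl | hm
  · have ha : a = 0 := by nlinarith [sq_nonneg a, sq_nonneg b]
    have hb : b = 0 := by nlinarith [sq_nonneg a, sq_nonneg b]
    simp [ha, hb]
  · have h1 : 0 ≤ (m * ut - (a * u1 + b * u2)) ^ 2 := sq_nonneg _
    have h2 : (a * u1 + b * u2) ^ 2 ≤ m ^ 2 * (u1 ^ 2 + u2 ^ 2) := by
      nlinarith [sq_nonneg (a * u2 - b * u1),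
        mul_le_mul_of_nonneg_right h (add_nonneg (sq_nonneg u1) (sq_nonneg u2))]
    have h3 : 0 ≤ 2 * m * (m * ((1 / 2) * (ut ^ 2 + u1 ^ 2 + u2 ^ 2)) -
        (a * u1 + b * u2) * ut) := by nlinarith
    have := nonneg_of_mul_nonneg_right h3 (by linarith)
    linarith

/-- The weighted energy identity inside a backward cone. -/
theorem dT_coneW_en (w u : SF) : dT (w * en u) =
    d1 (w * (dT u * d1 u)) + d2 (w * (dT u * d2 u)) +
      (w * (dT u * box u) + (en u * dT w - dT u * (d1 u * d1 w + d2 u * d2 w))) := by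
  rw [leib, dT_en]
  simp only [leib]
  ring

/-- The flux term of the weighted energy identity has a sign, since the energy flux through the
cone is nonnegative. -/
theorem cone_flux_nonpos (τ : ℝ) (x0 : ℝ × ℝ) (u : SF) (p : ℝ × ℝ × ℝ) (hp : p.1 ≤ τ) :
    (en u * dT (coneW τ x0) - dT u * (d1 u * d1 (coneW τ x0) + d2 u * d2 (coneW τ x0))) p ≤ 0 := by
  have e0 : (dT (coneW τ x0)) p = deriv expNegInvGlue (coneQ τ x0 p) * (-2 * (τ - p.1)) := by
    rw [dT, coneW, dV_comp1, ← dT]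
    congr 1
    simp [coneQ]; ring
  have e1 : (d1 (coneW τ x0)) p = deriv expNegInvGlue (coneQ τ x0 p) * (-2 * (p.2.1 - x0.1)) := by
    rw [d1, coneW, dV_comp1, ← d1]
    congr 1
    simp [coneQ]; ring
  have e2 : (d2 (coneW τ x0)) p = deriv expNegInvGlue (coneQ τ x0 p) * (-2 * (p.2.2 - x0.2)) := by
    rw [d2, coneW, dV_comp1, ← d2]
    congr 1
    simp [coneQ]; ring
  simp only [SF.sub_app, SF.mul_app, SF.add_app, e0, e1, e2, en_app]
  have hq : coneQ τ x0 p = (τ - p.1) ^ 2 - (p.2.1 - x0.1) ^ 2 - (p.2.2 - x0.2) ^ 2 := by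
    simp [coneQ]; ring
  rcases lt_or_ge (coneQ τ x0 p) 0 with hneg | hpos
  · simp [expNegInvGlue_deriv_zero hneg]
  · have h := cone_ineq (ut := (dT u) p) (u1 := (d1 u) p) (u2 := (d2 u) p) (sub_nonneg.2 hp)
      (show (p.2.1 - x0.1) ^ 2 + (p.2.2 - x0.2) ^ 2 ≤ (τ - p.1) ^ 2 by linarith)
    have hd := expNegInvGlue_deriv_nonneg (coneQ τ x0 p)
    nlinarith [mul_nonneg hd (sub_nonneg.2 h)]

theorem coneW_nonneg (τ : ℝ) (x0 : ℝ × ℝ) (p : ℝ × ℝ × ℝ) : 0 ≤ coneW τ x0 p :=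
  expNegInvGlue.nonneg _

theorem coneQ_app (τ : ℝ) (x0 : ℝ × ℝ) (p : ℝ × ℝ × ℝ) :
    coneQ τ x0 p = (τ - p.1) ^ 2 - (p.2.1 - x0.1) ^ 2 - (p.2.2 - x0.2) ^ 2 := by
  simp [coneQ]; ring

theorem coneW_zero {τ : ℝ} {x0 : ℝ × ℝ} {p : ℝ × ℝ × ℝ}
    (h : (τ - p.1) ^ 2 ≤ (p.2.1 - x0.1) ^ 2 + (p.2.2 - x0.2) ^ 2) : coneW τ x0 p = 0 :=
  expNegInvGlue.zero_of_nonpos (by rw [coneQ_app]; linarith)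

theorem coneW_out (τ : ℝ) (x0 : ℝ × ℝ) {t ρ : ℝ} (ht : t ≤ τ) (h1 : |x0.1| + (τ - t) ≤ ρ)
    (h2 : |x0.2| + (τ - t) ≤ ρ) : Out ρ t (coneW τ x0) := by
  intro x hx
  apply coneW_zero
  have h3 : ρ < max |x.1| |x.2| := by
    simpa [KK, Prod.norm_def, Real.norm_eq_abs, -lt_sup_iff, -sup_le_iff] using hx
  have key : ∀ a b : ℝ, |b| + (τ - t) ≤ ρ → ρ < |a| → (τ - t) ^ 2 ≤ (a - b) ^ 2 := by
    intro a b hb ha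
    have : τ - t ≤ |a - b| := by linarith [abs_sub_abs_le_abs_sub a b]
    rw [← sq_abs (a - b)]
    exact pow_le_pow_left₀ (by linarith) this 2
  rcases lt_max_iff.1 h3 with h | h
  · have := key _ _ h1 h
    change (τ - t) ^ 2 ≤ (x.1 - x0.1) ^ 2 + (x.2 - x0.2) ^ 2
    nlinarith [sq_nonneg (x.2 - x0.2)]
  · have := key _ _ h2 h
    change (τ - t) ^ 2 ≤ (x.1 - x0.1) ^ 2 + (x.2 - x0.2) ^ 2
    nlinarith [sq_nonneg (x.1 - x0.1)]

/-- If `∂ₜu □u ≤ 0` and the data are supported in `|x| ≤ R`, then `u` is supported in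
`|x| ≤ t + R`. -/
theorem finite_speed {R : ℝ} (hR : 0 ≤ R) (u : SF)
    (hb : ∀ p : ℝ × ℝ × ℝ, 0 < p.1 → (dT u) p * (box u) p ≤ 0)
    (h0 : ∀ x : ℝ × ℝ, R ^ 2 < x.1 ^ 2 + x.2 ^ 2 → u (0, x) = 0)
    (h1 : ∀ x : ℝ × ℝ, R ^ 2 < x.1 ^ 2 + x.2 ^ 2 → (dT u) (0, x) = 0) : Supp R u := by
  rintro ⟨t1, x0⟩ ht1 hx0
  simp only at ht1 hx0
  -- energy at time zero vanishes outside the support of the data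
  have hen0 : ∀ x : ℝ × ℝ, R ^ 2 < x.1 ^ 2 + x.2 ^ 2 → en u (0, x) = 0 := by
    intro x hx
    have ho : IsOpen {x : ℝ × ℝ | R ^ 2 < x.1 ^ 2 + x.2 ^ 2} :=
      isOpen_lt continuous_const (show Continuous fun x : ℝ × ℝ => x.1 ^ 2 + x.2 ^ 2 by fun_prop)
    have hd : ∀ v : ℝ × ℝ, (dV (0, v) u) (0, x) = 0 := by
      intro v
      have : (fun y : ℝ × ℝ => u (0, y)) =ᶠ[𝓝 x] fun _ => (0 : ℝ) := by
        filter_upwards [ho.mem_nhds hx] with y hy using h0 y hy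
      rw [← slice_fderiv, this.fderiv_eq]; simp
    have ha : (d1 u) (0, x) = 0 := hd _
    have hb : (d2 u) (0, x) = 0 := hd _
    simp [en_app, ha, hb, h1 x hx]
  obtain ⟨τ, hτ1, hτ2⟩ : ∃ τ, t1 < τ ∧ (τ + R) ^ 2 < x0.1 ^ 2 + x0.2 ^ 2 := by
    have hc : ∀ᶠ s in 𝓝 t1, (s + R) ^ 2 < x0.1 ^ 2 + x0.2 ^ 2 :=
      (show Continuous fun s : ℝ => (s + R) ^ 2 by fun_prop).tendsto t1 |>.eventually
        (gt_mem_nhds hx0)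
    have hc2 : ∀ᶠ s in 𝓝[>] t1, (s + R) ^ 2 < x0.1 ^ 2 + x0.2 ^ 2 := nhdsWithin_le_nhds hc
    obtain ⟨s, hs, hs2⟩ := (hc2.and self_mem_nhdsWithin).exists
    exact ⟨s, hs2, hs⟩
  set w := coneW τ x0
  set ρ := |x0.1| + |x0.2| + τ + 1 with hρ
  have hout : ∀ s, 0 ≤ s → s ≤ τ → Out ρ s w := fun s hs hs' =>
    coneW_out τ x0 hs' (by linarith [abs_nonneg x0.2]) (by linarith [abs_nonneg x0.1])
  have hderiv : ∀ s, HasDerivAt (fun s => J ρ s (w * en u)) (J ρ s (dT (w * en u))) s :=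
    fun s => J_hasDerivAt ρ s _
  have hanti : AntitoneOn (fun s => J ρ s (w * en u)) (Set.Icc 0 τ) := by
    apply antitoneOn_of_deriv_nonpos (convex_Icc _ _) (J_continuous _ _).continuousOn
      (fun s _ => (hderiv s).differentiableAt.differentiableWithinAt)
    intro s hs
    rw [interior_Icc] at hs
    rw [(hderiv s).deriv, dT_coneW_en, map_add, map_add,
      J_d1 ((hout s hs.1.le hs.2.le).mul_right _), J_d2 ((hout s hs.1.le hs.2.le).mul_right _),
      zero_add, zero_add]
    have : J ρ s (w * (dT u * box u) +
        (en u * dT w - dT u * (d1 u * d1 w + d2 u * d2 w))) ≤ J ρ s 0 := by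
      apply J_mono
      intro x
      have e1 := cone_flux_nonpos τ x0 u (s, x) hs.2.le
      have e2 := mul_nonpos_of_nonpos_of_nonneg (hb (s, x) hs.1) (coneW_nonneg τ x0 (s, x))
      rw [SF.add_app]
      simp only [SF.mul_app, SF.zero_app] at *
      linarith
    simpa using this
  have hJ0 : J ρ 0 (w * en u) = 0 := by
    have : J ρ 0 (w * en u) = J ρ 0 0 := by
      apply J_congr
      intro x
      simp only [SF.mul_app, SF.zero_app]
      rcases lt_or_ge (R ^ 2) (x.1 ^ 2 + x.2 ^ 2) with h | h
      · rw [hen0 x h, mul_zero]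
      · rw [show w (0, x) = 0 from coneW_zero ?_, zero_mul]
        simp only [sub_zero]
        by_contra hlt
        push Not at hlt
        have hτ0 : 0 < τ := ht1.trans hτ1
        -- triangle inequality, squared
        have hcs := cone_ineq (m := R) (a := x.1) (b := x.2) (ut := τ) (u1 := x0.1 - x.1)
          (u2 := x0.2 - x.2) hR h
        have h5 : (x.1 * (x0.1 - x.1) + x.2 * (x0.2 - x.2)) * τ ≤ R * τ * τ := by nlinarith
        have h6 : x.1 * (x0.1 - x.1) + x.2 * (x0.2 - x.2) ≤ R * τ :=
          le_of_mul_le_mul_right h5 hτ0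
        nlinarith
    simpa using this
  have hut : ∀ s ∈ Set.Icc 0 t1, (dT u) (s, x0) = 0 := by
    intro s hs
    have hsτ : s < τ := lt_of_le_of_lt hs.2 hτ1
    have hle : J ρ s (w * en u) ≤ 0 := by
      rw [← hJ0]
      exact hanti ⟨le_rfl, by linarith [hs.1]⟩ ⟨hs.1, hsτ.le⟩ hs.1
    have hnn : ∀ x, 0 ≤ (w * en u) (s, x) := fun x =>
      mul_nonneg (coneW_nonneg _ _ _) (en_nonneg _ _)
    have hz := eq_zero_of_J hnn (le_antisymm hle (J_nonneg hnn)) x0 (by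
      rw [mem_ball_zero_iff, Prod.norm_def, Real.norm_eq_abs, Real.norm_eq_abs]
      have := hs.1
      refine max_lt ?_ ?_ <;> linarith [abs_nonneg x0.1, abs_nonneg x0.2])
    have hw : 0 < w (s, x0) := expNegInvGlue.pos_of_pos (by
      rw [coneQ_app]; simp only [sub_self]; nlinarith)
    have hen : en u (s, x0) = 0 := (mul_eq_zero.1 hz).resolve_left hw.ne'
    rw [en_app] at hen
    nlinarith [sq_nonneg ((dT u) (s, x0)), sq_nonneg ((d1 u) (s, x0)), sq_nonneg ((d2 u) (s, x0))]
  have hconst := constant_of_has_deriv_right_zero (f := fun s => u (s, x0)) (a := 0) (b := t1)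
    ((SF.continuous u).comp (by fun_prop : Continuous fun s : ℝ => (s, x0))).continuousOn
    (fun s hs => by
      have := (hasDerivAt_t u s x0).hasDerivWithinAt (s := Set.Ici s)
      rwa [hut s ⟨hs.1, hs.2.le⟩] at this) t1 ⟨ht1.le, le_rfl⟩
  have h00 : u (0, x0) = 0 := h0 x0 (by nlinarith)
  exact hconst.trans h00

/-! ### Gagliardo–Nirenberg estimates along a Killing field -/

theorem Out.XF {ρ t : ℝ} {F : SF} (h : Out ρ t F) (a b c : ℝ) : Out ρ t (XF a b c F) :=
  fun x hx => by simp [XF_apply, h.d1 x hx, h.d2 x hx]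

theorem Out.add {ρ t : ℝ} {F G : SF} (h : Out ρ t F) (h' : Out ρ t G) : Out ρ t (F + G) :=
  fun x hx => by simp [h x hx, h' x hx]
theorem Out.sub {ρ t : ℝ} {F G : SF} (h : Out ρ t F) (h' : Out ρ t G) : Out ρ t (F - G) :=
  fun x hx => by simp [h x hx, h' x hx]

section GN
variable {ρ t M : ℝ} {a b c : ℝ}

/-- `∫ (Xφ)⁴ ≤ 9 M² ∫ (X²φ)²` when `|φ| ≤ M`. -/
theorem gn4 {φ : SF} (ho : Out ρ t φ) (hM : ∀ x, φ (t, x) ^ 2 ≤ M ^ 2) :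
    J ρ t (XF a b c φ ^ 4) ≤ 9 * M ^ 2 * J ρ t (XF a b c (XF a b c φ) ^ 2) := by
  set X := XF a b c
  have h0 : J ρ t (X (φ * (X φ * (X φ * X φ)))) = 0 := J_XF (ho.mul_right _) a b c
  have h1 : X (φ * (X φ * (X φ * X φ))) = X φ ^ 4 + (3 : ℝ) • (φ * X φ ^ 2 * X (X φ)) := by
    simp only [leib]
    refine SF.ext' fun p => ?_
    simp only [SF.add_app, SF.mul_app, SF.smul_app, SF.pow_app]
    ring
  rw [h1, map_add, map_smul, smul_eq_mul] at h0
  have h2 : J ρ t ((-3 : ℝ) • (φ * X φ ^ 2 * X (X φ))) ≤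
      J ρ t ((1 / 2 : ℝ) • X φ ^ 4 + (9 / 2 * M ^ 2 : ℝ) • X (X φ) ^ 2) := by
    apply J_mono
    intro x
    simp only [SF.add_app, SF.mul_app, SF.smul_app, SF.pow_app]
    nlinarith [sq_nonneg ((X φ) (t, x) ^ 2 + 3 * φ (t, x) * (X (X φ)) (t, x)),
      mul_le_mul_of_nonneg_right (hM x) (sq_nonneg ((X (X φ)) (t, x)))]
  simp only [map_add, map_smul, smul_eq_mul] at h2
  linarith

/-- `∫ (Xφ)² (X²φ)² ≤ 5 M² ∫ (X³φ)²` and `∫ (Xφ)⁶ ≤ 125 M⁴ ∫ (X³φ)²` when `|φ| ≤ M`. -/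
theorem gn6 {φ : SF} (ho : Out ρ t φ) (hM0 : 0 < M) (hM : ∀ x, φ (t, x) ^ 2 ≤ M ^ 2) :
    J ρ t (XF a b c φ ^ 2 * XF a b c (XF a b c φ) ^ 2) ≤
        5 * M ^ 2 * J ρ t (XF a b c (XF a b c (XF a b c φ)) ^ 2) ∧
      J ρ t (XF a b c φ ^ 6) ≤
        125 * M ^ 4 * J ρ t (XF a b c (XF a b c (XF a b c φ)) ^ 2) := by
  set X := XF a b c
  have ho1 : Out ρ t (X φ) := ho.XF a b c
  have h0 : J ρ t (X (φ * (X φ * (X φ * (X φ * (X φ * X φ)))))) = 0 :=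
    J_XF (ho.mul_right _) a b c
  have h1 : X (φ * (X φ * (X φ * (X φ * (X φ * X φ))))) =
      X φ ^ 6 + (5 : ℝ) • (φ * X φ ^ 4 * X (X φ)) := by
    simp only [leib]
    refine SF.ext' fun p => ?_
    simp only [SF.add_app, SF.mul_app, SF.smul_app, SF.pow_app]
    ring
  rw [h1, map_add, map_smul, smul_eq_mul] at h0
  have h2 : J ρ t ((-5 : ℝ) • (φ * X φ ^ 4 * X (X φ))) ≤
      J ρ t ((1 / 2 : ℝ) • X φ ^ 6 + (25 / 2 * M ^ 2 : ℝ) • (X φ ^ 2 * X (X φ) ^ 2)) := by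
    apply J_mono
    intro x
    simp only [SF.add_app, SF.mul_app, SF.smul_app, SF.pow_app]
    nlinarith [sq_nonneg ((X φ) (t, x) ^ 3 + 5 * φ (t, x) * (X φ) (t, x) * (X (X φ)) (t, x)),
      mul_le_mul_of_nonneg_right (hM x) (sq_nonneg ((X φ) (t, x) * (X (X φ)) (t, x)))]
  simp only [map_add, map_smul, smul_eq_mul] at h2
  have h0' : J ρ t (X (X φ * (X φ * (X φ * X (X φ))))) = 0 := J_XF (ho1.mul_right _) a b c
  have h1' : X (X φ * (X φ * (X φ * X (X φ)))) =
      (3 : ℝ) • (X φ ^ 2 * X (X φ) ^ 2) + X φ ^ 3 * X (X (X φ)) := by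
    simp only [leib]
    refine SF.ext' fun p => ?_
    simp only [SF.add_app, SF.mul_app, SF.smul_app, SF.pow_app]
    ring
  rw [h1', map_add, map_smul, smul_eq_mul] at h0'
  have h2' : J ρ t ((-(50 * M ^ 2) : ℝ) • (X φ ^ 3 * X (X (X φ)))) ≤
      J ρ t ((1 : ℝ) • X φ ^ 6 + (625 * M ^ 4 : ℝ) • X (X (X φ)) ^ 2) := by
    apply J_mono
    intro x
    simp only [SF.add_app, SF.mul_app, SF.smul_app, SF.pow_app]
    nlinarith [sq_nonneg ((X φ) (t, x) ^ 3 + 25 * M ^ 2 * (X (X (X φ))) (t, x))]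
  simp only [map_add, map_smul, smul_eq_mul] at h2'
  set I6 := J ρ t (X φ ^ 6)
  set Q := J ρ t (X φ ^ 2 * X (X φ) ^ 2)
  set H := J ρ t (X (X (X φ)) ^ 2)
  have hQ : M ^ 2 * (125 * Q) ≤ M ^ 2 * (625 * M ^ 2 * H) := by nlinarith
  have hQ' := le_of_mul_le_mul_left hQ (by positivity)
  constructor
  · linarith
  · have : M ^ 2 * Q ≤ M ^ 2 * (5 * M ^ 2 * H) :=
      mul_le_mul_of_nonneg_left (by linarith) (by positivity)
    nlinarith

/-- `∫ |X(ψ²φ)|² ≲ M⁴ ∫ |Xφ|² + |Xψ|²`. -/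
theorem cubic1 {φ ψ : SF} (hφ : ∀ x, φ (t, x) ^ 2 ≤ M ^ 2) (hψ : ∀ x, ψ (t, x) ^ 2 ≤ M ^ 2) :
    J ρ t (XF a b c (ψ * ψ * φ) ^ 2) ≤
      10 ^ 5 * M ^ 4 * J ρ t (XF a b c φ ^ 2 + XF a b c ψ ^ 2) := by
  set X := XF a b c
  rw [← smul_eq_mul (10 ^ 5 * M ^ 4), ← map_smul]
  apply J_mono
  intro x
  simp only [leib, SF.add_app, SF.mul_app, SF.smul_app, SF.pow_app]
  set p := φ (t, x)
  set q := ψ (t, x)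
  set p' := (X φ) (t, x)
  set q' := (X ψ) (t, x)
  have hp : p ^ 2 ≤ M ^ 2 := hφ x
  have hq : q ^ 2 ≤ M ^ 2 := hψ x
  have h1 : p ^ 2 * q ^ 2 ≤ M ^ 4 := by
    calc p ^ 2 * q ^ 2 ≤ M ^ 2 * M ^ 2 := by gcongr
      _ = M ^ 4 := by ring
  have h2 : q ^ 2 * q ^ 2 ≤ M ^ 4 := by
    calc q ^ 2 * q ^ 2 ≤ M ^ 2 * M ^ 2 := by gcongr
      _ = M ^ 4 := by ring
  have h3 := mul_le_mul_of_nonneg_right h1 (sq_nonneg q')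
  have h4 := mul_le_mul_of_nonneg_right h2 (sq_nonneg p')
  have h5 : 0 ≤ M ^ 4 * p' ^ 2 := by positivity
  have h6 : 0 ≤ M ^ 4 * q' ^ 2 := by positivity
  nlinarith [sq_nonneg (q * q * p' - 2 * p * q * q')]

/-- `∫ |X²(ψ²φ)|² ≲ M⁴ ∫ |X²φ|² + |X²ψ|²`. -/
theorem cubic2 {φ ψ : SF} (oφ : Out ρ t φ) (oψ : Out ρ t ψ)
    (hφ : ∀ x, φ (t, x) ^ 2 ≤ M ^ 2) (hψ : ∀ x, ψ (t, x) ^ 2 ≤ M ^ 2) :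
    J ρ t (XF a b c (XF a b c (ψ * ψ * φ)) ^ 2) ≤
      10 ^ 5 * M ^ 4 * J ρ t (XF a b c (XF a b c φ) ^ 2 + XF a b c (XF a b c ψ) ^ 2) := by
  have g1 := gn4 (a := a) (b := b) (c := c) oφ hφ
  have g2 := gn4 (a := a) (b := b) (c := c) oψ hψ
  set X := XF a b c
  have key : J ρ t (X (X (ψ * ψ * φ)) ^ 2) ≤ J ρ t ((100 * M ^ 2 : ℝ) • (X φ ^ 4 + X ψ ^ 4) +
      (100 * M ^ 4 : ℝ) • (X (X φ) ^ 2 + X (X ψ) ^ 2)) := by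
    apply J_mono
    intro x
    simp only [leib, map_add, SF.add_app, SF.mul_app, SF.smul_app, SF.pow_app]
    set p := φ (t, x)
    set q := ψ (t, x)
    set p' := (X φ) (t, x)
    set q' := (X ψ) (t, x)
    set p'' := (X (X φ)) (t, x)
    set q'' := (X (X ψ)) (t, x)
    have hp : p ^ 2 ≤ M ^ 2 := hφ x
    have hq : q ^ 2 ≤ M ^ 2 := hψ x
    have h1 : p ^ 2 * q ^ 2 ≤ M ^ 4 := by
      calc p ^ 2 * q ^ 2 ≤ M ^ 2 * M ^ 2 := by gcongr
        _ = M ^ 4 := by ring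
    have h2 : q ^ 2 * q ^ 2 ≤ M ^ 4 := by
      calc q ^ 2 * q ^ 2 ≤ M ^ 2 * M ^ 2 := by gcongr
        _ = M ^ 4 := by ring
    have e1 : p ^ 2 * q' ^ 4 ≤ M ^ 2 * q' ^ 4 := by gcongr
    have e2 : q ^ 2 * (q' ^ 4 + p' ^ 4) ≤ M ^ 2 * (q' ^ 4 + p' ^ 4) := by gcongr
    have e3 : (p * q * q'') ^ 2 ≤ M ^ 4 * q'' ^ 2 := by
      have := mul_le_mul_of_nonneg_right h1 (sq_nonneg q''); nlinarith
    have e4 : (q * q * p'') ^ 2 ≤ M ^ 4 * p'' ^ 2 := by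
      have := mul_le_mul_of_nonneg_right h2 (sq_nonneg p''); nlinarith
    have e5 : (q * q' * p') ^ 2 ≤ q ^ 2 * (q' ^ 4 + p' ^ 4) := by
      have : q' ^ 2 * p' ^ 2 ≤ q' ^ 4 + p' ^ 4 := by
        nlinarith [sq_nonneg (q' ^ 2 - p' ^ 2), sq_nonneg (q' ^ 2), sq_nonneg (p' ^ 2)]
      have := mul_le_mul_of_nonneg_left this (sq_nonneg q)
      nlinarith
    have h5 : 0 ≤ M ^ 4 * p'' ^ 2 := by positivity
    have h6 : 0 ≤ M ^ 4 * q'' ^ 2 := by positivity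
    have h7 : 0 ≤ M ^ 2 * p' ^ 4 := by positivity
    have h8 : 0 ≤ M ^ 2 * q' ^ 4 := by positivity
    -- the square of a sum of four terms
    have sq4 : ∀ w x y z : ℝ, (w + x + y + z) ^ 2 ≤ 4 * (w ^ 2 + x ^ 2 + y ^ 2 + z ^ 2) := by
      intro w x y z
      linarith [sq_nonneg (w - x), sq_nonneg (w - y), sq_nonneg (w - z), sq_nonneg (x - y),
        sq_nonneg (x - z), sq_nonneg (y - z)]
    have e6 := sq4 (2 * (p * q' ^ 2)) (2 * (p * q * q'')) (4 * (q * q' * p')) (q * q * p'')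
    calc _ = (2 * (p * q' ^ 2) + 2 * (p * q * q'') + 4 * (q * q' * p') + q * q * p'') ^ 2 := by
          ring
      _ ≤ _ := e6
      _ = 16 * (p ^ 2 * q' ^ 4) + 16 * (p * q * q'') ^ 2 + 64 * (q * q' * p') ^ 2 +
          4 * (q * q * p'') ^ 2 := by ring
      _ ≤ _ := by linarith
  simp only [map_add, map_smul, smul_eq_mul] at key ⊢
  have hP : 0 ≤ J ρ t (X (X φ) ^ 2) := J_nonneg fun x => by simp only [SF.pow_app]; positivity
  have hQ : 0 ≤ J ρ t (X (X ψ) ^ 2) := J_nonneg fun x => by simp only [SF.pow_app]; positivity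
  have hM2 : 0 ≤ M ^ 2 := sq_nonneg M
  have k1 := mul_le_mul_of_nonneg_left g1 hM2
  have k2 := mul_le_mul_of_nonneg_left g2 hM2
  have k3 := mul_nonneg (mul_nonneg hM2 hM2) hP
  have k4 := mul_nonneg (mul_nonneg hM2 hM2) hQ
  nlinarith

/-- Pointwise form of `cubic3`: the left side is `X³(ψ²φ)` by the Leibniz rule, with `p, q` the values
of `φ, ψ` and `p', p'', p3` and `q', q'', q3` those of their derivatives along `X`. -/
theorem cubic3_pt {M p q : ℝ} (p' q' p'' q'' p3 q3 : ℝ) (hp : p ^ 2 ≤ M ^ 2) (hq : q ^ 2 ≤ M ^ 2) :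
    (6 * (p * q' * q'') + 2 * (p * q * q3) + 6 * (q' ^ 2 * p') +
        6 * (q * (q'' * p' + q' * p'')) + q * q * p3) ^ 2 ≤ 216 * M ^ 2 * (q' ^ 2 * q'' ^ 2) + 216 * (p' ^ 6 + q' ^ 6) +
      108 * M ^ 2 * ((p' + q') ^ 2 * (p'' + q'') ^ 2 + (p' - q') ^ 2 * (p'' - q'') ^ 2) +
      24 * M ^ 4 * (p3 ^ 2 + q3 ^ 2) := by
  have h1 : p ^ 2 * q ^ 2 ≤ M ^ 4 := by
    calc p ^ 2 * q ^ 2 ≤ M ^ 2 * M ^ 2 := by gcongr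
      _ = M ^ 4 := by ring
  have h2 : q ^ 2 * q ^ 2 ≤ M ^ 4 := by
    calc q ^ 2 * q ^ 2 ≤ M ^ 2 * M ^ 2 := by gcongr
      _ = M ^ 4 := by ring
  have e1 : p ^ 2 * (q' ^ 2 * q'' ^ 2) ≤ M ^ 2 * (q' ^ 2 * q'' ^ 2) := by gcongr
  have e2 : p ^ 2 * q ^ 2 * q3 ^ 2 ≤ M ^ 4 * q3 ^ 2 := by gcongr
  have e3 : q ^ 2 * q ^ 2 * p3 ^ 2 ≤ M ^ 4 * p3 ^ 2 := by gcongr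
  have e4 : q' ^ 4 * p' ^ 2 ≤ p' ^ 6 + q' ^ 6 := by
    have hA := sq_nonneg q'
    have hB := sq_nonneg p'
    set A := q' ^ 2
    set B := p' ^ 2
    have : A ^ 2 * B ≤ B ^ 3 + A ^ 3 := by
      rcases le_total A B with h | h
      · have : A ^ 2 * B ≤ B ^ 2 * B := by gcongr
        nlinarith [pow_nonneg hA 3]
      · have : A ^ 2 * B ≤ A ^ 2 * A := by gcongr
        nlinarith [pow_nonneg hB 3]
    calc q' ^ 4 * p' ^ 2 = A ^ 2 * B := by simp only [A, B]; ring
      _ ≤ _ := this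
      _ = _ := by simp only [A, B]; ring
  have e5 : q ^ 2 * (q'' * p' + q' * p'') ^ 2 ≤ M ^ 2 * (q'' * p' + q' * p'') ^ 2 := by gcongr
  have e6 : 2 * (q'' * p' + q' * p'') ^ 2 ≤
      ((p' + q') ^ 2 * (p'' + q'') ^ 2 + (p' - q') ^ 2 * (p'' - q'') ^ 2) := by
    linarith [sq_nonneg ((p' + q') * (p'' + q'') + (p' - q') * (p'' - q''))]
  have e7 := mul_le_mul_of_nonneg_left e6 (sq_nonneg M)
  have sq5 : ∀ v w x y z : ℝ, (v + w + x + y + z) ^ 2 ≤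
      5 * (v ^ 2 + w ^ 2 + x ^ 2 + y ^ 2 + z ^ 2) := by
    intro v w x y z
    linarith [sq_nonneg (w - x), sq_nonneg (w - y), sq_nonneg (w - z), sq_nonneg (x - y),
      sq_nonneg (x - z), sq_nonneg (y - z), sq_nonneg (v - w), sq_nonneg (v - x),
      sq_nonneg (v - y), sq_nonneg (v - z)]
  have e8 := sq5 (6 * (p * q' * q'')) (2 * (p * q * q3)) (6 * (q' ^ 2 * p'))
    (6 * (q * (q'' * p' + q' * p''))) (q * q * p3)
  have h5 : 0 ≤ M ^ 4 * p3 ^ 2 := by positivity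
  have h6 : 0 ≤ M ^ 4 * q3 ^ 2 := by positivity
  calc _ ≤ _ := e8
    _ = 180 * (p ^ 2 * (q' ^ 2 * q'' ^ 2)) + 20 * (p ^ 2 * q ^ 2 * q3 ^ 2) +
        180 * (q' ^ 4 * p' ^ 2) + 180 * (q ^ 2 * (q'' * p' + q' * p'') ^ 2) +
        5 * (q ^ 2 * q ^ 2 * p3 ^ 2) := by ring
    _ ≤ _ := by
      have n1 : 0 ≤ M ^ 2 * (q' ^ 2 * q'' ^ 2) := by positivity
      have n2 : 0 ≤ p' ^ 6 + q' ^ 6 := by positivity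
      have n3 : 0 ≤ q ^ 2 * (q'' * p' + q' * p'') ^ 2 := by positivity
      linarith

/-- `∫ |X³(ψ²φ)|² ≲ M⁴ ∫ |X³φ|² + |X³ψ|²`. The mixed products `Xφ X²ψ + X²φ Xψ` are handled by
polarization, through the functions `φ ± ψ`. -/
theorem cubic3 {φ ψ : SF} (oφ : Out ρ t φ) (oψ : Out ρ t ψ) (hM : 0 < M)
    (hφ : ∀ x, φ (t, x) ^ 2 ≤ M ^ 2) (hψ : ∀ x, ψ (t, x) ^ 2 ≤ M ^ 2) :
    J ρ t (XF a b c (XF a b c (XF a b c (ψ * ψ * φ))) ^ 2) ≤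
      10 ^ 5 * M ^ 4 * J ρ t (XF a b c (XF a b c (XF a b c φ)) ^ 2 +
        XF a b c (XF a b c (XF a b c ψ)) ^ 2) := by
  obtain ⟨g1, g1'⟩ := gn6 (a := a) (b := b) (c := c) oφ hM hφ
  obtain ⟨g2, g2'⟩ := gn6 (a := a) (b := b) (c := c) oψ hM hψ
  have gs := (gn6 (a := a) (b := b) (c := c) (oφ.add oψ) (by linarith : 0 < 2 * M)
    (fun x => by
      simp only [SF.add_app]
      nlinarith [hφ x, hψ x, sq_nonneg (φ (t, x) - ψ (t, x))])).1
  have gd := (gn6 (a := a) (b := b) (c := c) (oφ.sub oψ) (by linarith : 0 < 2 * M)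
    (fun x => by
      simp only [SF.sub_app]
      nlinarith [hφ x, hψ x, sq_nonneg (φ (t, x) + ψ (t, x))])).1
  set X := XF a b c
  have hsum : J ρ t (X (X (X (φ + ψ))) ^ 2) + J ρ t (X (X (X (φ - ψ))) ^ 2) =
      2 * (J ρ t (X (X (X φ)) ^ 2) + J ρ t (X (X (X ψ)) ^ 2)) := by
    rw [← map_add, ← map_add, ← smul_eq_mul, ← map_smul]
    apply J_congr
    intro x
    simp only [map_add, map_sub, SF.add_app, SF.sub_app, SF.smul_app, SF.pow_app]
    ring
  have key : J ρ t (X (X (X (ψ * ψ * φ))) ^ 2) ≤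
      J ρ t ((216 * M ^ 2 : ℝ) • (X ψ ^ 2 * X (X ψ) ^ 2) + (216 : ℝ) • (X φ ^ 6 + X ψ ^ 6) +
      (108 * M ^ 2 : ℝ) • (X (φ + ψ) ^ 2 * X (X (φ + ψ)) ^ 2 +
        X (φ - ψ) ^ 2 * X (X (φ - ψ)) ^ 2) +
      (24 * M ^ 4 : ℝ) • (X (X (X φ)) ^ 2 + X (X (X ψ)) ^ 2)) := by
    apply J_mono
    intro x
    simp only [leib, map_add, map_sub, SF.add_app, SF.sub_app, SF.mul_app, SF.smul_app, SF.pow_app]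
    refine le_of_eq_of_le ?_ (cubic3_pt ((X φ) (t, x)) ((X ψ) (t, x)) ((X (X φ)) (t, x))
      ((X (X ψ)) (t, x)) ((X (X (X φ))) (t, x)) ((X (X (X ψ))) (t, x)) (hφ x) (hψ x))
    ring
  simp only [map_add (J ρ t), map_smul (J ρ t), smul_eq_mul] at key ⊢
  have hP : 0 ≤ J ρ t (X (X (X φ)) ^ 2) := J_nonneg fun x => by simp only [SF.pow_app]; positivity
  have hQ : 0 ≤ J ρ t (X (X (X ψ)) ^ 2) := J_nonneg fun x => by simp only [SF.pow_app]; positivity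
  set P := J ρ t (X (X (X φ)) ^ 2)
  set Q := J ρ t (X (X (X ψ)) ^ 2)
  have hM2 : 0 ≤ M ^ 2 := sq_nonneg M
  have k2 := mul_le_mul_of_nonneg_left g2 hM2
  have k3 := mul_le_mul_of_nonneg_left (add_le_add gs gd) hM2
  rw [← mul_add, hsum] at k3
  have k4 := mul_nonneg (mul_nonneg hM2 hM2) hP
  have k5 := mul_nonneg (mul_nonneg hM2 hM2) hQ
  linarith

end GN

/-! ### Slow growth of the commuted energies -/

/-- A pair of waves solving the system for `t > 0`, supported in the cone `|x| ≤ t + R`. -/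
structure Sol (R : ℝ) (u1 u2 : SF) : Prop where
  hR : 0 ≤ R
  n1 : ZeroPos (box u1 + dT u2 * dT u2 * dT u1)
  n2 : ZeroPos (box u2 + dT u1 * dT u1 * dT u2)
  s1 : Supp R u1
  s2 : Supp R u2

theorem Sol.symm {R : ℝ} {u1 u2 : SF} (h : Sol R u1 u2) : Sol R u2 u1 :=
  ⟨h.hR, h.n2, h.n1, h.s2, h.s1⟩

/-- The bootstrap assumption `(1 + t) (∂ₜu_j)² ≤ κ²` on `[0, T]`. -/
def BA (T κ : ℝ) (u1 u2 : SF) : Prop := ∀ t, 0 ≤ t → t ≤ T → ∀ x : ℝ × ℝ,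
  (1 + t) * (dT u1) (t, x) ^ 2 ≤ κ ^ 2 ∧ (1 + t) * (dT u2) (t, x) ^ 2 ≤ κ ^ 2

theorem BA.symm {T κ : ℝ} {u1 u2 : SF} (h : BA T κ u1 u2) : BA T κ u2 u1 :=
  fun t h0 h1 x => (h t h0 h1 x).symm

/-- Grönwall's inequality with rate `c / (1 + t)`. -/
theorem gron {E E' : ℝ → ℝ} {T c : ℝ} (hE : ∀ t, HasDerivAt E (E' t) t)
    (h : ∀ t, 0 < t → t < T → E' t ≤ c / (1 + t) * E t) {t : ℝ} (h0 : 0 ≤ t) (hT : t ≤ T) :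
    E t ≤ E 0 * (1 + t) ^ c := by
  have hd : ∀ s, 0 ≤ s → HasDerivAt (fun s => E s * (1 + s) ^ (-c))
      (E' s * (1 + s) ^ (-c) + E s * (-c * (1 + s) ^ (-c - 1))) s := by
    intro s hs
    have h1 : HasDerivAt (fun s : ℝ => (1 + s) ^ (-c)) (-c * (1 + s) ^ (-c - 1)) s := by
      have := ((hasDerivAt_id s).const_add 1).rpow_const (p := -c) (Or.inl (by simp; linarith))
      simpa using this
    exact (hE s).mul h1
  have hanti : AntitoneOn (fun s => E s * (1 + s) ^ (-c)) (Set.Icc 0 T) := by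
    apply antitoneOn_of_deriv_nonpos (convex_Icc _ _)
      (fun s hs => (hd s hs.1).continuousAt.continuousWithinAt)
      (fun s hs => by
        rw [interior_Icc] at hs
        exact (hd s hs.1.le).differentiableAt.differentiableWithinAt)
    intro s hs
    rw [interior_Icc] at hs
    have hp : 0 < 1 + s := by linarith [hs.1]
    rw [(hd s hs.1.le).deriv, rpow_sub hp, rpow_one]
    have h1 := mul_le_mul_of_nonneg_right (h s hs.1 hs.2) (rpow_nonneg hp.le (-c))
    have h2 : E s * (-c * ((1 + s) ^ (-c) / (1 + s))) = - (c / (1 + s) * E s * (1 + s) ^ (-c)) := by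
      ring
    rw [h2]; linarith
  have h3 := hanti ⟨le_rfl, h0.trans hT⟩ ⟨h0, hT⟩ h0
  have hp : 0 < 1 + t := by linarith
  simp only [add_zero, one_rpow, mul_one] at h3
  rw [rpow_neg hp.le, ← div_eq_mul_inv, div_le_iff₀ (rpow_pos_of_pos hp c)] at h3
  exact h3

theorem J_dT_le_en (ρ t : ℝ) (w : SF) : J ρ t (dT w ^ 2) ≤ 2 * J ρ t (en w) := by
  rw [← smul_eq_mul, ← map_smul]
  apply J_mono
  intro x
  simp only [SF.smul_app, SF.pow_app, en_app]
  nlinarith [sq_nonneg ((d1 w) (t, x)), sq_nonneg ((d2 w) (t, x))]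

theorem J_en_nonneg (ρ t : ℝ) (w : SF) : 0 ≤ J ρ t (en w) := J_nonneg fun _ => en_nonneg _ _

/-- The work `∫ ∂ₜw □w` of the source, by Cauchy–Schwarz and the inequality of arithmetic and
geometric means, for a source of size `m` relative to the energy. -/
theorem J_work (ρ t : ℝ) (w : SF) {m C E : ℝ} (hm : 0 < m) (hb : J ρ t (box w ^ 2) ≤ C * m ^ 2 * E) :
    J ρ t (dT w * box w) ≤ m * J ρ t (en w) + C / 2 * m * E := by
  have h1 : J ρ t ((2 * m) • (dT w * box w)) ≤ J ρ t (m ^ 2 • dT w ^ 2 + (1 : ℝ) • box w ^ 2) := by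
    apply J_mono
    intro x
    simp only [SF.smul_app, SF.pow_app, SF.add_app, SF.mul_app]
    nlinarith [sq_nonneg (m * (dT w) (t, x) - (box w) (t, x))]
  simp only [map_add, map_smul, smul_eq_mul] at h1
  have h2 := mul_le_mul_of_nonneg_left (J_dT_le_en ρ t w) (sq_nonneg m)
  have h3 : m * (2 * J ρ t (dT w * box w)) ≤ m * (2 * (m * J ρ t (en w) + C / 2 * m * E)) := by
    nlinarith
  have := le_of_mul_le_mul_left h3 hm
  linarith

/-- Growth of the energy of a pair `w₁, w₂`, when the sources are controlled by the energy of
`w₁, w₂` and by that of another pair `v₁, v₂` whose energy does not increase. -/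
theorem pair_growth {R T κ C ρ : ℝ} (hR : 0 ≤ R) (hρ : T + R ≤ ρ) (hκ : 0 < κ)
    {w1 w2 v1 v2 : SF} (sw1 : Supp R w1) (sw2 : Supp R w2) (sv1 : Supp R v1) (sv2 : Supp R v2)
    (hv1 : ∀ t, 0 < t → t < T → J ρ t (dT v1 * box v1) ≤ 0)
    (hv2 : ∀ t, 0 < t → t < T → J ρ t (dT v2 * box v2) ≤ 0)
    (hw1 : ∀ t, 0 < t → t < T → J ρ t (box w1 ^ 2) ≤
      C * (κ ^ 2 / (1 + t)) ^ 2 * J ρ t (en w1 + en w2 + en v1 + en v2))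
    (hw2 : ∀ t, 0 < t → t < T → J ρ t (box w2 ^ 2) ≤
      C * (κ ^ 2 / (1 + t)) ^ 2 * J ρ t (en w1 + en w2 + en v1 + en v2))
    (hC : (1 + C) * κ ^ 2 ≤ 1 / 16) {t : ℝ} (h0 : 0 ≤ t) (hT : t ≤ T) :
    J ρ t (en w1 + en w2 + en v1 + en v2) ≤
      J ρ 0 (en w1 + en w2 + en v1 + en v2) * (1 + t) ^ (1 / 16 : ℝ) := by
  have hder : ∀ s, HasDerivAt (fun s => J ρ s (en w1 + en w2 + en v1 + en v2))
      (J ρ s (dT (en w1 + en w2 + en v1 + en v2))) s := fun s => J_hasDerivAt ρ s _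
  refine gron hder ?_ h0 hT
  intro s hs hsT
  have hp : 0 < 1 + s := by linarith
  have hm : 0 < κ ^ 2 / (1 + s) := by positivity
  have hid : ∀ w : SF, Supp R w → J ρ s (dT (en w)) = J ρ s (dT w * box w) := by
    intro w hw
    have := (J_hasDerivAt ρ s (en w)).unique
      (J_en_hasDerivAt (hw.dT.out hR hs.le (by linarith)))
    exact this
  have k1 := J_work ρ s w1 hm (hw1 s hs hsT)
  have k2 := J_work ρ s w2 hm (hw2 s hs hsT)
  have k3 := hv1 s hs hsT
  have k4 := hv2 s hs hsT
  have n1 := J_en_nonneg ρ s v1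
  have n2 := J_en_nonneg ρ s v2
  have n3 := J_en_nonneg ρ s w1
  have n4 := J_en_nonneg ρ s w2
  have hE : J ρ s (en w1 + en w2 + en v1 + en v2) =
    J ρ s (en w1) + J ρ s (en w2) + J ρ s (en v1) + J ρ s (en v2) := by simp only [map_add]
  have e1 : J ρ s (dT (en w1 + en w2 + en v1 + en v2)) = J ρ s (dT w1 * box w1) +
      J ρ s (dT w2 * box w2) + J ρ s (dT v1 * box v1) + J ρ s (dT v2 * box v2) := by
    simp only [map_add]; rw [hid _ sw1, hid _ sw2, hid _ sv1, hid _ sv2]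
  rw [e1]
  set E := J ρ s (en w1 + en w2 + en v1 + en v2)
  set m := κ ^ 2 / (1 + s) with hmdef
  have hE0 : 0 ≤ E := by rw [hE]; linarith
  have h1 : m * J ρ s (en w1) + m * J ρ s (en w2) ≤ m * E := by
    rw [← mul_add]; exact mul_le_mul_of_nonneg_left (by linarith) hm.le
  have h2 : (1 + C) * m * E ≤ 1 / 16 / (1 + s) * E := by
    apply mul_le_mul_of_nonneg_right _ hE0
    rw [hmdef, ← mul_div_assoc]
    gcongr
  linarith

theorem BA.sq_le {T κ : ℝ} {u1 u2 : SF} (h : BA T κ u1 u2) {t : ℝ} (h0 : 0 ≤ t) (hT : t ≤ T)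
    (x : ℝ × ℝ) : (dT u1) (t, x) ^ 2 ≤ (√(κ ^ 2 / (1 + t))) ^ 2 := by
  have hp : 0 < 1 + t := by linarith
  rw [Real.sq_sqrt (by positivity), le_div_iff₀ hp]
  linarith [(h t h0 hT x).1]

/-- The nonlinearity is damping: `∂ₜu₁ □u₁ = -(∂ₜu₁)² (∂ₜu₂)²`. -/
theorem J_base {R ρ t : ℝ} {u1 u2 : SF} (h : Sol R u1 u2) (ht : 0 < t) :
    J ρ t (dT u1 * box u1) ≤ 0 := by
  have : J ρ t (dT u1 * box u1) ≤ J ρ t 0 := by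
    apply J_mono
    intro x
    have := h.n1 (t, x) ht
    simp only [SF.add_app, SF.mul_app, SF.zero_app] at *
    have h2 : (box u1) (t, x) = -((dT u2) (t, x) * (dT u2) (t, x) * (dT u1) (t, x)) := by linarith
    rw [h2]
    nlinarith [sq_nonneg ((dT u2) (t, x) * (dT u1) (t, x))]
  simpa using this

/-- The energy itself does not increase. -/
theorem base_growth {R T ρ : ℝ} {u1 u2 : SF} (h : Sol R u1 u2) (hρ : T + R ≤ ρ) {t : ℝ}
    (h0 : 0 ≤ t) (hT : t ≤ T) : J ρ t (en u1) ≤ J ρ 0 (en u1) := by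
  have hanti : AntitoneOn (fun s => J ρ s (en u1)) (Set.Icc 0 T) := by
    apply antitoneOn_of_deriv_nonpos (convex_Icc _ _) (J_continuous _ _).continuousOn
      (fun s _ => (J_hasDerivAt ρ s _).differentiableAt.differentiableWithinAt)
    intro s hs
    rw [interior_Icc] at hs
    rw [(J_en_hasDerivAt (h.s1.dT.out h.hR hs.1.le (by linarith [hs.2]))).deriv]
    exact J_base h hs.1
  exact hanti ⟨le_rfl, h0.trans hT⟩ ⟨h0, hT⟩ h0

/-- An operator built from Killing fields, together with the properties used in the energy
estimate. -/
structure GoodOp (D : SF → SF) : Prop where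
  dT : ∀ F, dT (D F) = D (dT F)
  box : ∀ F, box (D F) = D (box F)
  add : ∀ F G, D (F + G) = D F + D G
  zp : ∀ F, ZeroPos F → ZeroPos (D F)
  supp : ∀ R F, Supp R F → Supp R (D F)
  cubic : ∀ ρ t M φ ψ, Out ρ t φ → Out ρ t ψ → 0 < M → (∀ x, φ (t, x) ^ 2 ≤ M ^ 2) →
    (∀ x, ψ (t, x) ^ 2 ≤ M ^ 2) →
    J ρ t (D (ψ * ψ * φ) ^ 2) ≤ 10 ^ 5 * M ^ 4 * J ρ t (D φ ^ 2 + D ψ ^ 2)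

theorem goodOp1 (a b c : ℝ) : GoodOp fun F => XF a b c F where
  dT F := (XF_dT a b c F).symm
  box F := XF_box a b c F
  add F G := map_add _ F G
  zp _ h := h.XF a b c
  supp _ _ h := h.XF a b c
  cubic _ _ _ _ _ _ _ _ h1 h2 := cubic1 h1 h2

theorem goodOp2 (a b c : ℝ) : GoodOp fun F => XF a b c (XF a b c F) where
  dT F := by simp only [XF_dT]
  box F := by simp only [XF_box]
  add F G := by simp only [map_add]
  zp _ h := (h.XF a b c).XF a b c
  supp _ _ h := (h.XF a b c).XF a b c
  cubic _ _ _ _ _ o1 o2 _ h1 h2 := cubic2 o1 o2 h1 h2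

theorem goodOp3 (a b c : ℝ) : GoodOp fun F => XF a b c (XF a b c (XF a b c F)) where
  dT F := by simp only [XF_dT]
  box F := by simp only [XF_box]
  add F G := by simp only [map_add]
  zp _ h := ((h.XF a b c).XF a b c).XF a b c
  supp _ _ h := ((h.XF a b c).XF a b c).XF a b c
  cubic _ _ _ _ _ o1 o2 h0 h1 h2 := cubic3 o1 o2 h0 h1 h2

/-- Under the bootstrap assumption the commuted source is `O(κ²/(1 + t))` relative to the commuted
energy; this is `GoodOp.cubic` with `φ = ∂ₜu₁`, `ψ = ∂ₜu₂`. -/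
theorem GoodOp.source {D : SF → SF} (hD : GoodOp D) {R T κ ρ : ℝ} {u1 u2 : SF} (h : Sol R u1 u2)
    (hκ : 0 < κ) (hB : BA T κ u1 u2) (hρ : T + R ≤ ρ) {t : ℝ} (h0 : 0 < t) (hT : t < T) :
    J ρ t (DampedWave.box (D u1) ^ 2) ≤
      (2 * 10 ^ 5) * (κ ^ 2 / (1 + t)) ^ 2 * J ρ t (en (D u1) + en (D u2)) := by
  have hp : 0 < 1 + t := by linarith
  have e : J ρ t (DampedWave.box (D u1) ^ 2) =
      J ρ t (D (DampedWave.dT u2 * DampedWave.dT u2 * DampedWave.dT u1) ^ 2) := by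
    apply J_congr
    intro x
    have := hD.zp _ h.n1 (t, x) h0
    rw [hD.add, ← hD.box, SF.add_app] at this
    simp only [SF.pow_app]
    rw [eq_neg_of_add_eq_zero_left this]; ring
  rw [e]
  have hm : 0 < κ ^ 2 / (1 + t) := by positivity
  refine (hD.cubic ρ t (√(κ ^ 2 / (1 + t))) _ _ (h.s1.dT.out h.hR h0.le (by linarith))
    (h.s2.dT.out h.hR h0.le (by linarith)) (Real.sqrt_pos.2 hm)
    (fun x => hB.sq_le h0.le hT.le x) (fun x => hB.symm.sq_le h0.le hT.le x)).trans ?_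
  have h4 : √(κ ^ 2 / (1 + t)) ^ 4 = (κ ^ 2 / (1 + t)) ^ 2 := by
    rw [show (4 : ℕ) = 2 * 2 by norm_num, pow_mul, Real.sq_sqrt hm.le]
  rw [h4, ← hD.dT, ← hD.dT, map_add, map_add]
  have k1 := J_dT_le_en ρ t (D u1)
  have k2 := J_dT_le_en ρ t (D u2)
  have := mul_le_mul_of_nonneg_left (add_le_add k1 k2)
    (by positivity : 0 ≤ 10 ^ 5 * (κ ^ 2 / (1 + t)) ^ 2)
  linarith

theorem en_zero : en 0 = 0 := SF.ext' fun p => by simp [en_app]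

theorem supp_zero (R : ℝ) : Supp R 0 := fun _ _ _ => rfl

/-- The energy commuted with Killing fields grows at most like `(1 + t)^{1/16}`. -/
theorem killing_growth {D : SF → SF} (hD : GoodOp D) {R T κ ρ : ℝ} {u1 u2 : SF} (h : Sol R u1 u2)
    (hκ : 0 < κ) (hκ2 : κ ^ 2 ≤ 1 / 10 ^ 7) (hB : BA T κ u1 u2) (hρ : T + R ≤ ρ) {t : ℝ}
    (h0 : 0 ≤ t) (hT : t ≤ T) :
    J ρ t (en (D u1) + en (D u2)) ≤
      J ρ 0 (en (D u1) + en (D u2)) * (1 + t) ^ (1 / 16 : ℝ) := by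
  have := pair_growth (C := 2 * 10 ^ 5) (v1 := 0) (v2 := 0) h.hR hρ hκ
    (hD.supp _ _ h.s1) (hD.supp _ _ h.s2)
    (supp_zero R) (supp_zero R) (fun t _ _ => by simp) (fun t _ _ => by simp)
    (fun t h1 h2 => by
      rw [en_zero, add_zero, add_zero]; exact hD.source h hκ hB hρ h1 h2)
    (fun t h1 h2 => by
      rw [en_zero, add_zero, add_zero, add_comm (en (D u1))]
      exact hD.source h.symm hκ hB.symm hρ h1 h2)
    (by norm_num; linarith) h0 hT
  rwa [en_zero, add_zero, add_zero] at this

/-- The algebra behind the boost estimates: here `p = ∂ₜu_1`, `q = ∂ₜu_2`, and `a₁ - b₁`, `a₂ - b₂`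
stand for the boosts of `p`, `q`. -/
theorem boost_pt {M p q a1 a2 b1 b2 : ℝ} (hp : p ^ 2 ≤ M ^ 2) (hq : q ^ 2 ≤ M ^ 2) :
    (q * q * (a1 - b1) + p * (q * (a2 - b2) + q * (a2 - b2))) ^ 2 ≤
      16 * M ^ 4 * (a1 ^ 2 + b1 ^ 2 + a2 ^ 2 + b2 ^ 2) := by
  have h1 : p ^ 2 * q ^ 2 ≤ M ^ 4 := by
    calc p ^ 2 * q ^ 2 ≤ M ^ 2 * M ^ 2 := by gcongr
      _ = M ^ 4 := by ring
  have h2 : q ^ 2 * q ^ 2 ≤ M ^ 4 := by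
    calc q ^ 2 * q ^ 2 ≤ M ^ 2 * M ^ 2 := by gcongr
      _ = M ^ 4 := by ring
  have e1 : (a1 - b1) ^ 2 ≤ 2 * (a1 ^ 2 + b1 ^ 2) := by linarith [sq_nonneg (a1 + b1)]
  have e2 : (a2 - b2) ^ 2 ≤ 2 * (a2 ^ 2 + b2 ^ 2) := by linarith [sq_nonneg (a2 + b2)]
  have k1 : q ^ 2 * q ^ 2 * (a1 - b1) ^ 2 ≤ M ^ 4 * (2 * (a1 ^ 2 + b1 ^ 2)) := by gcongr
  have k2 : p ^ 2 * q ^ 2 * (a2 - b2) ^ 2 ≤ M ^ 4 * (2 * (a2 ^ 2 + b2 ^ 2)) := by gcongr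
  have n1 : 0 ≤ M ^ 4 * (a1 ^ 2 + b1 ^ 2) := by positivity
  calc _ ≤ 2 * (q ^ 2 * q ^ 2 * (a1 - b1) ^ 2) + 8 * (p ^ 2 * q ^ 2 * (a2 - b2) ^ 2) := by
        linarith [sq_nonneg (q * q * (a1 - b1) - 2 * p * q * (a2 - b2))]
    _ ≤ _ := by linarith

theorem dT_L1 (F : SF) : dT (L1 F) = L1 (dT F) + d1 F := by
  simp only [L1_apply, map_add, leib, dT_cT, dT_c1, d1_dT]; ring
theorem dT_L2 (F : SF) : dT (L2 F) = L2 (dT F) + d2 F := by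
  simp only [L2_apply, map_add, leib, dT_cT, dT_c2, d2_dT]; ring

/-- The source commuted with a boost `L`; `d` is the commutator `[∂ₜ, L]`, a spatial derivative, whose
contribution is absorbed by the energies of `u₁`, `u₂` themselves. -/
theorem boost_source {L d : Derivation ℝ SF SF} (hbox : ∀ F, box (L F) = L (box F))
    (hdT : ∀ F, dT (L F) = L (dT F) + d F) (hz : ∀ F, ZeroPos F → ZeroPos (L F))
    (hd : ∀ F p, (d F) p ^ 2 ≤ 2 * en F p)
    {R T κ ρ : ℝ} {u1 u2 : SF} (h : Sol R u1 u2)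
    (hB : BA T κ u1 u2) {t : ℝ} (h0 : 0 < t) (hT : t < T) :
    J ρ t (box (L u1) ^ 2) ≤
      32 * (κ ^ 2 / (1 + t)) ^ 2 * J ρ t (en (L u1) + en (L u2) + en u1 + en u2) := by
  have hp : 0 < 1 + t := by linarith
  have h4 : √(κ ^ 2 / (1 + t)) ^ 4 = (κ ^ 2 / (1 + t)) ^ 2 := by
    rw [show (4 : ℕ) = 2 * 2 by norm_num, pow_mul, Real.sq_sqrt (by positivity)]
  rw [← smul_eq_mul (32 * (κ ^ 2 / (1 + t)) ^ 2), ← map_smul]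
  apply J_mono
  intro x
  have := hz _ h.n1 (t, x) h0
  rw [map_add, ← hbox, SF.add_app] at this
  have hL : ∀ F : SF, L (dT F) = dT (L F) - d F := fun F => by rw [hdT]; ring
  simp only [SF.pow_app, SF.smul_app, SF.add_app]
  rw [eq_neg_of_add_eq_zero_left this, neg_sq]
  simp only [leib, hL, SF.add_app, SF.mul_app, SF.sub_app]
  refine (boost_pt (hB.sq_le h0.le hT.le x) (hB.symm.sq_le h0.le hT.le x)).trans ?_
  rw [h4]
  have e : ∀ F : SF, (dT F) (t, x) ^ 2 ≤ 2 * en F (t, x) := fun F => by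
    rw [en_app]; nlinarith [sq_nonneg ((d1 F) (t, x)), sq_nonneg ((d2 F) (t, x))]
  have hs : (dT (L u1)) (t, x) ^ 2 + (d u1) (t, x) ^ 2 + (dT (L u2)) (t, x) ^ 2 +
      (d u2) (t, x) ^ 2 ≤ 2 * (en (L u1) (t, x) + en (L u2) (t, x) + en u1 (t, x) +
      en u2 (t, x)) := by
    linarith [e (L u1), e (L u2), hd u1 (t, x), hd u2 (t, x)]
  have := mul_le_mul_of_nonneg_left hs (by positivity : 0 ≤ 16 * (κ ^ 2 / (1 + t)) ^ 2)
  linarith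

/-- The energy commuted with a boost `L` grows at most like `(1 + t)^{1/16}`; `d` is `[∂ₜ, L]`. -/
theorem boost_growth {L d : Derivation ℝ SF SF} (hbox : ∀ F, box (L F) = L (box F))
    (hdT : ∀ F, dT (L F) = L (dT F) + d F) (hz : ∀ F, ZeroPos F → ZeroPos (L F))
    (hs : ∀ R F, Supp R F → Supp R (L F)) (hd : ∀ F p, (d F) p ^ 2 ≤ 2 * en F p)
    {R T κ ρ : ℝ} {u1 u2 : SF} (h : Sol R u1 u2) (hκ : 0 < κ) (hκ2 : κ ^ 2 ≤ 1 / 10 ^ 7)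
    (hB : BA T κ u1 u2) (hρ : T + R ≤ ρ) {t : ℝ} (h0 : 0 ≤ t) (hT : t ≤ T) :
    J ρ t (en (L u1) + en (L u2) + en u1 + en u2) ≤
      J ρ 0 (en (L u1) + en (L u2) + en u1 + en u2) * (1 + t) ^ (1 / 16 : ℝ) := by
  refine pair_growth (C := 32) h.hR hρ hκ (hs _ _ h.s1) (hs _ _ h.s2) h.s1 h.s2
    (fun t h1 _ => J_base h h1) (fun t h1 _ => J_base h.symm h1)
    (fun t h1 h2 => boost_source hbox hdT hz hd h hB h1 h2)
    (fun t h1 h2 => ?_) (by norm_num; linarith) h0 hT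
  have := boost_source (ρ := ρ) hbox hdT hz hd h.symm hB.symm h1 h2
  rwa [show en (L u2) + en (L u1) + en u2 + en u1 = en (L u1) + en (L u2) + en u1 + en u2 by
    ring] at this

theorem boost1_growth {R T κ ρ : ℝ} {u1 u2 : SF} (h : Sol R u1 u2) (hκ : 0 < κ)
    (hκ2 : κ ^ 2 ≤ 1 / 10 ^ 7) (hB : BA T κ u1 u2) (hρ : T + R ≤ ρ) {t : ℝ} (h0 : 0 ≤ t)
    (hT : t ≤ T) :
    J ρ t (en (L1 u1) + en (L1 u2) + en u1 + en u2) ≤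
      J ρ 0 (en (L1 u1) + en (L1 u2) + en u1 + en u2) * (1 + t) ^ (1 / 16 : ℝ) :=
  boost_growth L1_box dT_L1 (fun _ h => h.L1) (fun _ _ h => h.L1)
    (fun F p => by rw [en_app]; nlinarith [sq_nonneg ((dT F) p), sq_nonneg ((d2 F) p)])
    h hκ hκ2 hB hρ h0 hT

theorem boost2_growth {R T κ ρ : ℝ} {u1 u2 : SF} (h : Sol R u1 u2) (hκ : 0 < κ)
    (hκ2 : κ ^ 2 ≤ 1 / 10 ^ 7) (hB : BA T κ u1 u2) (hρ : T + R ≤ ρ) {t : ℝ} (h0 : 0 ≤ t)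
    (hT : t ≤ T) :
    J ρ t (en (L2 u1) + en (L2 u2) + en u1 + en u2) ≤
      J ρ 0 (en (L2 u1) + en (L2 u2) + en u1 + en u2) * (1 + t) ^ (1 / 16 : ℝ) :=
  boost_growth L2_box dT_L2 (fun _ h => h.L2) (fun _ _ h => h.L2)
    (fun F p => by rw [en_app]; nlinarith [sq_nonneg ((dT F) p), sq_nonneg ((d1 F) p)])
    h hκ hκ2 hB hρ h0 hT

/-! ### Energies of the data, and the resulting energy bounds -/

/-- A solution pair with Cauchy data `(ε F_j, ε G_j)` at `t = 0`. Only the values of `F_j`, `G_j`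
at `t = 0` matter. -/
structure Data (R ε : ℝ) (F1 F2 G1 G2 u1 u2 : SF) : Prop where
  sol : Sol R u1 u2
  i1 : Zero0 (u1 - ε • F1)
  i2 : Zero0 (u2 - ε • F2)
  j1 : Zero0 (dT u1 - ε • G1)
  j2 : Zero0 (dT u2 - ε • G2)

theorem Data.symm {R ε : ℝ} {F1 F2 G1 G2 u1 u2 : SF} (h : Data R ε F1 F2 G1 G2 u1 u2) :
    Data R ε F2 F1 G2 G1 u2 u1 := ⟨h.sol.symm, h.i2, h.i1, h.j2, h.j1⟩

/-- The initial energies do not depend on the size of the square of integration. -/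
theorem J_zero_indep {R ρ : ℝ} {w : SF} (hR : 0 ≤ R) (h : Supp R w) (hρ : R ≤ ρ) :
    J ρ 0 w = J R 0 w := by
  rw [J_eq_integral (h.out hR le_rfl (by linarith)), J_eq_integral (h.out hR le_rfl (by linarith))]

/-- Operators acting on the data through spatial derivatives only. -/
structure SpaceOp (D : SF → SF) : Prop where
  good : GoodOp D
  sub : ∀ F G, D (F - G) = D F - D G
  smul : ∀ (c : ℝ) F, D (c • F) = c • D F
  z0 : ∀ F, Zero0 F → Zero0 (D F)

theorem spaceOp1 (a b c : ℝ) : SpaceOp fun F => XF a b c F :=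
  ⟨goodOp1 a b c, fun _ _ => map_sub _ _ _, fun _ _ => Derivation.map_smul _ _ _,
    fun _ h => h.XF a b c⟩
theorem spaceOp2 (a b c : ℝ) : SpaceOp fun F => XF a b c (XF a b c F) :=
  ⟨goodOp2 a b c, fun _ _ => by simp only [map_sub], fun _ _ => by simp only [Derivation.map_smul],
    fun _ h => (h.XF a b c).XF a b c⟩
theorem spaceOp3 (a b c : ℝ) : SpaceOp fun F => XF a b c (XF a b c (XF a b c F)) :=
  ⟨goodOp3 a b c, fun _ _ => by simp only [map_sub], fun _ _ => by simp only [Derivation.map_smul],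
    fun _ h => ((h.XF a b c).XF a b c).XF a b c⟩

/-- The energy density of data `(F, G)`. -/
def en0 (F G : SF) : SF := (1 / 2 : ℝ) • (G ^ 2 + d1 F ^ 2 + d2 F ^ 2)

theorem en_init {ε : ℝ} {F G w : SF} (h1 : Zero0 (w - ε • F)) (h2 : Zero0 (dT w - ε • G))
    (x : ℝ × ℝ) : en w (0, x) = (ε ^ 2 • en0 F G) (0, x) := by
  have e1 := h1.d1 x
  have e2 := h1.d2 x
  have e3 := h2 x
  simp only [map_sub, Derivation.map_smul, SF.sub_app, SF.smul_app, sub_eq_zero] at e1 e2 e3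
  simp only [en_app, en0, SF.smul_app, SF.add_app, SF.pow_app, e1, e2, e3]
  ring

theorem space_init {D : SF → SF} (hD : SpaceOp D) {R ε : ℝ} {F1 F2 G1 G2 u1 u2 : SF}
    (h : Data R ε F1 F2 G1 G2 u1 u2) {ρ : ℝ} (hρ : R ≤ ρ) :
    J ρ 0 (en (D u1)) = ε ^ 2 * J R 0 (en0 (D F1) (D G1)) := by
  rw [J_zero_indep h.sol.hR (hD.good.supp _ _ h.sol.s1).en hρ, ← smul_eq_mul, ← map_smul]
  apply J_congr
  apply en_init
  · have := hD.z0 _ h.i1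
    rwa [hD.sub, hD.smul] at this
  · have := hD.z0 _ h.j1
    rwa [hD.sub, hD.smul, ← hD.good.dT] at this

/-- Uniform energy bounds for the Killing derivatives of the solution. -/
theorem space_bound {D : SF → SF} (hD : SpaceOp D) (R : ℝ) (F1 F2 G1 G2 : SF) :
    ∃ C, 0 ≤ C ∧ ∀ ε κ T u1 u2, Data R ε F1 F2 G1 G2 u1 u2 → 0 < κ → κ ^ 2 ≤ 1 / 10 ^ 7 →
      BA T κ u1 u2 → ∀ t, 0 ≤ t → t ≤ T →
      J (t + R) t (en (D u1)) ≤ C * ε ^ 2 * (1 + t) ^ (1 / 16 : ℝ) ∧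
      J (t + R) t (en (D u2)) ≤ C * ε ^ 2 * (1 + t) ^ (1 / 16 : ℝ) := by
  have hn : ∀ F G : SF, 0 ≤ J R 0 (en0 F G) := fun F G => J_nonneg fun x => by
    simp only [en0, SF.smul_app, SF.add_app, SF.pow_app]; positivity
  refine ⟨J R 0 (en0 (D F1) (D G1)) + J R 0 (en0 (D F2) (D G2)), add_nonneg (hn _ _) (hn _ _), ?_⟩
  intro ε κ T u1 u2 h hκ hκ2 hB t h0 hT
  have hB' : BA t κ u1 u2 := fun s h1 h2 x => hB s h1 (h2.trans hT) x
  have key := killing_growth hD.good h.sol hκ hκ2 hB' (le_refl (t + R)) h0 le_rfl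
  rw [map_add, map_add, space_init hD h (by linarith), space_init hD h.symm (by linarith)] at key
  have n1 := J_en_nonneg (t + R) t (D u1)
  have n2 := J_en_nonneg (t + R) t (D u2)
  constructor <;> nlinarith

/-- The part of the energy of the initial boost not involving `□u`. -/
theorem boost_init {ε : ℝ} {L d : Derivation ℝ SF SF} {c : SF} (hL : ∀ F, L F = cT * d F + c * dT F)
    (hd : ∀ F, Zero0 F → Zero0 (d F)) (hdL : ∀ F, dT (L F) = L (dT F) + d F)
    (F Ga Gb : SF) (R : ℝ) (hε : 0 < ε) (hε1 : ε ≤ 1) {u v : SF} (hu : Zero0 (u - ε • F))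
    (hut : Zero0 (dT u - ε • Ga)) (hvt : Zero0 (dT v - ε • Gb))
    (hn : ZeroPos (box u + dT v * dT v * dT u)) :
    J R 0 (en (L u)) ≤ ε ^ 2 * J R 0 (en0 (c * Ga) (c * (d1 (d1 F) + d2 (d2 F)) + d F) +
      ((c * (d1 (d1 F) + d2 (d2 F)) + d F) ^ 2 + (c * Gb * Gb * Ga) ^ 2)) := by
  rw [← smul_eq_mul, ← map_smul]
  apply J_mono
  intro x
  have z : Zero0 (L u - ε • (c * Ga)) := fun x => by
    have := hut x
    simp only [SF.sub_app, SF.smul_app, sub_eq_zero, hL, SF.add_app, SF.mul_app, cT_app] at this ⊢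
    rw [this]; ring
  have e1 := z.d1 x
  have e2 := z.d2 x
  have e3 := hut x
  have e3' := hvt x
  have e4 := hu.d1.d1 x
  have e5 := hu.d2.d2 x
  have e6 := hd _ hu x
  have e7 := hn.zero x
  have e8 := hd _ hut x
  simp only [map_sub, Derivation.map_smul, SF.sub_app, SF.smul_app, sub_eq_zero] at e1 e2 e3 e3' e4 e5 e6 e8
  simp only [box, SF.add_app, SF.sub_app, SF.mul_app, e3, e3', e4, e5] at e7
  rw [en_app, e1, e2, hdL, SF.add_app, hL (dT u)]
  simp only [SF.smul_app, SF.add_app, SF.mul_app, SF.pow_app, cT_app, en0, e6]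
  have e9 : (dT (dT u)) (0, x) = ε * (d1 (d1 F)) (0, x) + ε * (d2 (d2 F)) (0, x) -
      ε * Gb (0, x) * (ε * Gb (0, x)) * (ε * Ga (0, x)) := by linarith
  rw [e9]
  have hc : ε ^ 4 ≤ 1 := pow_le_one₀ hε.le hε1
  set A := c (0, x) * ((d1 (d1 F)) (0, x) + (d2 (d2 F)) (0, x)) + (d F) (0, x)
  set B := c (0, x) * Gb (0, x) * Gb (0, x) * Ga (0, x)
  have h1 : (0 : ℝ) * (d (dT u)) (0, x) + c (0, x) * (ε * (d1 (d1 F)) (0, x) + ε * (d2 (d2 F)) (0, x) -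
      ε * Gb (0, x) * (ε * Gb (0, x)) * (ε * Ga (0, x))) + ε * (d F) (0, x) = ε * (A - ε ^ 2 * B) := by
    simp only [A, B]; ring
  rw [h1]
  have h2 : (A - ε ^ 2 * B) ^ 2 ≤ 2 * A ^ 2 + 2 * B ^ 2 := by
    nlinarith [sq_nonneg (A + ε ^ 2 * B), mul_le_mul_of_nonneg_right hc (sq_nonneg B)]
  have h3 := mul_le_mul_of_nonneg_left h2 (sq_nonneg ε)
  have h4 := mul_nonneg (sq_nonneg ε) (sq_nonneg A)
  clear_value A B
  generalize (d1 (c * Ga)) (0, x) = q1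
  generalize (d2 (c * Ga)) (0, x) = q2
  linear_combination (1 / 2 : ℝ) * h3 + (1 / 2 : ℝ) * h4

/-- Energy bounds, relative to the size `ε` of the data, for the boosts `L = t d + c ∂ₜ`. -/
theorem boost_bound (R : ℝ) (F1 F2 G1 G2 : SF) {L d : Derivation ℝ SF SF} {c : SF}
    (hL : ∀ F, L F = cT * d F + c * dT F)
    (hd : ∀ F, Zero0 F → Zero0 (d F)) (hdL : ∀ F, dT (L F) = L (dT F) + d F)
    (hs : ∀ F, Supp R F → Supp R (L F))
    (hg : ∀ T κ ρ u1 u2, Sol R u1 u2 → 0 < κ → κ ^ 2 ≤ 1 / 10 ^ 7 → BA T κ u1 u2 → T + R ≤ ρ →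
      ∀ t, 0 ≤ t → t ≤ T → J ρ t (en (L u1) + en (L u2) + en u1 + en u2) ≤
      J ρ 0 (en (L u1) + en (L u2) + en u1 + en u2) * (1 + t) ^ (1 / 16 : ℝ)) :
    ∃ C, 0 ≤ C ∧ ∀ ε κ T u1 u2, 0 < ε → ε ≤ 1 → Data R ε F1 F2 G1 G2 u1 u2 → 0 < κ →
      κ ^ 2 ≤ 1 / 10 ^ 7 → BA T κ u1 u2 → ∀ t, 0 ≤ t → t ≤ T →
      (J (t + R) t (en u1) ≤ C * ε ^ 2 * (1 + t) ^ (1 / 16 : ℝ) ∧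
      J (t + R) t (en u2) ≤ C * ε ^ 2 * (1 + t) ^ (1 / 16 : ℝ)) ∧
      (J (t + R) t (en (L u1)) ≤ C * ε ^ 2 * (1 + t) ^ (1 / 16 : ℝ) ∧
      J (t + R) t (en (L u2)) ≤ C * ε ^ 2 * (1 + t) ^ (1 / 16 : ℝ)) := by
  have hn : ∀ F G : SF, 0 ≤ J R 0 (en0 F G) := fun F G => J_nonneg fun x => by
    simp only [en0, SF.smul_app, SF.add_app, SF.pow_app]; positivity
  have hn' : ∀ F Ga Gb : SF, 0 ≤ J R 0 (en0 (c * Ga) (c * (d1 (d1 F) + d2 (d2 F)) + d F) +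
      ((c * (d1 (d1 F) + d2 (d2 F)) + d F) ^ 2 + (c * Gb * Gb * Ga) ^ 2)) :=
    fun F Ga Gb => J_nonneg fun x => by
      simp only [en0, SF.smul_app, SF.add_app, SF.pow_app]; positivity
  refine ⟨J R 0 (en0 F1 G1) + J R 0 (en0 F2 G2) + (_ + _), add_nonneg (add_nonneg (hn _ _) (hn _ _))
    (add_nonneg (hn' F1 G1 G2) (hn' F2 G2 G1)), ?_⟩
  intro ε κ T u1 u2 hε hε1 h hκ hκ2 hB t h0 hT
  have hB' : BA t κ u1 u2 := fun s h1 h2 x => hB s h1 (h2.trans hT) x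
  have key := hg t κ (t + R) u1 u2 h.sol hκ hκ2 hB' le_rfl t h0 le_rfl
  have hb : ∀ {F1 F2 G1 G2 u1 u2 : SF}, Data R ε F1 F2 G1 G2 u1 u2 →
      J (t + R) 0 (en u1) = ε ^ 2 * J R 0 (en0 F1 G1) := by
    intro F1 F2 G1 G2 u1 u2 h
    rw [J_zero_indep h.sol.hR h.sol.s1.en (by linarith), ← smul_eq_mul, ← map_smul]
    exact J_congr fun x => en_init h.i1 h.j1 x
  rw [map_add, map_add, map_add, map_add, map_add, map_add, hb h, hb h.symm,
    J_zero_indep h.sol.hR (hs _ h.sol.s1).en (by linarith),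
    J_zero_indep h.sol.hR (hs _ h.sol.s2).en (by linarith)] at key
  have b1 := boost_init hL hd hdL F1 G1 G2 R hε hε1 h.i1 h.j1 h.j2 h.sol.n1
  have b2 := boost_init hL hd hdL F2 G2 G1 R hε hε1 h.i2 h.j2 h.j1 h.sol.n2
  have m1 := J_en_nonneg (t + R) t u1
  have m2 := J_en_nonneg (t + R) t u2
  have m3 := J_en_nonneg (t + R) t (L u1)
  have m4 := J_en_nonneg (t + R) t (L u2)
  have hp : (0 : ℝ) ≤ (1 + t) ^ (1 / 16 : ℝ) := by positivity
  generalize (1 + t) ^ (1 / 16 : ℝ) = P at *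
  have key2 := mul_le_mul_of_nonneg_right (add_le_add b1 b2) hp
  refine ⟨⟨?_, ?_⟩, ?_, ?_⟩ <;> nlinarith only [key, key2, m1, m2, m3, m4]

/-- The energies controlled in the argument, at time `t`. -/
structure EB (R t E : ℝ) (u : SF) : Prop where
  e0 : J (t + R) t (en u) ≤ E
  e1 : J (t + R) t (en (d1 u)) ≤ E
  e2 : J (t + R) t (en (d2 u)) ≤ E
  e12 : J (t + R) t (en (d1 (d2 u))) ≤ E
  o1 : J (t + R) t (en (XF 0 0 1 u)) ≤ E
  o2 : J (t + R) t (en (XF 0 0 1 (XF 0 0 1 u))) ≤ E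
  o3 : J (t + R) t (en (XF 0 0 1 (XF 0 0 1 (XF 0 0 1 u)))) ≤ E
  l1 : J (t + R) t (en (L1 u)) ≤ E
  l2 : J (t + R) t (en (L2 u)) ≤ E

theorem XF_100 (F : SF) : XF 1 0 0 F = d1 F := by simp [XF_apply]
theorem XF_010 (F : SF) : XF 0 1 0 F = d2 F := by simp [XF_apply]
theorem XF_110 (F : SF) : XF 1 1 0 F = d1 F + d2 F := by simp [XF_apply]

/-- The mixed derivative `∂₁∂₂` is recovered by polarization from `(∂₁ + ∂₂)²`, `∂₁²` and `∂₂²`, each of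
which is the square of a single Killing field. -/
theorem en_d12_le (u : SF) (p : ℝ × ℝ × ℝ) : en (d1 (d2 u)) p ≤
    (en (XF 1 1 0 (XF 1 1 0 u)) + en (XF 1 0 0 (XF 1 0 0 u)) + en (XF 0 1 0 (XF 0 1 0 u))) p := by
  simp only [XF_100, XF_010, XF_110, SF.add_app, en_app, map_add, d2_d1]
  have : ∀ a b c : ℝ, c ^ 2 ≤ (a + c + (c + b)) ^ 2 + a ^ 2 + b ^ 2 := fun a b c => by
    nlinarith [sq_nonneg (a + c + (c + b) - a - b), sq_nonneg (a + c + (c + b) + a),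
      sq_nonneg (a + c + (c + b) + b), sq_nonneg (a - b)]
  have i1 := this ((dT (d1 (d1 u))) p) ((dT (d2 (d2 u))) p) ((dT (d1 (d2 u))) p)
  have i2 := this ((d1 (d1 (d1 u))) p) ((d1 (d2 (d2 u))) p) ((d1 (d1 (d2 u))) p)
  have i3 := this ((d1 (d1 (d2 u))) p) ((d2 (d2 (d2 u))) p) ((d1 (d2 (d2 u))) p)
  linarith

/-- All energies used in the argument are `O(ε² (1 + t)^{1/16})` under the bootstrap assumption. -/
theorem energy_bounds (R : ℝ) (F1 F2 G1 G2 : SF) :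
    ∃ C, 0 < C ∧ ∀ ε κ T u1 u2, 0 < ε → ε ≤ 1 → Data R ε F1 F2 G1 G2 u1 u2 → 0 < κ →
      κ ^ 2 ≤ 1 / 10 ^ 7 → BA T κ u1 u2 → ∀ t, 0 ≤ t → t ≤ T →
      EB R t (C * ε ^ 2 * (1 + t) ^ (1 / 16 : ℝ)) u1 ∧
      EB R t (C * ε ^ 2 * (1 + t) ^ (1 / 16 : ℝ)) u2 := by
  obtain ⟨Ca, ca, ha⟩ := space_bound (spaceOp1 1 0 0) R F1 F2 G1 G2
  obtain ⟨Cb, cb, hb⟩ := space_bound (spaceOp1 0 1 0) R F1 F2 G1 G2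
  obtain ⟨Cc, cc, hc⟩ := space_bound (spaceOp2 1 0 0) R F1 F2 G1 G2
  obtain ⟨Cd, cd, hd⟩ := space_bound (spaceOp2 0 1 0) R F1 F2 G1 G2
  obtain ⟨Ce, ce, he⟩ := space_bound (spaceOp2 1 1 0) R F1 F2 G1 G2
  obtain ⟨Cf, cf, hf⟩ := space_bound (spaceOp1 0 0 1) R F1 F2 G1 G2
  obtain ⟨Cg, cg, hg⟩ := space_bound (spaceOp2 0 0 1) R F1 F2 G1 G2
  obtain ⟨Ch, ch, hh⟩ := space_bound (spaceOp3 0 0 1) R F1 F2 G1 G2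
  obtain ⟨Ci, ci, hi⟩ := boost_bound R F1 F2 G1 G2 L1_apply (fun _ h => h.d1) dT_L1
    (fun _ h => h.L1) (fun T κ ρ u1 u2 h1 h2 h3 h4 h5 t h6 h7 => boost1_growth h1 h2 h3 h4 h5 h6 h7)
  obtain ⟨Cj, cj, hj⟩ := boost_bound R F1 F2 G1 G2 L2_apply (fun _ h => h.d2) dT_L2
    (fun _ h => h.L2) (fun T κ ρ u1 u2 h1 h2 h3 h4 h5 t h6 h7 => boost2_growth h1 h2 h3 h4 h5 h6 h7)
  refine ⟨Ca + Cb + Cc + Cd + Ce + Cf + Cg + Ch + Ci + Cj + 1, by positivity, ?_⟩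
  intro ε κ T u1 u2 hε hε1 h hκ hκ2 hB t h0 hT
  have ha := ha ε κ T u1 u2 h hκ hκ2 hB t h0 hT
  have hb := hb ε κ T u1 u2 h hκ hκ2 hB t h0 hT
  have hc := hc ε κ T u1 u2 h hκ hκ2 hB t h0 hT
  have hd := hd ε κ T u1 u2 h hκ hκ2 hB t h0 hT
  have he := he ε κ T u1 u2 h hκ hκ2 hB t h0 hT
  have hf := hf ε κ T u1 u2 h hκ hκ2 hB t h0 hT
  have hg := hg ε κ T u1 u2 h hκ hκ2 hB t h0 hT
  have hh := hh ε κ T u1 u2 h hκ hκ2 hB t h0 hT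
  have hi := hi ε κ T u1 u2 hε hε1 h hκ hκ2 hB t h0 hT
  have hj := hj ε κ T u1 u2 hε hε1 h hκ hκ2 hB t h0 hT
  have k : ∀ u, J (t + R) t (en (d1 (d2 u))) ≤ J (t + R) t (en (XF 1 1 0 (XF 1 1 0 u))) +
      J (t + R) t (en (XF 1 0 0 (XF 1 0 0 u))) + J (t + R) t (en (XF 0 1 0 (XF 0 1 0 u))) := by
    intro u
    rw [← map_add, ← map_add]
    exact J_mono fun x => en_d12_le u _
  have k1 := k u1
  have k2 := k u2
  simp only [XF_100, XF_010] at ha hb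
  have hP : (0 : ℝ) ≤ ε ^ 2 * (1 + t) ^ (1 / 16 : ℝ) := by positivity
  simp only [mul_assoc] at *
  generalize ε ^ 2 * (1 + t) ^ (1 / 16 : ℝ) = P at *
  have qa := mul_nonneg ca hP
  have qb := mul_nonneg cb hP
  have qc := mul_nonneg cc hP
  have qd := mul_nonneg cd hP
  have qe := mul_nonneg ce hP
  have qf := mul_nonneg cf hP
  have qg := mul_nonneg cg hP
  have qh := mul_nonneg ch hP
  have qi := mul_nonneg ci hP
  have qj := mul_nonneg cj hP
  have e : (Ca + Cb + Cc + Cd + Ce + Cf + Cg + Ch + Ci + Cj + 1) * P = Ca * P + Cb * P + Cc * P +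
    Cd * P + Ce * P + Cf * P + Cg * P + Ch * P + Ci * P + Cj * P + P := by ring
  rw [e]
  constructor
  · constructor <;> linarith [ha.1, hb.1, hc.1, hd.1, he.1, hf.1, hg.1, hh.1, hi.1.1, hi.2.1, hj.2.1]
  · constructor <;> linarith [ha.2, hb.2, hc.2, hd.2, he.2, hf.2, hg.2, hh.2, hi.1.2, hi.2.2, hj.2.2]

/-! ### Pointwise decay in the interior of the light cone -/

theorem le_integral_of_deriv {f f' g : ℝ → ℝ} (hf : ∀ y, HasDerivAt f (f' y) y)
    (hc : Continuous f') (hg : Integrable g) (h0 : ∀ y, 0 ≤ g y) (hfg : ∀ y, f' y ≤ g y) {a x : ℝ}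
    (hax : a ≤ x) (ha : f a = 0) : f x ≤ ∫ y, g y := by
  have h1 := intervalIntegral.integral_eq_sub_of_hasDerivAt (fun y _ => hf y)
    (hc.intervalIntegrable a x)
  have h2 : ∫ y in a..x, f' y ≤ ∫ y in a..x, g y :=
    intervalIntegral.integral_mono_on hax (hc.intervalIntegrable a x) (hg.intervalIntegrable)
      (fun y _ => hfg y)
  have h3 : ∫ y in a..x, g y ≤ ∫ y, g y := by
    rw [intervalIntegral.integral_of_le hax]
    exact setIntegral_le_integral hg (ae_of_all _ h0)
  linarith

theorem hasDerivAt_1 (F : SF) (t x y : ℝ) :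
    HasDerivAt (fun s => F (t, s, y)) ((d1 F) (t, x, y)) x :=
  (SF.hasFDerivAt F (t, x, y)).comp_hasDerivAt x
    ((hasDerivAt_const x t).prodMk ((hasDerivAt_id x).prodMk (hasDerivAt_const x y)))

theorem hasDerivAt_2 (F : SF) (t x y : ℝ) :
    HasDerivAt (fun s => F (t, x, s)) ((d2 F) (t, x, y)) y :=
  (SF.hasFDerivAt F (t, x, y)).comp_hasDerivAt y
    ((hasDerivAt_const y t).prodMk ((hasDerivAt_const y x).prodMk (hasDerivAt_id y)))

theorem Out.left {ρ t : ℝ} {F : SF} (h : Out ρ t F) {x y : ℝ} (hx : ρ < |x|) : F (t, x, y) = 0 :=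
  h (x, y) (by
    simp only [mem_closedBall_zero_iff, Prod.norm_def, not_le, Real.norm_eq_abs]
    exact lt_of_lt_of_le hx (le_max_left _ _))

theorem Out.right {ρ t : ℝ} {F : SF} (h : Out ρ t F) {x y : ℝ} (hx : ρ < |y|) : F (t, x, y) = 0 :=
  h (x, y) (by
    simp only [mem_closedBall_zero_iff, Prod.norm_def, not_le, Real.norm_eq_abs]
    exact lt_of_lt_of_le hx (le_max_right _ _))

/-- `sup h ≤ ∫ |∂₁∂₂h|` for compactly supported `h` in the plane. -/
theorem sup_le_J {ρ t : ℝ} {h G : SF} (ho : Out ρ t h) (hG : Out ρ t G) (h0 : ∀ x, 0 ≤ G (t, x))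
    (hle : ∀ x, (d1 (d2 h)) (t, x) ≤ G (t, x)) (x : ℝ × ℝ) : h (t, x) ≤ J ρ t G := by
  have far : ∀ z : ℝ, ∃ a ≤ z, ρ < |a| := fun z => by
    refine ⟨-(|z| + |ρ| + 1), by linarith [neg_abs_le z, abs_nonneg ρ], ?_⟩
    rw [abs_neg, abs_of_nonneg (by positivity)]
    linarith [le_abs_self ρ, abs_nonneg z]
  rw [J_eq_integral hG]
  have hi : Integrable (fun x : ℝ × ℝ => G (t, x)) (volume.prod volume) := hG.integrable
  have hswap : ∫ x : ℝ × ℝ, G (t, x) = ∫ b, ∫ a, G (t, a, b) := by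
    change ∫ x : ℝ × ℝ, G (t, x) ∂(volume.prod volume) = _
    rw [integral_prod_symm _ hi]
  rw [hswap]
  obtain ⟨a, ha, ha'⟩ := far x.2
  refine le_integral_of_deriv (f := fun s => h (t, x.1, s)) (fun y => hasDerivAt_2 h t x.1 y)
    ((SF.continuous (d2 h)).comp (by fun_prop)) hi.integral_prod_right
    (fun y => integral_nonneg fun z => h0 (z, y)) ?_ ha (ho.right ha')
  intro y
  obtain ⟨b, hb, hb'⟩ := far x.1
  have hcs : Integrable fun z => G (t, z, y) := by
    refine Continuous.integrable_of_hasCompactSupport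
      ((SF.continuous G).comp (by fun_prop)) (HasCompactSupport.intro (isCompact_Icc (a := -ρ) (b := ρ)) ?_)
    intro z hz
    exact hG.left (by by_contra hc; exact hz (abs_le.1 (not_lt.1 hc)))
  exact le_integral_of_deriv (f := fun s => (d2 h) (t, s, y)) (fun z => hasDerivAt_1 (d2 h) t z y)
    ((SF.continuous (d1 (d2 h))).comp (by fun_prop)) hcs (fun z => h0 (z, y))
    (fun z => hle (z, y)) hb (ho.d2.left hb')

/-- The Gagliardo–Nirenberg–Sobolev inequality `‖h‖₂ ≤ C ‖∇h‖₁` in the plane. -/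
theorem gns : ∃ C : ℝ, 0 ≤ C ∧ ∀ ρ t (h G : SF), Out ρ t h → Out ρ t G →
    (∀ x, |(d1 h) (t, x)| + |(d2 h) (t, x)| ≤ G (t, x)) → J ρ t (h ^ 2) ≤ C * J ρ t G ^ 2 := by
  refine ⟨lintegralPowLePowLIntegralFDerivConst (volume : Measure (ℝ × ℝ)) 2, NNReal.coe_nonneg _, ?_⟩
  intro ρ t h G ho hG hle
  have hp : Real.HolderConjugate (Module.finrank ℝ (ℝ × ℝ)) 2 := by
    have : Module.finrank ℝ (ℝ × ℝ) = 2 := by simp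
    rw [this]; norm_num
    exact Real.HolderConjugate.two_two
  have hsm : ContDiff ℝ 1 fun x : ℝ × ℝ => h (t, x) :=
    ((SF.contDiff h).of_le (by exact_mod_cast le_top)).comp (contDiff_const.prodMk contDiff_id)
  have key := lintegral_pow_le_pow_lintegral_fderiv (volume : Measure (ℝ × ℝ)) hsm ho.compact hp
  have hG0 : ∀ x, 0 ≤ G (t, x) := fun x => le_trans (by positivity) (hle x)
  have h1 : ∫⁻ x : ℝ × ℝ, ‖h (t, x)‖ₑ ^ (2 : ℝ) = ENNReal.ofReal (J ρ t (h ^ 2)) := by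
    have ho2 : Out ρ t (h ^ 2) := by rw [pow_two]; exact ho.mul_left _
    rw [J_eq_integral ho2, ofReal_integral_eq_lintegral_ofReal ho2.integrable
      (ae_of_all _ fun x => by simp only [SF.pow_app]; positivity)]
    congr 1; ext x
    rw [SF.pow_app, ← sq_abs, ENNReal.ofReal_pow (abs_nonneg _), ← Real.enorm_eq_ofReal_abs]
    norm_cast
  have h2 : ∫⁻ x : ℝ × ℝ, ‖fderiv ℝ (fun x : ℝ × ℝ => h (t, x)) x‖ₑ ≤ ENNReal.ofReal (J ρ t G) := by
    rw [J_eq_integral hG, ofReal_integral_eq_lintegral_ofReal hG.integrable (ae_of_all _ hG0)]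
    refine lintegral_mono fun x => ?_
    rw [← ofReal_norm]
    refine ENNReal.ofReal_le_ofReal (le_trans ?_ (hle x))
    refine ContinuousLinearMap.opNorm_le_bound _ (by positivity) fun v => ?_
    have e : v = v.1 • ((1 : ℝ), (0 : ℝ)) + v.2 • ((0 : ℝ), (1 : ℝ)) := by ext <;> simp
    have : fderiv ℝ (fun x : ℝ × ℝ => h (t, x)) x v =
        v.1 * (d1 h) (t, x) + v.2 * (d2 h) (t, x) := by
      conv_lhs => rw [e]
      rw [map_add, map_smul, map_smul, slice_fderiv, slice_fderiv]; rfl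
    rw [this, Real.norm_eq_abs]
    have n1 : |v.1| ≤ ‖v‖ := by rw [← Real.norm_eq_abs]; exact norm_fst_le v
    have n2 : |v.2| ≤ ‖v‖ := by rw [← Real.norm_eq_abs]; exact norm_snd_le v
    calc _ ≤ |v.1| * |(d1 h) (t, x)| + |v.2| * |(d2 h) (t, x)| := by
          rw [← abs_mul, ← abs_mul]; exact abs_add_le _ _
      _ ≤ ‖v‖ * |(d1 h) (t, x)| + ‖v‖ * |(d2 h) (t, x)| := by gcongr
      _ = _ := by ring
  have hJ : 0 ≤ J ρ t G := J_nonneg hG0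
  rw [h1] at key
  have key2 := key.trans (mul_le_mul_right (ENNReal.rpow_le_rpow h2 (by norm_num : (0 : ℝ) ≤ 2)) _)
  have e3 : (lintegralPowLePowLIntegralFDerivConst (volume : Measure (ℝ × ℝ)) 2 : ENNReal) *
      ENNReal.ofReal (J ρ t G) ^ (2 : ℝ) = ENNReal.ofReal
      (lintegralPowLePowLIntegralFDerivConst (volume : Measure (ℝ × ℝ)) 2 * J ρ t G ^ 2) := by
    rw [ENNReal.ofReal_mul (NNReal.coe_nonneg _), ENNReal.ofReal_coe_nnreal, ENNReal.ofReal_pow hJ]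
    norm_cast
  rw [e3] at key2
  exact (ENNReal.ofReal_le_ofReal_iff (by positivity)).1 key2

/-- Optimization over `l` turns a family of arithmetic–geometric bounds into Cauchy–Schwarz. -/
theorem sq_le_of_amgm {X a b : ℝ} (hX : 0 ≤ X) (ha : 0 ≤ a) (hb : 0 ≤ b)
    (h : ∀ l : ℝ, 0 < l → X ≤ (1 / 2) * (l * a + l⁻¹ * b)) : X ^ 2 ≤ a * b := by
  have hq : ∀ l : ℝ, 0 ≤ a * (l * l) + (-2 * X) * l + b := fun l => by
    rcases le_or_gt l 0 with hl | hl
    · nlinarith [mul_nonneg ha (mul_self_nonneg l), mul_nonneg hX (neg_nonneg.2 hl)]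
    · have := mul_le_mul_of_nonneg_left (h l hl) hl.le
      have e : l * ((1 / 2) * (l * a + l⁻¹ * b)) = (1 / 2) * (l * l * a + b) := by
        field_simp
      rw [e] at this
      linarith
  have := discrim_le_zero hq
  rw [discrim] at this
  nlinarith

theorem der_pow (D : Derivation ℝ SF SF) (ψ : SF) (m : ℕ) :
    D (ψ ^ (m + 1)) = ((m + 1 : ℕ) : SF) * (ψ ^ m * D ψ) := by
  rw [Derivation.leibniz_pow]; simp

theorem Out.pow {ρ t : ℝ} {F : SF} (h : Out ρ t F) {m : ℕ} (hm : m ≠ 0) : Out ρ t (F ^ m) :=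
  fun x hx => by simp [h x hx, hm]

theorem Out.smul {ρ t : ℝ} {F : SF} (h : Out ρ t F) (c : ℝ) : Out ρ t (c • F) :=
  fun x hx => by simp [h x hx]

theorem abs_pow_le (m : ℕ) {l : ℝ} (hl : 0 < l) (p a b : ℝ) :
    |p ^ m * a| + |p ^ m * b| ≤ (1 / 2) * (l * p ^ (2 * m) + l⁻¹ * (2 * (a ^ 2 + b ^ 2))) := by
  rw [abs_mul, abs_mul, ← mul_add, pow_mul', ← sq_abs (p ^ m), ← sq_abs a, ← sq_abs b]
  generalize |p ^ m| = q
  generalize |a| = a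
  generalize |b| = b
  have h1 : 0 ≤ l⁻¹ * (l * q - (a + b)) ^ 2 := by positivity
  have h2 : 0 ≤ l⁻¹ * (a - b) ^ 2 := by positivity
  have e : l⁻¹ * (l * q - (a + b)) ^ 2 = l * q ^ 2 - 2 * q * (a + b) + l⁻¹ * (a + b) ^ 2 := by
    field_simp; ring
  rw [e] at h1
  linarith [show l⁻¹ * (2 * (a ^ 2 + b ^ 2)) = l⁻¹ * (a + b) ^ 2 + l⁻¹ * (a - b) ^ 2 by ring]

/-- `gns` applied to `ψ^{m+1}`, raising the exponent of integrability by two. -/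
theorem pow_step : ∃ C : ℝ, 0 < C ∧ ∀ ρ t (ψ : SF) (m : ℕ), m ≠ 0 → Out ρ t ψ →
    J ρ t (ψ ^ (2 * (m + 1))) ≤
      C * (m + 1) ^ 2 * (J ρ t (ψ ^ (2 * m)) * J ρ t (d1 ψ ^ 2 + d2 ψ ^ 2)) := by
  obtain ⟨C, hC, h⟩ := gns
  refine ⟨2 * (C + 1), by positivity, ?_⟩
  intro ρ t ψ m hm ho
  set D := J ρ t (d1 ψ ^ 2 + d2 ψ ^ 2) with hD
  set A := J ρ t (ψ ^ (2 * m)) with hA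
  have hD0 : 0 ≤ D := J_nonneg fun x => by
    simp only [SF.add_app, SF.pow_app]; positivity
  have hA0 : 0 ≤ A := J_nonneg fun x => by
    rw [SF.pow_app, pow_mul]; positivity
  set H := J ρ t ((ψ ^ (m + 1)) ^ 2) with hH
  have hH0 : 0 ≤ H := J_nonneg fun x => by
    rw [SF.pow_app]; positivity
  have hX : ∀ l : ℝ, 0 < l → √(H / ((C + 1) * (m + 1) ^ 2)) ≤ (1 / 2) * (l * A + l⁻¹ * (2 * D)) := by
    intro l hl
    have := h ρ t (ψ ^ (m + 1)) ((((m + 1 : ℕ) : ℝ) * (1 / 2)) • (l • ψ ^ (2 * m) + l⁻¹ • (2 : ℝ) • (d1 ψ ^ 2 + d2 ψ ^ 2)))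
      (ho.pow (by omega)) ((((ho.pow (by omega)).smul _).add ((((ho.d1.pow two_ne_zero).add
        (ho.d2.pow two_ne_zero)).smul _).smul _)).smul _) (fun x => by
        have := mul_le_mul_of_nonneg_left (abs_pow_le m hl (ψ (t, x)) ((d1 ψ) (t, x)) ((d2 ψ) (t, x)))
          (Nat.cast_nonneg (α := ℝ) (m + 1))
        simp only [der_pow, SF.mul_app, SF.natCast_app, SF.pow_app, SF.smul_app, SF.add_app]
        rw [abs_mul, abs_mul (((m + 1 : ℕ) : ℝ)), Nat.abs_cast]
        linarith)
    rw [map_smul, map_add, map_smul, map_smul, map_smul, ← hA, ← hD, ← hH] at this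
    simp only [smul_eq_mul] at this
    apply Real.sqrt_le_iff.2 ⟨by positivity, ?_⟩
    rw [div_le_iff₀ (by positivity)]
    refine this.trans ?_
    push_cast
    have : 0 ≤ ((↑m + 1) * (1 / 2) * (l * A + l⁻¹ * (2 * D))) ^ 2 := by positivity
    nlinarith
  have := sq_le_of_amgm (Real.sqrt_nonneg _) hA0 (by positivity) hX
  rw [Real.sq_sqrt (by positivity), div_le_iff₀ (by positivity)] at this
  rw [pow_mul', ← hH]
  linarith

/-- Iterating `pow_step` from `∫ψ²` to `∫ψ¹⁰`. -/
theorem pow_ten : ∃ C : ℝ, 0 < C ∧ ∀ ρ t (ψ : SF), Out ρ t ψ →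
    J ρ t (ψ ^ 10) ≤ C * J ρ t (d1 ψ ^ 2 + d2 ψ ^ 2) ^ 4 * J ρ t (ψ ^ 2) := by
  obtain ⟨C, hC, h⟩ := pow_step
  refine ⟨C ^ 4 * 14400, by positivity, fun ρ t ψ ho => ?_⟩
  have h1 := h ρ t ψ 1 (by norm_num) ho
  have h2 := h ρ t ψ 2 (by norm_num) ho
  have h3 := h ρ t ψ 3 (by norm_num) ho
  have h4 := h ρ t ψ 4 (by norm_num) ho
  norm_num at h1 h2 h3 h4
  have hD0 : 0 ≤ J ρ t (d1 ψ ^ 2 + d2 ψ ^ 2) := J_nonneg fun x => by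
    simp only [SF.add_app, SF.pow_app]; positivity
  rw [← map_add] at h1 h2 h3 h4
  generalize J ρ t (d1 ψ ^ 2 + d2 ψ ^ 2) = D at *
  calc J ρ t (ψ ^ 10) ≤ C * 25 * (J ρ t (ψ ^ 8) * D) := h4
    _ ≤ C * 25 * ((C * 16 * (J ρ t (ψ ^ 6) * D)) * D) := by gcongr
    _ ≤ C * 25 * ((C * 16 * ((C * 9 * (J ρ t (ψ ^ 4) * D)) * D)) * D) := by gcongr
    _ ≤ C * 25 * ((C * 16 * ((C * 9 * ((C * 4 * (J ρ t (ψ ^ 2) * D)) * D)) * D)) * D) := by gcongr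
    _ = _ := by ring

theorem d12_pow6 (ψ : SF) (p : ℝ × ℝ × ℝ) : (d1 (d2 (ψ ^ 6))) p =
    6 * (ψ p ^ 5 * (d1 (d2 ψ)) p) + 30 * (ψ p ^ 4 * ((d1 ψ) p * (d2 ψ) p)) := by
  rw [der_pow d2 ψ 5, leib, leib, der_pow d1 ψ 4, Derivation.map_natCast]
  simp only [SF.add_app, SF.mul_app, SF.pow_app, SF.natCast_app, SF.zero_app]
  push_cast
  ring

/-- A Gagliardo–Nirenberg type inequality: `S = sup ψ²` is controlled by the `L²` norms of
`ψ`, `∇ψ` and `∂₁∂₂ψ`; the free parameter `l` balances the last two terms. -/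
theorem sup_ineq : ∃ C : ℝ, 0 < C ∧ ∀ ρ t (ψ : SF), Out ρ t ψ → ∃ S : ℝ, (∀ x, ψ (t, x) ^ 2 ≤ S) ∧
    0 ≤ S ∧ ∀ l : ℝ, 0 < l → S ^ 3 ≤ 15 * S ^ 2 * J ρ t (d1 ψ ^ 2 + d2 ψ ^ 2) +
      3 * (l * (C * J ρ t (d1 ψ ^ 2 + d2 ψ ^ 2) ^ 4 * J ρ t (ψ ^ 2)) +
        l⁻¹ * J ρ t ((d1 (d2 ψ)) ^ 2)) := by
  obtain ⟨C, hC, h⟩ := pow_ten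
  refine ⟨C, hC, fun ρ t ψ ho => ?_⟩
  have hcs : HasCompactSupport fun x : ℝ × ℝ => (ψ ^ 2) (t, x) := (ho.pow two_ne_zero).compact
  obtain ⟨x0, hx0⟩ := (slice_cont (ψ ^ 2) t).exists_forall_ge_of_hasCompactSupport hcs
  refine ⟨ψ (t, x0) ^ 2, hx0, sq_nonneg _, fun l hl => ?_⟩
  set S := ψ (t, x0) ^ 2
  have hS : ∀ x, ψ (t, x) ^ 2 ≤ S := hx0
  have key := sup_le_J (ρ := ρ) (t := t) (h := ψ ^ 6)
    (G := (3 * l) • ψ ^ 10 + (3 * l⁻¹) • (d1 (d2 ψ)) ^ 2 + (15 * S ^ 2) • (d1 ψ ^ 2 + d2 ψ ^ 2))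
    (ho.pow (by norm_num))
    ((((ho.pow (by norm_num)).smul _).add ((ho.d2.d1.pow two_ne_zero).smul _)).add
      (((ho.d1.pow two_ne_zero).add (ho.d2.pow two_ne_zero)).smul _))
    (fun x => by
      simp only [SF.add_app, SF.smul_app, SF.pow_app]
      have : 0 ≤ ψ (t, x) ^ 10 := by positivity
      positivity)
    (fun x => by
      rw [d12_pow6]
      simp only [SF.add_app, SF.smul_app, SF.pow_app]
      have hs := hS x
      generalize ψ (t, x) = p at *
      generalize (d1 (d2 ψ)) (t, x) = q
      generalize (d1 ψ) (t, x) = a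
      generalize (d2 ψ) (t, x) = b
      have h1 : 0 ≤ l⁻¹ * (l * p ^ 5 - q) ^ 2 := by positivity
      have e : l⁻¹ * (l * p ^ 5 - q) ^ 2 = l * p ^ 10 - 2 * (p ^ 5 * q) + l⁻¹ * q ^ 2 := by
        field_simp
        ring
      have h2 : (p ^ 2) ^ 2 ≤ S ^ 2 := pow_le_pow_left₀ (sq_nonneg p) hs 2
      have h3 : 2 * (p ^ 4 * (a * b)) ≤ p ^ 4 * (a ^ 2 + b ^ 2) := by
        nlinarith [mul_nonneg (pow_nonneg (sq_nonneg p) 2) (sq_nonneg (a - b))]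
      have h4 := mul_le_mul_of_nonneg_right h2 (add_nonneg (sq_nonneg a) (sq_nonneg b))
      rw [e] at h1
      nlinarith only [h1, h3, h4])
    x0
  have e6 : (ψ ^ 6) (t, x0) = S ^ 3 := by simp only [SF.pow_app, S]; ring
  rw [e6, map_add, map_add, map_smul, map_smul, map_smul] at key
  simp only [smul_eq_mul] at key
  have := mul_le_mul_of_nonneg_left (h ρ t ψ ho) (by positivity : 0 ≤ 3 * l)
  linarith

/-- `sup_ineq` for quantities of the sizes arising below; `q = t^{1/4}`. -/
theorem sup_bound (c : ℝ) (hc : 0 < c) : ∃ C : ℝ, 0 < C ∧ ∀ ρ t (ψ : SF) (a q : ℝ), Out ρ t ψ → 0 < a → 1 ≤ q →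
    J ρ t (d1 ψ ^ 2 + d2 ψ ^ 2) ≤ c * a / q ^ 7 → J ρ t (ψ ^ 2) ≤ c * a * q →
    J ρ t ((d1 (d2 ψ)) ^ 2) ≤ c * a * q → ∀ x, ψ (t, x) ^ 2 ≤ C * a / q ^ 4 := by
  obtain ⟨K, hK, h⟩ := sup_ineq
  refine ⟨15 * c + 3 * (K * c ^ 4 * c + c) + 1, by positivity, ?_⟩
  intro ρ t ψ a q ho ha hq hD hN hM x
  obtain ⟨S, hS, hS0, hl⟩ := h ρ t ψ ho
  refine (hS x).trans ?_
  have hq0 : 0 < q := by linarith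
  have hD0 : 0 ≤ J ρ t (d1 ψ ^ 2 + d2 ψ ^ 2) := J_nonneg fun x => by
    simp only [SF.add_app, SF.pow_app]; positivity
  have hN0 : 0 ≤ J ρ t (ψ ^ 2) := J_nonneg fun x => by
    simp only [SF.pow_app]; positivity
  have key := hl (q ^ 13 / a ^ 2) (by positivity)
  generalize J ρ t (d1 ψ ^ 2 + d2 ψ ^ 2) = D at *
  generalize J ρ t (ψ ^ 2) = N at *
  generalize J ρ t ((d1 (d2 ψ)) ^ 2) = M at *
  set b := a / q ^ 4 with hb
  have hb0 : 0 < b := by positivity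
  have h1 : D ≤ c * b := by
    refine hD.trans ?_
    rw [hb, ← mul_div_assoc]
    gcongr
    norm_num
  have h2 : q ^ 13 / a ^ 2 * (K * D ^ 4 * N) ≤ K * c ^ 4 * c * b ^ 3 := by
    calc _ ≤ q ^ 13 / a ^ 2 * (K * (c * a / q ^ 7) ^ 4 * (c * a * q)) := by gcongr
      _ = K * c ^ 4 * c * (b ^ 3 / q ^ 2) := by rw [hb]; field_simp
      _ ≤ K * c ^ 4 * c * b ^ 3 := by
        gcongr
        exact div_le_self (by positivity) (one_le_pow₀ hq)
  have h3 : (q ^ 13 / a ^ 2)⁻¹ * M ≤ c * b ^ 3 := by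
    calc _ ≤ (q ^ 13 / a ^ 2)⁻¹ * (c * a * q) := by gcongr
      _ = c * b ^ 3 := by rw [hb]; field_simp
  have h4 : S ^ 3 ≤ 15 * S ^ 2 * (c * b) + 3 * (K * c ^ 4 * c * b ^ 3 + c * b ^ 3) := by
    refine key.trans ?_
    gcongr
  rw [mul_div_assoc, ← hb]
  by_contra hcon
  push Not at hcon
  have hbS : b ≤ S := by
    have : 0 ≤ (15 * c + 3 * (K * c ^ 4 * c + c)) * b := by positivity
    nlinarith
  have h5 : b ^ 3 ≤ S ^ 2 * b := by
    have := mul_le_mul_of_nonneg_right (pow_le_pow_left₀ hb0.le hbS 2) hb0.le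
    nlinarith
  have h6 : (15 * c + 3 * (K * c ^ 4 * c + c) + 1) * b * S ^ 2 < S * S ^ 2 :=
    mul_lt_mul_of_pos_right hcon (pow_pos (hb0.trans_le hbS) 2)
  have h7 : (3 * (K * c ^ 4 * c + c)) * b ^ 3 ≤ (3 * (K * c ^ 4 * c + c)) * (S ^ 2 * b) :=
    mul_le_mul_of_nonneg_left h5 (by positivity)
  nlinarith [mul_pos (pow_pos (hb0.trans_le hbS) 2) hb0]

/-- The weight `1 - |x|²/τ²`. -/
def wt (τ : ℝ) : SF := 1 - algebraMap ℝ SF (1 / τ ^ 2) * (c1 ^ 2 + c2 ^ 2)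

theorem wt_app (τ : ℝ) (p : ℝ × ℝ × ℝ) : wt τ p = 1 - 1 / τ ^ 2 * (p.2.1 ^ 2 + p.2.2 ^ 2) := rfl

theorem d1_wt (τ : ℝ) (F : SF) (p : ℝ × ℝ × ℝ) :
    (d1 (wt τ * F)) p = wt τ p * (d1 F) p - 2 * p.2.1 / τ ^ 2 * F p := by
  simp only [wt, map_sub, map_add, leib, der_const, pow_two, d1_c1, d1_c2, Derivation.map_one_eq_zero,
    SF.add_app, SF.sub_app, SF.mul_app, SF.one_app, SF.zero_app, SF.algebraMap_app, c1_app, c2_app]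
  ring

theorem d2_wt (τ : ℝ) (F : SF) (p : ℝ × ℝ × ℝ) :
    (d2 (wt τ * F)) p = wt τ p * (d2 F) p - 2 * p.2.2 / τ ^ 2 * F p := by
  simp only [wt, map_sub, map_add, leib, der_const, pow_two, d2_c1, d2_c2, Derivation.map_one_eq_zero,
    SF.add_app, SF.sub_app, SF.mul_app, SF.one_app, SF.zero_app, SF.algebraMap_app, c1_app, c2_app]
  ring

theorem d12_wt (τ : ℝ) (F : SF) (p : ℝ × ℝ × ℝ) :
    (d1 (d2 (wt τ * F))) p = wt τ p * (d1 (d2 F)) p - 2 * p.2.1 / τ ^ 2 * (d2 F) p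
      - 2 * p.2.2 / τ ^ 2 * (d1 F) p := by
  have : d2 (wt τ * F) = wt τ * d2 F - algebraMap ℝ SF (2 / τ ^ 2) * (c2 * F) := by
    refine SF.ext' fun p => ?_
    rw [d2_wt]
    simp only [SF.sub_app, SF.mul_app, SF.algebraMap_app, c2_app]
    ring
  rw [this, map_sub, SF.sub_app, d1_wt]
  simp only [leib, der_const, d1_c2, SF.add_app, SF.mul_app, SF.zero_app, SF.algebraMap_app, c2_app]
  ring

theorem six_sq (x1 x2 x3 x4 x5 x6 : ℝ) : (x1 - (x2 + x3 - x4 - x5) - x6) ^ 2 ≤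
    6 * (x1 ^ 2 + x2 ^ 2 + x3 ^ 2 + x4 ^ 2 + x5 ^ 2 + x6 ^ 2) := by
  have : 6 * (x1 ^ 2 + x2 ^ 2 + x3 ^ 2 + x4 ^ 2 + x5 ^ 2 + x6 ^ 2) - (x1 - (x2 + x3 - x4 - x5) - x6) ^ 2 =
    (x1 + x2) ^ 2 + (x1 + x3) ^ 2 + (x1 - x4) ^ 2 + (x1 - x5) ^ 2 + (x1 + x6) ^ 2 + (x2 - x3) ^ 2 +
    (x2 + x4) ^ 2 + (x2 + x5) ^ 2 + (x2 - x6) ^ 2 + (x3 + x4) ^ 2 + (x3 + x5) ^ 2 + (x3 - x6) ^ 2 +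
    (x4 - x5) ^ 2 + (x4 + x6) ^ 2 + (x5 + x6) ^ 2 := by ring
  have : 0 ≤ 6 * (x1 ^ 2 + x2 ^ 2 + x3 ^ 2 + x4 ^ 2 + x5 ^ 2 + x6 ^ 2) - (x1 - (x2 + x3 - x4 - x5) - x6) ^ 2 := by
    rw [this]; positivity
  linarith

/-- The quadratic estimate behind `weighted_pt`, after scaling out the powers of `t`. -/
theorem weighted_alg {a b m l k q B f : ℝ} (ha : a ^ 2 ≤ 4) (hm : m ^ 2 ≤ 9) (hab2 : a ^ 2 * b ^ 2 ≤ 16)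
    (haa : a ^ 2 * a ^ 2 ≤ 16) (hb : B ^ 2 ≤ f ^ 2) :
    (m * l - a * (B + q - a * l - b * k) - 2 * a * f) ^ 2 ≤ 1000 * (l ^ 2 + k ^ 2 + q ^ 2 + f ^ 2) := by
  have := six_sq (m * l) (a * B) (a * q) (a * (a * l)) (a * (b * k)) (2 * a * f)
  have g1 := mul_le_mul_of_nonneg_right hm (sq_nonneg l)
  have g2 := mul_le_mul_of_nonneg_right ha (sq_nonneg B)
  have g3 := mul_le_mul_of_nonneg_right ha (sq_nonneg q)
  have g4 := mul_le_mul_of_nonneg_right haa (sq_nonneg l)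
  have g5 := mul_le_mul_of_nonneg_right hab2 (sq_nonneg k)
  have g6 := mul_le_mul_of_nonneg_right ha (sq_nonneg f)
  have e4 : m * l - a * (B + q - a * l - b * k) - 2 * a * f =
    m * l - (a * B + a * q - a * (a * l) - a * (b * k)) - 2 * a * f := by ring
  rw [e4]
  refine this.trans ?_
  have e5 : (2 * a * f) ^ 2 = 4 * (a ^ 2 * f ^ 2) := by ring
  have e6 : (m * l) ^ 2 = m ^ 2 * l ^ 2 := by ring
  have e7 : (a * B) ^ 2 = a ^ 2 * B ^ 2 := by ring
  have e8 : (a * q) ^ 2 = a ^ 2 * q ^ 2 := by ring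
  have e9 : (a * (a * l)) ^ 2 = a ^ 2 * a ^ 2 * l ^ 2 := by ring
  have e10 : (a * (b * k)) ^ 2 = a ^ 2 * b ^ 2 * k ^ 2 := by ring
  rw [e5, e6, e7, e8, e9, e10]
  linarith only [g1, g2, g3, g4, g5, g6, hb, sq_nonneg l, sq_nonneg k, sq_nonneg q, sq_nonneg f]

/-- With `l_i = L_i∂ₜu`, `q = Σ L_i∂_iu`, the weighted second derivative `(1-|x|²/t²)∂ₜ∂₁u` is
`O(1/t)` times boosts, first derivatives and `t □u`. -/
theorem weighted_pt {t x y f fx fy utt lap : ℝ} (ht : 1 ≤ t) (hx : x ^ 2 + y ^ 2 ≤ (2 * t) ^ 2)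
    (hb : (t * (utt - lap)) ^ 2 ≤ f ^ 2) :
    ((1 - 1 / t ^ 2 * (x ^ 2 + y ^ 2)) * fx - 2 * x / t ^ 2 * f) ^ 2 ≤
      1 / t ^ 2 * (1000 * ((t * fx + x * utt) ^ 2 + (t * fy + y * utt) ^ 2 +
        (t * lap + x * fx + y * fy) ^ 2 + f ^ 2)) := by
  have ht0 : 0 < t := by linarith
  obtain ⟨a, rfl⟩ : ∃ a, x = t * a := ⟨x / t, by field_simp⟩
  obtain ⟨b, rfl⟩ : ∃ b, y = t * b := ⟨y / t, by field_simp⟩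
  have hab : a ^ 2 + b ^ 2 ≤ 4 := by
    have : t ^ 2 * (a ^ 2 + b ^ 2) ≤ t ^ 2 * 4 := by linarith
    exact le_of_mul_le_mul_left this (by positivity)
  have e1 : 1 - 1 / t ^ 2 * ((t * a) ^ 2 + (t * b) ^ 2) = 1 - (a ^ 2 + b ^ 2) := by field_simp
  have e2 : 2 * (t * a) / t ^ 2 * f = 1 / t * (2 * a * f) := by field_simp
  rw [e1, e2]
  set l := t * fx + t * a * utt with hl
  set k := t * fy + t * b * utt with hk
  set q := t * lap + t * a * fx + t * b * fy with hq
  set B := t * (utt - lap) with hB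
  have e3 : (1 - (a ^ 2 + b ^ 2)) * fx - 1 / t * (2 * a * f) =
      1 / t * ((1 - (a ^ 2 + b ^ 2)) * l - a * (B + q - a * l - b * k) - 2 * a * f) := by
    rw [hl, hB, hq, hk]; field_simp; ring
  rw [e3, mul_pow, one_div_pow]
  refine mul_le_mul_of_nonneg_left ?_ (by positivity)
  have ha : a ^ 2 ≤ 4 := by nlinarith [sq_nonneg b]
  have hm : (1 - (a ^ 2 + b ^ 2)) ^ 2 ≤ 9 := by nlinarith [sq_nonneg a, sq_nonneg b]
  have hab2 : a ^ 2 * b ^ 2 ≤ 16 := by nlinarith [sq_nonneg a, sq_nonneg b]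
  have haa : a ^ 2 * a ^ 2 ≤ 16 := by nlinarith [sq_nonneg a]
  exact weighted_alg ha hm hab2 haa hb

/-- Under the bootstrap assumption `□u` is bounded by `∂ₜu / t`. -/
theorem box_sq_le {R T κ : ℝ} {u1 u2 : SF} (h : Sol R u1 u2) (hκ : 0 < κ) (hκ1 : κ ≤ 1)
    (hB : BA T κ u1 u2) {t : ℝ} (ht : 0 < t) (hT : t ≤ T) (x : ℝ × ℝ) :
    (t * (box u1) (t, x)) ^ 2 ≤ (dT u1) (t, x) ^ 2 := by
  have e : (box u1) (t, x) = -((dT u2) (t, x) * (dT u2) (t, x) * (dT u1) (t, x)) := by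
    have := h.n1 (t, x) ht
    simp only [SF.add_app, SF.mul_app] at this
    linarith
  have h2 := (hB t ht.le hT x).2
  rw [e]
  generalize (dT u2) (t, x) = b at *
  generalize (dT u1) (t, x) = a
  have h3 : t * b ^ 2 ≤ 1 := by nlinarith [sq_nonneg b]
  have h4 : 0 ≤ t * b ^ 2 := by positivity
  calc (t * -(b * b * a)) ^ 2 = (t * b ^ 2) ^ 2 * a ^ 2 := by ring
    _ ≤ 1 * a ^ 2 := by
      gcongr
      exact pow_le_one₀ h4 h3
    _ = _ := one_mul _

theorem interior_sq {E1 E2 E3 : ℝ} (a b c : ℝ) (h1 : a ^ 2 ≤ E1) (h2 : b ^ 2 ≤ E2) (h3 : c ^ 2 ≤ E3) :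
    (a + b + c) ^ 2 ≤ 3 * (E1 + E2 + E3) := by
  nlinarith [sq_nonneg (a - b), sq_nonneg (a - c), sq_nonneg (b - c)]

set_option maxHeartbeats 1600000 in
/-- Decay of `∂ₜu` away from the light cone. -/
theorem interior_decay (R C : ℝ) (hC : 0 < C) : ∃ C' : ℝ, 0 < C' ∧ ∀ T κ ε u1 u2, Sol R u1 u2 → 0 < κ →
    κ ≤ 1 → BA T κ u1 u2 → 0 < ε → ∀ t, 1 ≤ t → R ≤ t → t ≤ T →
    EB R t (C * ε ^ 2 * (1 + t) ^ (1 / 16 : ℝ)) u1 →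
    ∀ x : ℝ × ℝ, 4 * (x.1 ^ 2 + x.2 ^ 2) ≤ t ^ 2 → (dT u1) (t, x) ^ 2 ≤ C' * ε ^ 2 / t := by
  obtain ⟨K, hK, hsup⟩ := sup_bound (200000 * C) (by positivity)
  refine ⟨2 * K, by positivity, ?_⟩
  intro T κ ε u1 u2 h hκ hκ1 hB hε t ht htR hT hE x hx
  have ht0 : 0 < t := by linarith
  set q : ℝ := t ^ (1 / 4 : ℝ) with hq
  have hq1 : 1 ≤ q := Real.one_le_rpow ht (by norm_num)
  have hq4 : q ^ 4 = t := by
    rw [hq, ← Real.rpow_natCast, ← Real.rpow_mul ht0.le]; norm_num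
  have hE1 : C * ε ^ 2 * (1 + t) ^ (1 / 16 : ℝ) ≤ 2 * (C * ε ^ 2 * q) := by
    have a1 : (1 + t) ^ (1 / 16 : ℝ) ≤ (2 * t) ^ (1 / 16 : ℝ) :=
      Real.rpow_le_rpow (by linarith) (by linarith) (by norm_num)
    have a2 : (2 * t) ^ (1 / 16 : ℝ) ≤ 2 * q := by
      rw [Real.mul_rpow (by norm_num) ht0.le]
      have b1 : (2 : ℝ) ^ (1 / 16 : ℝ) ≤ 2 ^ (1 : ℝ) :=
        Real.rpow_le_rpow_of_exponent_le (by norm_num) (by norm_num)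
      rw [Real.rpow_one] at b1
      have b2 : t ^ (1 / 16 : ℝ) ≤ q := Real.rpow_le_rpow_of_exponent_le ht (by norm_num)
      gcongr
    calc _ ≤ C * ε ^ 2 * (2 * q) := by gcongr; exact a1.trans a2
      _ = _ := by ring
  set E := C * ε ^ 2 * (1 + t) ^ (1 / 16 : ℝ) with hEdef
  set ψ := wt t * dT u1 with hψ
  have ho : Out (t + R) t ψ := (h.s1.dT.out h.hR ht0.le le_rfl).mul_left _
  have dich : ∀ x : ℝ × ℝ, (x.1 ^ 2 + x.2 ^ 2 ≤ (2 * t) ^ 2) ∨ (∀ F : SF, Supp R F → F (t, x) = 0) := by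
    intro x
    rcases le_or_gt (x.1 ^ 2 + x.2 ^ 2) ((t + R) ^ 2) with h1 | h1
    · left
      exact h1.trans (pow_le_pow_left₀ (by linarith [h.hR]) (by linarith) 2)
    · right
      exact fun F hF => hF.eq_zero ht0.le h1
  have hm : ∀ x : ℝ × ℝ, x.1 ^ 2 + x.2 ^ 2 ≤ (2 * t) ^ 2 → wt t (t, x) ^ 2 ≤ 9 := by
    intro x hx
    rw [wt_app]
    have : 1 / t ^ 2 * (x.1 ^ 2 + x.2 ^ 2) ≤ 4 := by
      rw [div_mul_eq_mul_div, one_mul, div_le_iff₀ (by positivity)]; linarith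
    have : 0 ≤ 1 / t ^ 2 * (x.1 ^ 2 + x.2 ^ 2) := by positivity
    change (1 - 1 / t ^ 2 * (x.1 ^ 2 + x.2 ^ 2)) ^ 2 ≤ 9
    nlinarith
  have hN : J (t + R) t (ψ ^ 2) ≤ 200000 * C * ε ^ 2 * q := by
    have : J (t + R) t (ψ ^ 2) ≤ J (t + R) t ((18 : ℝ) • en u1) := by
      refine J_mono fun x => ?_
      simp only [hψ, SF.pow_app, SF.mul_app, SF.smul_app, en_app]
      rcases dich x with h1 | h1
      · have := mul_le_mul_of_nonneg_right (hm x h1) (sq_nonneg ((dT u1) (t, x)))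
        nlinarith [sq_nonneg ((d1 u1) (t, x)), sq_nonneg ((d2 u1) (t, x))]
      · rw [h1 _ h.s1.dT, h1 _ h.s1.d1, h1 _ h.s1.d2]; simp
    rw [map_smul, smul_eq_mul] at this
    have e0 := hE.e0
    have : 0 ≤ C * ε ^ 2 * q := by positivity
    linarith
  have hyi : ∀ y : ℝ, y ^ 2 ≤ (2 * t) ^ 2 → (2 * y / t ^ 2) ^ 2 ≤ 16 := by
    intro y hy
    rw [div_pow, div_le_iff₀ (by positivity)]
    have : t ^ 2 ≤ (t ^ 2) ^ 2 := by
      have : 1 ≤ t ^ 2 := one_le_pow₀ ht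
      nlinarith
    nlinarith
  have hM : J (t + R) t (d1 (d2 ψ) ^ 2) ≤ 200000 * C * ε ^ 2 * q := by
    have : J (t + R) t (d1 (d2 ψ) ^ 2) ≤
        J (t + R) t ((96 : ℝ) • (en (d1 (d2 u1)) + en (d1 u1) + en (d2 u1))) := by
      refine J_mono fun x => ?_
      simp only [hψ, SF.pow_app, SF.smul_app, SF.add_app, en_app, d12_wt, d1_dT, d2_dT]
      rcases dich x with h1 | h1
      · have g1 := mul_le_mul_of_nonneg_right (hm x h1) (sq_nonneg ((dT (d1 (d2 u1))) (t, x)))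
        have g2 := mul_le_mul_of_nonneg_right (hyi x.1 (by nlinarith [sq_nonneg x.2])) (sq_nonneg ((dT (d2 u1)) (t, x)))
        have g3 := mul_le_mul_of_nonneg_right (hyi x.2 (by nlinarith [sq_nonneg x.1])) (sq_nonneg ((dT (d1 u1)) (t, x)))
        rw [← mul_pow] at g1 g2 g3
        have := interior_sq _ (-(2 * x.1 / t ^ 2 * (dT (d2 u1)) (t, x))) (-(2 * x.2 / t ^ 2 * (dT (d1 u1)) (t, x)))
          g1 ((neg_sq _).trans_le g2) ((neg_sq _).trans_le g3)
        rw [← sub_eq_add_neg, ← sub_eq_add_neg] at this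
        refine this.trans ?_
        linarith only [sq_nonneg ((dT (d1 (d2 u1))) (t, x)), sq_nonneg ((dT (d1 u1)) (t, x)), sq_nonneg ((dT (d2 u1)) (t, x)),
          sq_nonneg ((d1 (d1 (d2 u1))) (t, x)), sq_nonneg ((d1 (d1 u1)) (t, x)), sq_nonneg ((d1 (d2 u1)) (t, x)),
          sq_nonneg ((d2 (d1 (d2 u1))) (t, x)), sq_nonneg ((d2 (d1 u1)) (t, x)), sq_nonneg ((d2 (d2 u1)) (t, x))]
      · rw [h1 _ h.s1.d2.d1.dT, h1 _ h.s1.d2.dT, h1 _ h.s1.d1.dT]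
        nlinarith [sq_nonneg ((d1 (d1 (d2 u1))) (t, x)), sq_nonneg ((d1 (d1 u1)) (t, x)), sq_nonneg ((d1 (d2 u1)) (t, x)),
          sq_nonneg ((d2 (d1 (d2 u1))) (t, x)), sq_nonneg ((d2 (d1 u1)) (t, x)), sq_nonneg ((d2 (d2 u1)) (t, x))]
    rw [map_smul, smul_eq_mul, map_add, map_add] at this
    have : 0 ≤ C * ε ^ 2 * q := by positivity
    linarith [hE.e1, hE.e2, hE.e12]
  have hD : J (t + R) t (d1 ψ ^ 2 + d2 ψ ^ 2) ≤ 200000 * C * ε ^ 2 / q ^ 7 := by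
    have : J (t + R) t (d1 ψ ^ 2 + d2 ψ ^ 2) ≤
        J (t + R) t ((1 / t ^ 2 * 30000 : ℝ) • (en (L1 u1) + en (L2 u1) + en u1)) := by
      refine J_mono fun x => ?_
      simp only [hψ, SF.pow_app, SF.smul_app, SF.add_app, d1_wt, d2_wt]
      rcases dich x with h1 | h1
      · have hb := box_sq_le h hκ hκ1 hB ht0 hT x
        have eb : (box u1) (t, x) = (dT (dT u1)) (t, x) - ((d1 (d1 u1)) (t, x) + (d2 (d2 u1)) (t, x)) := by
          simp only [box, SF.sub_app]; ring
        rw [eb] at hb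
        have w1 := weighted_pt (fx := (d1 (dT u1)) (t, x)) (fy := (d2 (dT u1)) (t, x)) ht h1 hb
        have w2 := weighted_pt (x := x.2) (y := x.1) (fx := (d2 (dT u1)) (t, x)) (fy := (d1 (dT u1)) (t, x)) ht
          (by linarith) hb
        rw [add_comm (x.2 ^ 2)] at w2
        have k1 : t * (d1 (dT u1)) (t, x) + x.1 * (dT (dT u1)) (t, x) = (dT (L1 u1)) (t, x) - (d1 u1) (t, x) := by
          rw [dT_L1, L1_apply]; simp
        have k2 : t * (d2 (dT u1)) (t, x) + x.2 * (dT (dT u1)) (t, x) = (dT (L2 u1)) (t, x) - (d2 u1) (t, x) := by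
          rw [dT_L2, L2_apply]; simp
        have k3 : t * ((d1 (d1 u1)) (t, x) + (d2 (d2 u1)) (t, x)) + x.1 * (d1 (dT u1)) (t, x) +
            x.2 * (d2 (dT u1)) (t, x) = (d1 (L1 u1)) (t, x) + (d2 (L2 u1)) (t, x) - 2 * (dT u1) (t, x) := by
          simp only [L1_apply, L2_apply, map_add, leib, d1_cT, d2_cT, d1_c1, d2_c2, SF.add_app, SF.mul_app,
            SF.zero_app, SF.one_app, cT_app, c1_app, c2_app]
          ring
        rw [k1, k2, k3] at w1
        rw [show t * ((d1 (d1 u1)) (t, x) + (d2 (d2 u1)) (t, x)) + x.2 * (d2 (dT u1)) (t, x) +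
          x.1 * (d1 (dT u1)) (t, x) = (d1 (L1 u1)) (t, x) + (d2 (L2 u1)) (t, x) - 2 * (dT u1) (t, x) by
            rw [← k3]; ring, k2, k1] at w2
        refine (add_le_add w1 w2).trans ?_
        rw [← mul_add, mul_assoc]
        refine mul_le_mul_of_nonneg_left ?_ (by positivity)
        simp only [en_app]
        generalize (dT (L1 u1)) (t, x) = y1
        generalize (dT (L2 u1)) (t, x) = y2
        generalize (d1 (L1 u1)) (t, x) = y3
        generalize (d2 (L2 u1)) (t, x) = y4
        generalize (d2 (L1 u1)) (t, x) = y8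
        generalize (d1 (L2 u1)) (t, x) = y9
        generalize (d1 u1) (t, x) = y5
        generalize (d2 u1) (t, x) = y6
        generalize (dT u1) (t, x) = y7
        nlinarith only [sq_nonneg (y1 + y5), sq_nonneg (y2 + y6), sq_nonneg (y3 - y4), sq_nonneg (y3 + 2 * y7),
          sq_nonneg (y4 + 2 * y7), sq_nonneg y1, sq_nonneg y2, sq_nonneg y3, sq_nonneg y4, sq_nonneg y5, sq_nonneg y6,
          sq_nonneg y7, sq_nonneg y8, sq_nonneg y9]
      · rw [h1 _ h.s1.dT, h1 _ h.s1.dT.d1, h1 _ h.s1.dT.d2]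
        have i1 := en_nonneg (L1 u1) (t, x)
        have i2 := en_nonneg (L2 u1) (t, x)
        have i3 := en_nonneg u1 (t, x)
        simp only [mul_zero, sub_zero]
        have : 0 ≤ 1 / t ^ 2 * 30000 * ((en (L1 u1)) (t, x) + (en (L2 u1)) (t, x) + (en u1) (t, x)) := by positivity
        linarith
    rw [map_smul, smul_eq_mul, map_add _ (en (L1 u1) + en (L2 u1)), map_add _ (en (L1 u1))] at this
    have h3 : J (t + R) t (en (L1 u1)) + J (t + R) t (en (L2 u1)) + J (t + R) t (en u1) ≤ 6 * (C * ε ^ 2 * q) := by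
      linarith [hE.l1, hE.l2, hE.e0]
    refine this.trans ((mul_le_mul_of_nonneg_left h3 (by positivity)).trans ?_)
    rw [← hq4]
    have : 1 / (q ^ 4) ^ 2 * 30000 * (6 * (C * ε ^ 2 * q)) = 180000 * C * ε ^ 2 / q ^ 7 := by
      field_simp; norm_num
    rw [this]
    gcongr
    norm_num
  have key := hsup (t + R) t ψ (ε ^ 2) q ho (by positivity) hq1 hD hN hM x
  rw [hq4] at key
  simp only [hψ, SF.mul_app] at key
  have hw : 3 / 4 ≤ wt t (t, x) := by
    rw [wt_app]
    have : 1 / t ^ 2 * (x.1 ^ 2 + x.2 ^ 2) ≤ 1 / 4 := by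
      rw [div_mul_eq_mul_div, one_mul, div_le_iff₀ (by positivity)]; linarith
    change 3 / 4 ≤ 1 - 1 / t ^ 2 * (x.1 ^ 2 + x.2 ^ 2)
    linarith
  have hw2 : 1 / 2 ≤ wt t (t, x) ^ 2 := by nlinarith
  have := mul_le_mul_of_nonneg_right hw2 (sq_nonneg ((dT u1) (t, x)))
  rw [← mul_pow] at this
  have e : 2 * K * ε ^ 2 / t = 2 * (K * ε ^ 2 / t) := by ring
  rw [e]
  linarith

/-- Smallness of `∂ₜu` for bounded times. -/
theorem early_bound (R C T0 : ℝ) (hC : 0 < C) (hT0 : 0 ≤ T0) : ∃ C' : ℝ, 0 < C' ∧ ∀ ε u1 u2, Sol R u1 u2 → 0 < ε →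
    ∀ t, 0 ≤ t → t ≤ T0 → EB R t (C * ε ^ 2 * (1 + t) ^ (1 / 16 : ℝ)) u1 →
    ∀ x : ℝ × ℝ, (dT u1) (t, x) ^ 2 ≤ C' * ε ^ 2 := by
  obtain ⟨K, hK, hsup⟩ := sup_bound (4 * C * (1 + T0)) (by positivity)
  refine ⟨K, hK, ?_⟩
  intro ε u1 u2 h hε t ht hT hE x
  have hE1 : C * ε ^ 2 * (1 + t) ^ (1 / 16 : ℝ) ≤ C * (1 + T0) * ε ^ 2 := by
    have : (1 + t) ^ (1 / 16 : ℝ) ≤ (1 + T0) ^ (1 : ℝ) :=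
      (Real.rpow_le_rpow (by linarith) (by linarith) (by norm_num)).trans
        (Real.rpow_le_rpow_of_exponent_le (by linarith) (by norm_num))
    rw [Real.rpow_one] at this
    calc _ ≤ C * ε ^ 2 * (1 + T0) := by gcongr
      _ = _ := by ring
  have key : ∀ w : SF, J (t + R) t (en w) ≤ C * ε ^ 2 * (1 + t) ^ (1 / 16 : ℝ) →
      J (t + R) t (dT w ^ 2) ≤ 2 * (C * (1 + T0) * ε ^ 2) := fun w hw =>
    (J_dT_le_en _ _ _).trans (by linarith)
  have := hsup (t + R) t (dT u1) (ε ^ 2) 1 (h.s1.dT.out h.hR ht le_rfl) (by positivity) le_rfl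
    (by
      rw [map_add, d1_dT, d2_dT]
      have := key _ hE.e1
      have := key _ hE.e2
      norm_num; linarith)
    (by have := key _ hE.e0
        have : 0 ≤ C * (1 + T0) * ε ^ 2 := by positivity
        linarith)
    (by rw [d2_dT, d1_dT]
        have := key _ hE.e12
        have : 0 ≤ C * (1 + T0) * ε ^ 2 := by positivity
        linarith) x
  simpa using this

/-! ### Polar coordinates and a Sobolev inequality in the wave zone -/

/-- The trace of `F` at time `t` in polar coordinates. -/
def pol (t : ℝ) (F : SF) (ρ θ : ℝ) : ℝ := F (t, ρ * cos θ, ρ * sin θ)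

theorem pol_cont (t : ℝ) (F : SF) : Continuous fun z : ℝ × ℝ => pol t F z.1 z.2 :=
  (SF.continuous F).comp (by fun_prop)

theorem pol_hasDerivAt_r (t : ℝ) (F : SF) (ρ θ : ℝ) :
    HasDerivAt (fun ρ => pol t F ρ θ) (cos θ * pol t (d1 F) ρ θ + sin θ * pol t (d2 F) ρ θ) ρ := by
  have := (SF.hasFDerivAt F (t, ρ * cos θ, ρ * sin θ)).comp_hasDerivAt ρ
    ((hasDerivAt_const ρ t).prodMk (((hasDerivAt_id ρ).mul_const (cos θ)).prodMk
      ((hasDerivAt_id ρ).mul_const (sin θ))))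
  refine this.congr_deriv ?_
  rw [show ((0 : ℝ), 1 * cos θ, 1 * sin θ) = cos θ • ((0 : ℝ), (1 : ℝ), (0 : ℝ)) +
    sin θ • ((0 : ℝ), (0 : ℝ), (1 : ℝ)) by simp, map_add, map_smul, map_smul]
  rfl

theorem pol_hasDerivAt_θ (t : ℝ) (F : SF) (ρ θ : ℝ) :
    HasDerivAt (fun θ => pol t F ρ θ) (pol t (XF 0 0 1 F) ρ θ) θ := by
  have := (SF.hasFDerivAt F (t, ρ * cos θ, ρ * sin θ)).comp_hasDerivAt θ
    ((hasDerivAt_const θ t).prodMk (((hasDerivAt_cos θ).const_mul ρ).prodMk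
      ((hasDerivAt_sin θ).const_mul ρ)))
  refine this.congr_deriv ?_
  rw [show ((0 : ℝ), ρ * -sin θ, ρ * cos θ) = (-(ρ * sin θ)) • ((0 : ℝ), (1 : ℝ), (0 : ℝ)) +
    (ρ * cos θ) • ((0 : ℝ), (0 : ℝ), (1 : ℝ)) by simp, map_add, map_smul, map_smul]
  simp [pol, XF_apply, d1, d2, dV_app]

/-- Sobolev embedding on the circle. -/
theorem circle_sup {q q' g : ℝ → ℝ} (hq : ∀ θ, HasDerivAt q (q' θ) θ) (hc : Continuous q')
    (hg : Continuous g) (h1 : ∀ θ, |q' θ| ≤ g θ) (h2 : ∀ θ, q θ ≤ g θ) {θ0 : ℝ}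
    (hθ : θ0 ∈ Set.Icc (-π) π) : q θ0 ≤ 2 * ∫ θ in (-π)..π, g θ := by
  have hpi := pi_pos
  have hqc : Continuous q := continuous_iff_continuousAt.2 fun θ => (hq θ).continuousAt
  have hg0 : ∀ θ, 0 ≤ g θ := fun θ => (abs_nonneg _).trans (h1 θ)
  set I := ∫ θ in (-π)..π, g θ with hI
  have hI0 : 0 ≤ I := intervalIntegral.integral_nonneg (by linarith) fun θ _ => hg0 θ
  have key : ∀ θ ∈ Set.Icc (-π) π, q θ0 ≤ q θ + I := by
    intro θ hθ'
    have e := intervalIntegral.integral_eq_sub_of_hasDerivAt (fun y _ => hq y)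
      (hc.intervalIntegrable θ θ0)
    have b : |∫ y in θ..θ0, q' y| ≤ |∫ y in θ..θ0, g y| :=
      by
      rw [← Real.norm_eq_abs]
      exact intervalIntegral.norm_integral_le_abs_of_norm_le (Eventually.of_forall fun y => h1 y)
        (hg.intervalIntegrable _ _)
    have b2 : |∫ y in θ..θ0, g y| ≤ I := by
      have := intervalIntegral.abs_integral_mono_interval (f := g) (μ := volume) (a := θ) (b := θ0)
        (c := -π) (d := π) (by
          rw [Set.uIoc_of_le (show -π ≤ π by linarith)]
          intro y hy
          rw [Set.uIoc, Set.mem_Ioc] at hy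
          exact ⟨lt_of_le_of_lt (le_min hθ'.1 hθ.1) hy.1, hy.2.trans (max_le hθ'.2 hθ.2)⟩)
        (Eventually.of_forall hg0) (hg.intervalIntegrable _ _)
      rwa [abs_of_nonneg hI0] at this
    have := le_abs_self (∫ y in θ..θ0, q' y)
    linarith
  have i1 : ∫ _ in (-π)..π, q θ0 ≤ ∫ θ in (-π)..π, (q θ + I) :=
    intervalIntegral.integral_mono_on (by linarith) (by simp)
      ((hqc.add continuous_const).intervalIntegrable _ _) key
  have i2 : ∫ θ in (-π)..π, q θ ≤ I :=
    intervalIntegral.integral_mono_on (by linarith) (hqc.intervalIntegrable _ _)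
      (hg.intervalIntegrable _ _) fun θ _ => h2 θ
  rw [intervalIntegral.integral_add (hqc.intervalIntegrable _ _) (by simp)] at i1
  simp only [intervalIntegral.integral_const, smul_eq_mul, sub_neg_eq_add] at i1
  have h3 : 3 < π := pi_gt_three
  have : (π + π) * q θ0 ≤ (π + π) * (2 * I) := by nlinarith
  exact le_of_mul_le_mul_left this (by linarith)

/-- The one-dimensional trace inequality for a function vanishing at the far end of an interval. -/
theorem radial_sq {f f' : ℝ → ℝ} (hf : ∀ y, HasDerivAt f (f' y) y) (hc : Continuous f') {a b : ℝ}
    (hab : a ≤ b) (hb : f b = 0) : f a ^ 2 ≤ (b - a) * ∫ y in a..b, f' y ^ 2 := by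
  rw [← sq_abs]
  refine sq_le_of_amgm (abs_nonneg _) (by linarith)
    (intervalIntegral.integral_nonneg hab fun y _ => sq_nonneg _) fun l hl => ?_
  have e := intervalIntegral.integral_eq_sub_of_hasDerivAt (fun y _ => hf y)
    (hc.intervalIntegrable a b)
  rw [hb, zero_sub] at e
  have : |f a| = |∫ y in a..b, f' y| := by rw [e, abs_neg]
  rw [this]
  refine (intervalIntegral.abs_integral_le_integral_abs hab).trans ?_
  have h1 : ∫ y in a..b, |f' y| ≤ ∫ y in a..b, (1 / 2 * l + 1 / 2 * l⁻¹ * f' y ^ 2) := by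
    refine intervalIntegral.integral_mono_on hab (hc.abs.intervalIntegrable _ _)
      ((continuous_const.add (continuous_const.mul (hc.pow 2))).intervalIntegrable _ _) fun y _ => ?_
    have : 0 ≤ 1 / 2 * l⁻¹ * (|f' y| - l) ^ 2 := by positivity
    rw [← sq_abs (f' y)]
    have e : 1 / 2 * l⁻¹ * (|f' y| - l) ^ 2 = 1 / 2 * l + 1 / 2 * l⁻¹ * |f' y| ^ 2 - |f' y| := by
      field_simp; ring
    linarith
  have h2 : IntervalIntegrable (fun y => 1 / 2 * l⁻¹ * f' y ^ 2) volume a b :=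
    (continuous_const.mul (hc.pow 2)).intervalIntegrable _ _
  rw [intervalIntegral.integral_add (by simp) h2,
    intervalIntegral.integral_const_mul, intervalIntegral.integral_const_mul, intervalIntegral.integral_const,
    smul_eq_mul] at h1
  linarith

/-- Integration over a polar rectangle. -/
theorem polar_le {t ρ a b : ℝ} (G : SF) (hG : ∀ x, 0 ≤ G (t, x)) (ho : Out ρ t G) (ha : 0 ≤ a)
    (hab : a ≤ b) : ∫ θ in (-π)..π, ∫ r in a..b, r * pol t G r θ ≤ J ρ t G := by
  have hpi := pi_pos
  rw [J_eq_integral ho, ← integral_comp_polarCoord_symm]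
  have hcont : Continuous fun z : ℝ × ℝ => z.1 * pol t G z.1 z.2 :=
    continuous_fst.mul (pol_cont t G)
  have hform : ∀ p : ℝ × ℝ, p.1 • G (t, polarCoord.symm p) = p.1 * pol t G p.1 p.2 := fun p => rfl
  simp_rw [hform]
  -- the integrand is supported in a compact rectangle
  have hvan : ∀ p ∈ polarCoord.target, p ∉ Set.Icc (0 : ℝ) (2 * |ρ|) ×ˢ Set.Icc (-π) π →
      p.1 * pol t G p.1 p.2 = 0 := by
    rintro ⟨s, θ⟩ hp hn
    simp only [polarCoord_target, Set.mem_prod, Set.mem_Ioi, Set.mem_Ioo, Set.mem_Icc] at hp hn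
    have hs : 2 * |ρ| < s := by
      by_contra hcon
      exact hn ⟨⟨hp.1.le, not_lt.1 hcon⟩, hp.2.1.le, hp.2.2.le⟩
    have : G (t, s * cos θ, s * sin θ) = 0 := by
      refine ho _ fun hmem => ?_
      have h1 : |s * cos θ| ≤ ρ ∧ |s * sin θ| ≤ ρ := by
        have := mem_closedBall_zero_iff.1 hmem
        rw [Prod.norm_def] at this
        exact max_le_iff.1 this
      have hρ : 0 ≤ ρ := (abs_nonneg _).trans h1.1
      rw [abs_of_nonneg hρ] at hs
      have h2 := sq_le_sq' (by linarith [(abs_le.1 h1.1).1]) (abs_le.1 h1.1).2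
      have h3 := sq_le_sq' (by linarith [(abs_le.1 h1.2).1]) (abs_le.1 h1.2).2
      have h4 := sin_sq_add_cos_sq θ
      have : s ^ 2 ≤ 2 * ρ ^ 2 := by
        have : s ^ 2 = (s * cos θ) ^ 2 + (s * sin θ) ^ 2 := by rw [← mul_one (s ^ 2), ← h4]; ring
        linarith
      nlinarith
    simp [pol, this]
  have hint : IntegrableOn (fun p : ℝ × ℝ => p.1 * pol t G p.1 p.2) polarCoord.target := by
    have h1 : IntegrableOn (fun p : ℝ × ℝ => p.1 * pol t G p.1 p.2)
        (Set.Icc (0 : ℝ) (2 * |ρ|) ×ˢ Set.Icc (-π) π) :=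
      hcont.continuousOn.integrableOn_compact (isCompact_Icc.prod isCompact_Icc)
    exact h1.of_forall_sdiff_eq_zero polarCoord.open_target.measurableSet
      fun p hp => hvan p hp.1 hp.2
  have hae : ∫ θ in (-π)..π, ∫ r in a..b, r * pol t G r θ =
      ∫ p in Set.Ioc a b ×ˢ Set.Ioo (-π) π, p.1 * pol t G p.1 p.2 := by
    have h1 : IntegrableOn (fun p : ℝ × ℝ => p.1 * pol t G p.1 p.2)
        (Set.Ioc a b ×ˢ Set.Ioo (-π) π) (volume.prod volume) :=
      (hcont.continuousOn.integrableOn_compact (isCompact_Icc.prod isCompact_Icc)).mono_set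
        (Set.prod_mono Set.Ioc_subset_Icc_self Set.Ioo_subset_Icc_self)
    have h2 : IntegrableOn (fun p : ℝ × ℝ => p.2 * pol t G p.2 p.1)
        (Set.Ioo (-π) π ×ˢ Set.Ioc a b) (volume.prod volume) :=
      ((hcont.comp continuous_swap).continuousOn.integrableOn_compact
        (isCompact_Icc.prod isCompact_Icc)).mono_set
        (Set.prod_mono Set.Ioo_subset_Icc_self Set.Ioc_subset_Icc_self)
    have e := setIntegral_prod_swap (μ := volume) (ν := volume) (Set.Ioc a b) (Set.Ioo (-π) π)
      (fun p : ℝ × ℝ => p.1 * pol t G p.1 p.2)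
    change _ = ∫ p in Set.Ioc a b ×ˢ Set.Ioo (-π) π, p.1 * pol t G p.1 p.2 ∂(volume.prod volume)
    rw [← e]
    simp only [Prod.fst_swap, Prod.snd_swap]
    rw [setIntegral_prod _ h2, intervalIntegral.integral_of_le (by linarith), integral_Ioc_eq_integral_Ioo]
    refine setIntegral_congr_fun measurableSet_Ioo fun θ _ => ?_
    exact intervalIntegral.integral_of_le hab
  rw [hae]
  refine setIntegral_mono_set hint ?_ (LE.le.eventuallyLE ?_)
  · refine (ae_restrict_iff' polarCoord.open_target.measurableSet).2 (Eventually.of_forall fun p hp => ?_)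
    exact mul_nonneg (le_of_lt hp.1) (hG _)
  · rintro p ⟨h1, h2⟩
    exact ⟨lt_of_le_of_lt ha h1.1, h2⟩

/-- Sobolev inequality in the region `|x| ≥ t/2`, with one rotation and one radial derivative. -/
theorem wave_sup {R t r θ0 : ℝ} (hR : 0 ≤ R) (w : SF) (hs : Supp R w) (ht : 2 * R + 2 ≤ t)
    (hr : t / 2 ≤ r) (hθ : θ0 ∈ Set.Icc (-π) π) :
    pol t w r θ0 ^ 2 ≤ 8 * (J (t + R) t (en w) + J (t + R) t (en (XF 0 0 1 w))) := by
  have hpi := pi_pos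
  have J0 : 0 ≤ J (t + R) t (en w) + J (t + R) t (en (XF 0 0 1 w)) :=
    add_nonneg (J_en_nonneg _ _ _) (J_en_nonneg _ _ _)
  have van : ∀ F, Supp R F → ∀ s θ, t + R < s → pol t F s θ = 0 := by
    intro F hF s θ hs
    refine hF.eq_zero (x := (s * cos θ, s * sin θ)) (by linarith) ?_
    have : (s * cos θ) ^ 2 + (s * sin θ) ^ 2 = s ^ 2 := by
      rw [← mul_one (s ^ 2), ← sin_sq_add_cos_sq θ]; ring
    change (t + R) ^ 2 < (s * cos θ) ^ 2 + (s * sin θ) ^ 2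
    rw [this]
    nlinarith
  rcases lt_or_ge (t + R) r with hlt | hle
  · rw [van w hs _ _ hlt]; norm_num; linarith
  set b := t + R + 1 with hb
  have key : ∀ F, Supp R F → ∀ θ, pol t F r θ ^ 2 ≤ 4 * ∫ s in r..b, s * pol t (en F) s θ := by
    intro F hF θ
    have hc : Continuous fun s => cos θ * pol t (d1 F) s θ + sin θ * pol t (d2 F) s θ := by
      have h1 := (pol_cont t (d1 F)).comp (show Continuous fun s : ℝ => (s, θ) by fun_prop)
      have h2 := (pol_cont t (d2 F)).comp (show Continuous fun s : ℝ => (s, θ) by fun_prop)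
      exact (continuous_const.mul h1).add (continuous_const.mul h2)
    have h1 := radial_sq (fun s => pol_hasDerivAt_r t F s θ) hc (show r ≤ b by linarith)
      (van F hF b θ (by linarith))
    refine h1.trans ?_
    rw [← intervalIntegral.integral_const_mul, ← intervalIntegral.integral_const_mul]
    have h3 := (pol_cont t (en F)).comp (show Continuous fun s : ℝ => (s, θ) by fun_prop)
    refine intervalIntegral.integral_mono_on (by linarith)
      ((continuous_const.mul (hc.pow 2)).intervalIntegrable _ _)
      ((continuous_const.mul (continuous_id.mul h3)).intervalIntegrable _ _) fun s hs => ?_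
    have e1 : (cos θ * pol t (d1 F) s θ + sin θ * pol t (d2 F) s θ) ^ 2 ≤ 2 * pol t (en F) s θ := by
      simp only [pol, en_app]
      generalize (d1 F) (t, s * cos θ, s * sin θ) = x
      generalize (d2 F) (t, s * cos θ, s * sin θ) = y
      generalize (dT F) (t, s * cos θ, s * sin θ) = z
      have hsc := sin_sq_add_cos_sq θ
      have : (cos θ * x + sin θ * y) ^ 2 = (sin θ ^ 2 + cos θ ^ 2) * (x ^ 2 + y ^ 2) - (cos θ * y - sin θ * x) ^ 2 := by
        ring
      rw [this, hsc]
      nlinarith [sq_nonneg (cos θ * y - sin θ * x), sq_nonneg z]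
    have e2 : 0 ≤ pol t (en F) s θ := en_nonneg F _
    have e3 : b - r ≤ 2 * s := by linarith [hs.1]
    calc _ ≤ 2 * s * (2 * pol t (en F) s θ) := by
          gcongr
          linarith [hs.1]
      _ = 4 * (id s * pol t (en F) s θ) := by simp only [id]; ring
  have hcw := (pol_cont t w).comp (show Continuous fun θ : ℝ => (r, θ) by fun_prop)
  have hcx := (pol_cont t (XF 0 0 1 w)).comp (show Continuous fun θ : ℝ => (r, θ) by fun_prop)
  have h1 := circle_sup (q := fun θ => pol t w r θ ^ 2) (g := fun θ => pol t w r θ ^ 2 + pol t (XF 0 0 1 w) r θ ^ 2)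
    (fun θ => (pol_hasDerivAt_θ t w r θ).pow 2) (by
      have : Continuous fun θ => 2 * pol t w r θ * pol t (XF 0 0 1 w) r θ := (continuous_const.mul hcw).mul hcx
      simpa using this)
    ((hcw.pow 2).add (hcx.pow 2))
    (fun θ => by
      simp only [Nat.cast_ofNat, Nat.add_one_sub_one, pow_one]
      rw [abs_le]
      constructor <;> nlinarith [sq_nonneg (pol t w r θ + pol t (XF 0 0 1 w) r θ), sq_nonneg (pol t w r θ - pol t (XF 0 0 1 w) r θ)])
    (fun θ => by nlinarith [sq_nonneg (pol t (XF 0 0 1 w) r θ)]) hθ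
  refine h1.trans ?_
  have hpc : ∀ F : SF, Continuous fun θ => ∫ s in r..b, s * pol t (en F) s θ := fun F => by
    refine intervalIntegral.continuous_parametric_intervalIntegral_of_continuous' ?_ _ _
    have := (pol_cont t (en F)).comp (continuous_swap (X := ℝ) (Y := ℝ))
    exact continuous_snd.mul this
  have h2 : ∫ θ in (-π)..π, (pol t w r θ ^ 2 + pol t (XF 0 0 1 w) r θ ^ 2) ≤
      ∫ θ in (-π)..π, (4 * (∫ s in r..b, s * pol t (en w) s θ) +
        4 * ∫ s in r..b, s * pol t (en (XF 0 0 1 w)) s θ) :=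
    intervalIntegral.integral_mono_on (by linarith) (((hcw.pow 2).add (hcx.pow 2)).intervalIntegrable _ _)
      (((continuous_const.mul (hpc w)).add (continuous_const.mul (hpc _))).intervalIntegrable _ _)
      fun θ _ => add_le_add (key w hs θ) (key _ (hs.XF 0 0 1) θ)
  have hpi4 : ∀ F : SF, IntervalIntegrable (fun θ => 4 * ∫ s in r..b, s * pol t (en F) s θ) volume (-π) π :=
    fun F => (continuous_const.mul (hpc F)).intervalIntegrable _ _
  rw [intervalIntegral.integral_add (hpi4 _) (hpi4 _), intervalIntegral.integral_const_mul,
    intervalIntegral.integral_const_mul] at h2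
  have o : ∀ F, Supp R F → Out (t + R) t (en F) := fun F hF => hF.en.out hR (by linarith) le_rfl
  have p1 := polar_le (a := r) (b := b) (en w) (fun x => en_nonneg w (t, x)) (o w hs) (by linarith) (by linarith)
  have p2 := polar_le (a := r) (b := b) (en (XF 0 0 1 w)) (fun x => en_nonneg _ (t, x)) (o _ (hs.XF 0 0 1))
    (by linarith) (by linarith)
  linarith

/-! ### Transport equations of the profiles -/

/-- The radial derivative in polar coordinates. -/
def dr (t : ℝ) (F : SF) (ρ θ : ℝ) : ℝ := cos θ * pol t (d1 F) ρ θ + sin θ * pol t (d2 F) ρ θ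

/-- `½ (∂_r + e ∂ₜ)(√r u)`: the outgoing profile for `e = -1`, the incoming one for `e = 1`. -/
def prof (e : ℝ) (u : SF) (t r θ : ℝ) : ℝ :=
  1 / 2 * (√r * (dr t u r θ + e * pol t (dT u) r θ) + 1 / 2 * (pol t u r θ / √r))

/-- `(Ω² + ¼) u` in polar coordinates. -/
def ang (u : SF) (t r θ : ℝ) : ℝ := pol t (XF 0 0 1 (XF 0 0 1 u)) r θ + 1 / 4 * pol t u r θ

theorem pol_path (F : SF) (θ : ℝ) {T ρ : ℝ → ℝ} {α β s : ℝ} (hT : HasDerivAt T α s)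
    (hρ : HasDerivAt ρ β s) : HasDerivAt (fun s => pol (T s) F (ρ s) θ)
      (α * pol (T s) (dT F) (ρ s) θ + β * dr (T s) F (ρ s) θ) s := by
  have := (SF.hasFDerivAt F (T s, ρ s * cos θ, ρ s * sin θ)).comp_hasDerivAt s
    (hT.prodMk ((hρ.mul_const (cos θ)).prodMk (hρ.mul_const (sin θ))))
  refine this.congr_deriv ?_
  rw [show (α, β * cos θ, β * sin θ) = α • ((1 : ℝ), (0 : ℝ), (0 : ℝ)) +
    ((β * cos θ) • ((0 : ℝ), (1 : ℝ), (0 : ℝ)) + (β * sin θ) • ((0 : ℝ), (0 : ℝ), (1 : ℝ))) by simp,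
    map_add, map_add, map_smul, map_smul, map_smul]
  simp [pol, dr, d1, d2, dT, dV_app]
  ring

/-- `Ω²` in terms of second derivatives: the angular part of the Laplacian in polar coordinates. -/
theorem pol_rot2 (u : SF) (t r θ : ℝ) : pol t (XF 0 0 1 (XF 0 0 1 u)) r θ =
    r ^ 2 * (cos θ ^ 2 * pol t (d2 (d2 u)) r θ + sin θ ^ 2 * pol t (d1 (d1 u)) r θ -
      2 * cos θ * sin θ * pol t (d1 (d2 u)) r θ) - r * dr t u r θ := by
  simp only [XF_apply, map_zero, zero_add, map_one, one_mul, map_sub, leib, pol, dr, d1_c1, d1_c2, d2_c1, d2_c2,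
    SF.add_app, SF.sub_app, SF.mul_app, SF.zero_app, SF.one_app, c1_app, c2_app, d2_d1, map_add]
  ring

/-- The transport equation of the profiles along the null directions `(-e, 1)`. -/
theorem prof_hasDerivAt {e : ℝ} (he : e ^ 2 = 1) (u : SF) (θ : ℝ) {T ρ : ℝ → ℝ} {s : ℝ}
    (hT : HasDerivAt T (-e) s) (hρ : HasDerivAt ρ 1 s) (h0 : 0 < ρ s) :
    HasDerivAt (fun s => prof e u (T s) (ρ s) θ)
      (-(1 / 2) * (√(ρ s) * pol (T s) (box u) (ρ s) θ + ang u (T s) (ρ s) θ / √(ρ s) ^ 3)) s := by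
  have hS : 0 < √(ρ s) := sqrt_pos.2 h0
  have q0 := pol_path u θ hT hρ
  have q1 := pol_path (d1 u) θ hT hρ
  have q2 := pol_path (d2 u) θ hT hρ
  have q3 := pol_path (dT u) θ hT hρ
  have qS := hρ.sqrt h0.ne'
  have := ((qS.mul (((q1.const_mul (cos θ)).add (q2.const_mul (sin θ))).add (q3.const_mul e))).add
    ((q0.div qS hS.ne').const_mul (1 / 2))).const_mul (1 / 2)
  refine this.congr_deriv ?_
  have hr : ρ s = √(ρ s) ^ 2 := (sq_sqrt h0.le).symm
  have hbox : pol (T s) (box u) (ρ s) θ = pol (T s) (dT (dT u)) (ρ s) θ - pol (T s) (d1 (d1 u)) (ρ s) θ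
      - pol (T s) (d2 (d2 u)) (ρ s) θ := by simp [box, pol]
  rw [ang, pol_rot2, hbox]
  simp only [dr, d1_dT, d2_dT, d2_d1, Pi.add_apply]
  generalize √(ρ s) = S at *
  rw [hr]
  have hc : cos θ ^ 2 = 1 - sin θ ^ 2 := by rw [← sin_sq_add_cos_sq θ]; ring
  generalize pol (T s) u (S ^ 2) θ = v0
  generalize pol (T s) (d1 u) (S ^ 2) θ = v1
  generalize pol (T s) (d2 u) (S ^ 2) θ = v2
  generalize pol (T s) (dT u) (S ^ 2) θ = v3
  generalize pol (T s) (d1 (d1 u)) (S ^ 2) θ = v4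
  generalize pol (T s) (d1 (d2 u)) (S ^ 2) θ = v5
  generalize pol (T s) (d2 (d2 u)) (S ^ 2) θ = v6
  generalize pol (T s) (dT (d1 u)) (S ^ 2) θ = v7
  generalize pol (T s) (dT (d2 u)) (S ^ 2) θ = v8
  generalize pol (T s) (dT (dT u)) (S ^ 2) θ = v9
  generalize cos θ = a at *
  generalize sin θ = b at *
  have hS0 : S ≠ 0 := hS.ne'
  field_simp
  linear_combination 16 * S ^ 4 * (v4 + v6) * hc - 16 * S ^ 4 * v9 * he

/-- A solution of `V' = c (A - V) + g` with `c ≥ 0` and `A ≤ K` cannot exceed `K` by more than the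
integral of the bound `M t^{-5/4}` for `g`. -/
theorem fence {V A c g : ℝ → ℝ} {t0 t1 K M : ℝ} (hM : 0 ≤ M) (h0 : 0 < t0) (h01 : t0 ≤ t1)
    (hV : ∀ t ∈ Set.Icc t0 t1, HasDerivAt V (c t * (A t - V t) + g t) t)
    (hc : ∀ t ∈ Set.Icc t0 t1, 0 ≤ c t) (hA : ∀ t ∈ Set.Icc t0 t1, A t ≤ K)
    (hg : ∀ t ∈ Set.Icc t0 t1, g t < M * t ^ (-(5 / 4) : ℝ)) (hi : V t0 ≤ K) :
    V t1 ≤ K + 4 * M * t0 ^ (-(1 / 4) : ℝ) := by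
  have hB : ∀ t, 0 < t → HasDerivAt (fun t => K + 4 * M * (t0 ^ (-(1 / 4) : ℝ) - t ^ (-(1 / 4) : ℝ)))
      (M * t ^ (-(5 / 4) : ℝ)) t := fun t ht => by
    have := (((Real.hasDerivAt_rpow_const (p := -(1 / 4)) (Or.inl ht.ne')).const_sub
      (t0 ^ (-(1 / 4) : ℝ))).const_mul (4 * M)).const_add K
    refine this.congr_deriv ?_
    norm_num
    ring
  have hpos : ∀ t, t0 ≤ t → 0 < t := fun t ht => h0.trans_le ht
  have := image_le_of_deriv_right_lt_deriv_boundary' (f := V) (a := t0) (b := t1)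
    (fun t ht => (hV t ht).continuousAt.continuousWithinAt)
    (fun t ht => (hV t ⟨ht.1, ht.2.le⟩).hasDerivWithinAt)
    (B := fun t => K + 4 * M * (t0 ^ (-(1 / 4) : ℝ) - t ^ (-(1 / 4) : ℝ))) (by simpa using hi)
    (fun t ht => (hB t (hpos t ht.1)).continuousAt.continuousWithinAt)
    (fun t ht => (hB t (hpos t ht.1)).hasDerivWithinAt)
    (fun t ht he => by
      have ht' : t ∈ Set.Icc t0 t1 := ⟨ht.1, ht.2.le⟩
      have m1 : t ^ (-(1 / 4) : ℝ) ≤ t0 ^ (-(1 / 4) : ℝ) :=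
        Real.rpow_le_rpow_of_nonpos h0 ht.1 (by norm_num)
      have m2 : 0 ≤ 4 * M * (t0 ^ (-(1 / 4) : ℝ) - t ^ (-(1 / 4) : ℝ)) :=
        mul_nonneg (by linarith) (by linarith)
      have m3 := mul_nonneg (hc t ht') (show 0 ≤ V t - A t by rw [he]; linarith [hA t ht'])
      have := hg t ht'
      nlinarith) (x := t1) ⟨h01, le_rfl⟩
  refine this.trans ?_
  have m3 : 0 ≤ t1 ^ (-(1 / 4) : ℝ) := Real.rpow_nonneg (hpos t1 h01).le _
  nlinarith

/-! ### Bounds for the profiles in the wave zone -/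

theorem pol_zero {R t r θ : ℝ} {F : SF} (hF : Supp R F) (hR : 0 ≤ R) (ht : 0 ≤ t) (hr : t + R < r) :
    pol t F r θ = 0 := by
  refine hF.eq_zero (x := (r * cos θ, r * sin θ)) ht ?_
  have : (r * cos θ) ^ 2 + (r * sin θ) ^ 2 = r ^ 2 := by
    rw [← mul_one (r ^ 2), ← sin_sq_add_cos_sq θ]; ring
  change (t + R) ^ 2 < (r * cos θ) ^ 2 + (r * sin θ) ^ 2
  rw [this]
  nlinarith

theorem prof_zero {R t r θ : ℝ} {u : SF} (hu : Supp R u) (hR : 0 ≤ R) (ht : 0 ≤ t) (hr : t + R < r)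
    (e : ℝ) : prof e u t r θ = 0 := by
  simp [prof, dr, pol_zero hu hR ht hr, pol_zero hu.d1 hR ht hr, pol_zero hu.d2 hR ht hr,
    pol_zero hu.dT hR ht hr]

/-- `√r ∂ₜu` is the difference of the incoming and the outgoing profile. -/
theorem prof_sub (u : SF) (t r θ : ℝ) : √r * pol t (dT u) r θ = prof 1 u t r θ - prof (-1) u t r θ := by
  simp only [prof]; ring

/-- The pointwise information on the wave zone used for the profile equations. -/
structure WB (R Q κ ε T : ℝ) (u1 u2 : SF) : Prop where
  sol : Sol R u1 u2
  ba : BA T κ u1 u2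
  ang : ∀ t r θ, 2 * R + 2 ≤ t → t ≤ T → t / 2 ≤ r → θ ∈ Set.Icc (-π) π →
    |ang u1 t r θ| ≤ Q * ε * t ^ (1 / 4 : ℝ)

/-- The Sobolev inequality `wave_sup`, applied to `u` and its rotations, bounds `(Ω² + ¼)u`. -/
theorem wave_ang (R C : ℝ) (hC : 0 < C) : ∃ Q, 0 < Q ∧ ∀ ε κ T u1 u2, 0 < ε → Sol R u1 u2 → BA T κ u1 u2 →
    (∀ t, 0 ≤ t → t ≤ T → EB R t (C * ε ^ 2 * (1 + t) ^ (1 / 16 : ℝ)) u1) → WB R Q κ ε T u1 u2 := by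
  refine ⟨√(128 * C), by positivity, fun ε κ T u1 u2 hε hs hB hE => ⟨hs, hB, fun t r θ h1 h2 h3 h4 => ?_⟩⟩
  have hR := hs.hR
  have ht : 1 ≤ t := by linarith
  have E := hE t (by linarith) h2
  have w1 := wave_sup hR u1 hs.s1 h1 h3 h4
  have w2 := wave_sup hR _ ((hs.s1.XF 0 0 1).XF 0 0 1) h1 h3 h4
  have hp : (1 + t) ^ (1 / 16 : ℝ) ≤ 2 * t ^ (1 / 2 : ℝ) := by
    have a1 : (1 + t) ^ (1 / 16 : ℝ) ≤ (2 * t) ^ (1 / 16 : ℝ) :=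
      Real.rpow_le_rpow (by linarith) (by linarith) (by norm_num)
    rw [Real.mul_rpow (by norm_num) (by linarith)] at a1
    have b1 : (2 : ℝ) ^ (1 / 16 : ℝ) ≤ 2 ^ (1 : ℝ) :=
      Real.rpow_le_rpow_of_exponent_le (by norm_num) (by norm_num)
    rw [Real.rpow_one] at b1
    have b2 : t ^ (1 / 16 : ℝ) ≤ t ^ (1 / 2 : ℝ) := Real.rpow_le_rpow_of_exponent_le ht (by norm_num)
    exact a1.trans (by gcongr)
  have hC2 : C * ε ^ 2 * (1 + t) ^ (1 / 16 : ℝ) ≤ C * ε ^ 2 * (2 * t ^ (1 / 2 : ℝ)) := by gcongr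
  have e0 := E.e0
  have o1 := E.o1
  have o2 := E.o2
  have o3 := E.o3
  refine abs_le_of_sq_le_sq ?_ (by positivity)
  have ht4 : (t ^ (1 / 4 : ℝ)) ^ 2 = t ^ (1 / 2 : ℝ) := by
    rw [← Real.rpow_natCast, ← Real.rpow_mul (by linarith)]; norm_num
  rw [mul_pow, mul_pow, sq_sqrt (by positivity), ht4, DampedWave.ang]
  generalize pol t u1 r θ = x at *
  generalize pol t (XF 0 0 1 (XF 0 0 1 u1)) r θ = y at *
  nlinarith [sq_nonneg (y - 1 / 4 * x), sq_nonneg x, sq_nonneg y]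

/-- The right side of the profile equations is integrable up to the damping term. -/
theorem ang_term {R Q κ ε T t r θ : ℝ} {u1 u2 : SF} (h : WB R Q κ ε T u1 u2) (hQ : 0 < Q) (hε : 0 < ε)
    (h1 : 2 * R + 2 ≤ t) (h2 : t ≤ T) (h3 : t / 2 ≤ r) (h4 : θ ∈ Set.Icc (-π) π) :
    |ang u1 t r θ / √r ^ 3| ≤ 3 * Q * ε * t ^ (-(5 / 4) : ℝ) := by
  have hR := h.sol.hR
  have ht : 0 < t := by linarith
  have hr : 0 < r := by linarith
  have hS := sqrt_pos.2 hr
  have hst := sqrt_pos.2 ht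
  have hle : √t ≤ 36 / 25 * √r := by
    refine abs_le_of_sq_le_sq' ?_ (by positivity) |>.2
    rw [mul_pow, sq_sqrt ht.le, sq_sqrt hr.le]; linarith
  have hle3 : √t ^ 3 ≤ 3 * √r ^ 3 := by
    calc √t ^ 3 ≤ (36 / 25 * √r) ^ 3 := by gcongr
      _ = (36 / 25) ^ 3 * √r ^ 3 := by ring
      _ ≤ 3 * √r ^ 3 := by gcongr; norm_num
  have he : t ^ (1 / 4 : ℝ) = t ^ (-(5 / 4) : ℝ) * √t ^ 3 := by
    rw [sqrt_eq_rpow, ← Real.rpow_natCast, ← Real.rpow_mul ht.le, ← Real.rpow_add ht]; norm_num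
  rw [abs_div, abs_of_pos (show 0 < √r ^ 3 by positivity), div_le_iff₀ (by positivity)]
  refine (h.ang t r θ h1 h2 h3 h4).trans ?_
  rw [he]
  have : 0 < t ^ (-(5 / 4) : ℝ) := Real.rpow_pos_of_pos ht _
  calc Q * ε * (t ^ (-(5 / 4) : ℝ) * √t ^ 3) ≤ Q * ε * (t ^ (-(5 / 4) : ℝ) * (3 * √r ^ 3)) := by gcongr
    _ = _ := by ring

theorem box_eq {R : ℝ} {u1 u2 : SF} (h : Sol R u1 u2) {t : ℝ} (ht : 0 < t) (r θ : ℝ) :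
    pol t (box u1) r θ = -(pol t (dT u2) r θ ^ 2 * pol t (dT u1) r θ) := by
  have := h.n1 (t, r * cos θ, r * sin θ) ht
  simp only [SF.add_app, SF.mul_app] at this
  simp only [pol]
  linarith

/-- The bootstrap assumption in the form used along rays; finite speed of propagation replaces the
factor `√(1 + t)` by `√r`. -/
theorem sqrt_dT {R κ T : ℝ} {u1 u2 : SF} (h : Sol R u1 u2) (hB : BA T κ u1 u2) (hκ : 0 < κ) {t : ℝ}
    (ht : 0 < t) (hR : R ≤ t) (hT : t ≤ T) (r θ : ℝ) : |√r * pol t (dT u1) r θ| ≤ 2 * κ := by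
  rcases lt_or_ge (t + R) r with hlt | hle
  · rw [pol_zero h.s1.dT h.hR ht.le hlt]; simp; positivity
  rcases le_or_gt r 0 with hr | hr
  · rw [sqrt_eq_zero_of_nonpos hr]; simp; positivity
  refine abs_le_of_sq_le_sq ?_ (by positivity)
  rw [mul_pow, sq_sqrt hr.le]
  have := (hB t ht.le hT (r * cos θ, r * sin θ)).1
  change (1 + t) * pol t (dT u1) r θ ^ 2 ≤ κ ^ 2 at this
  nlinarith [sq_nonneg (pol t (dT u1) r θ)]

/-- The source of the profile equations is cubic in the bootstrap size `κ`. -/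
theorem box_term {R κ T : ℝ} {u1 u2 : SF} (h : Sol R u1 u2) (hB : BA T κ u1 u2) (hκ : 0 < κ) {t : ℝ}
    (ht : 0 < t) (hR : R ≤ t) (hT : t ≤ T) (r θ : ℝ) : |√r * pol t (box u1) r θ| ≤ 2 * κ ^ 3 / t := by
  have h1 := sqrt_dT h hB hκ ht hR hT r θ
  have h2 : pol t (dT u2) r θ ^ 2 ≤ κ ^ 2 / t := by
    have := (hB t ht.le hT (r * cos θ, r * sin θ)).2
    change (1 + t) * pol t (dT u2) r θ ^ 2 ≤ κ ^ 2 at this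
    rw [le_div_iff₀ ht]
    nlinarith [sq_nonneg (pol t (dT u2) r θ)]
  rw [box_eq h ht, show √r * -(pol t (dT u2) r θ ^ 2 * pol t (dT u1) r θ) =
    -(pol t (dT u2) r θ ^ 2 * (√r * pol t (dT u1) r θ)) by ring, abs_neg, abs_mul,
    abs_of_nonneg (sq_nonneg _)]
  calc _ ≤ κ ^ 2 / t * (2 * κ) := by gcongr
    _ = _ := by ring

/-- The incoming profile is small: integrate its transport equation from outside the light cone. -/
theorem A_bound {R Q κ ε T t r θ m : ℝ} {u1 u2 : SF} (h : WB R Q κ ε T u1 u2) (hQ : 0 < Q) (hε : 0 < ε)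
    (hκ : 0 < κ) (h1 : 4 * R + 4 ≤ t) (h2 : t ≤ T) (h3 : t / 2 ≤ r) (h4 : θ ∈ Set.Icc (-π) π)
    (hm : 0 ≤ m) (hm1 : R + 1 + t - r ≤ 2 * m) (hm2 : m ≤ t / 2) :
    |prof 1 u1 t r θ| ≤ m * (2 * κ ^ 3 / t + 6 * Q * ε * t ^ (-(5 / 4) : ℝ)) := by
  have hR := h.sol.hR
  have ht : 0 < t := by linarith
  have hd : ∀ s ∈ Set.Icc 0 m, HasDerivWithinAt (fun s => prof 1 u1 (t - s) (r + s) θ)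
      (-(1 / 2) * (√(r + s) * pol (t - s) (box u1) (r + s) θ + ang u1 (t - s) (r + s) θ / √(r + s) ^ 3))
      (Set.Icc 0 m) s := fun s hs =>
    (prof_hasDerivAt (by norm_num) u1 θ (T := fun s => t - s) (ρ := fun s => r + s)
      ((hasDerivAt_id s).const_sub t) ((hasDerivAt_id s).const_add r)
      (by linarith [hs.1])).hasDerivWithinAt
  have hb : ∀ s ∈ Set.Icc 0 m, ‖-(1 / 2) * (√(r + s) * pol (t - s) (box u1) (r + s) θ +
      ang u1 (t - s) (r + s) θ / √(r + s) ^ 3)‖ ≤ 2 * κ ^ 3 / t + 6 * Q * ε * t ^ (-(5 / 4) : ℝ) := by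
    intro s hs
    have hts : t / 2 ≤ t - s := by linarith [hs.2]
    have hs0 := hs.1
    have b1 := box_term h.sol h.ba hκ (t := t - s) (by linarith) (by linarith) (by linarith) (r + s) θ
    have b2 := ang_term h hQ hε (t := t - s) (r := r + s) (by linarith) (by linarith) (by linarith) h4
    have b3 : 2 * κ ^ 3 / (t - s) ≤ 2 * κ ^ 3 / (t / 2) := by gcongr
    have b4 : (t - s) ^ (-(5 / 4) : ℝ) ≤ 4 * t ^ (-(5 / 4) : ℝ) := by
      have c1 : (t - s) ^ (-(5 / 4) : ℝ) ≤ (t / 2) ^ (-(5 / 4) : ℝ) :=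
        Real.rpow_le_rpow_of_nonpos (by linarith) hts (by norm_num)
      have c2 : (t / 2) ^ (-(5 / 4) : ℝ) = t ^ (-(5 / 4) : ℝ) * 2 ^ (5 / 4 : ℝ) := by
        rw [Real.div_rpow ht.le (by norm_num), Real.rpow_neg (show (0:ℝ) ≤ 2 by norm_num)]
        field_simp
      have c3 : (2 : ℝ) ^ (5 / 4 : ℝ) ≤ 2 ^ (2 : ℝ) :=
        Real.rpow_le_rpow_of_exponent_le (by norm_num) (by norm_num)
      have c4 : (2 : ℝ) ^ (2 : ℝ) = 4 := by norm_num
      have : 0 < t ^ (-(5 / 4) : ℝ) := Real.rpow_pos_of_pos ht _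
      rw [c2] at c1
      nlinarith
    have b5 : 3 * Q * ε * (t - s) ^ (-(5 / 4) : ℝ) ≤ 3 * Q * ε * (4 * t ^ (-(5 / 4) : ℝ)) := by gcongr
    have b6 : 2 * κ ^ 3 / (t / 2) = 2 * (2 * κ ^ 3 / t) := by field_simp
    rw [norm_mul, Real.norm_eq_abs, Real.norm_eq_abs, show |(-(1 / 2) : ℝ)| = 1 / 2 by norm_num]
    have := abs_add_le (√(r + s) * pol (t - s) (box u1) (r + s) θ) (ang u1 (t - s) (r + s) θ / √(r + s) ^ 3)
    linarith
  have := (convex_Icc 0 m).norm_image_sub_le_of_norm_hasDerivWithin_le hd hb (x := m) (y := 0)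
    ⟨hm, le_rfl⟩ ⟨le_rfl, hm⟩
  simp only [sub_zero, add_zero, zero_sub, norm_neg, Real.norm_eq_abs] at this
  rw [prof_zero (R := R) (t := t - m) (r := r + m) h.sol.s1 hR (by linarith) (by linarith), sub_zero,
    abs_of_nonneg hm] at this
  linarith

/-- The equation of the outgoing profile along an outgoing ray, with its damping term. -/
theorem V_hasDerivAt {R : ℝ} {u1 u2 : SF} (h : Sol R u1 u2) {t σ : ℝ} (ht : 0 < t) (hr : 0 < t + σ) (θ : ℝ) :
    HasDerivAt (fun s => prof (-1) u1 s (s + σ) θ)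
      (1 / 2 * pol t (dT u2) (t + σ) θ ^ 2 * (prof 1 u1 t (t + σ) θ - prof (-1) u1 t (t + σ) θ) +
        -(1 / 2) * (ang u1 t (t + σ) θ / √(t + σ) ^ 3)) t := by
  have := prof_hasDerivAt (e := -1) (by norm_num) u1 θ (T := fun s => s) (ρ := fun s => s + σ)
    ((hasDerivAt_id t).congr_deriv (by norm_num)) ((hasDerivAt_id t).add_const σ) hr
  refine this.congr_deriv ?_
  rw [← prof_sub, box_eq h ht]
  ring

/-! ### Improvement of the bootstrap bound -/

theorem exists_polar (x y : ℝ) : ∃ r θ, 0 ≤ r ∧ θ ∈ Set.Icc (-π) π ∧ x = r * cos θ ∧ y = r * sin θ := by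
  refine ⟨‖(⟨x, y⟩ : ℂ)‖, Complex.arg ⟨x, y⟩, norm_nonneg _,
    ⟨(Complex.neg_pi_lt_arg _).le, Complex.arg_le_pi _⟩, ?_, ?_⟩
  · rw [Complex.norm_mul_cos_arg]
  · rw [Complex.norm_mul_sin_arg]

/-- Decay of `∂ₜu` in the wave zone, uniform up to the light cone. The outgoing profile is followed
along the ray from the point where it enters the region `{t ≥ 4R + 4, r ≥ t/2}`. -/
theorem wave_decay {R Q CI CE P κ ε T t r θ : ℝ} {u1 u2 : SF} (h : WB R Q κ ε T u1 u2) (hQ : 0 < Q)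
    (hε : 0 < ε) (hκ : 0 < κ) (hP : 0 < P) (hP2 : 2 * (4 * R + 4) * CE + CI ≤ P ^ 2) (hCI : 0 < CI) (hCE : 0 < CE)
    (hI : ∀ t, 1 ≤ t → R ≤ t → t ≤ T → ∀ x : ℝ × ℝ, 4 * (x.1 ^ 2 + x.2 ^ 2) ≤ t ^ 2 →
      (dT u1) (t, x) ^ 2 ≤ CI * ε ^ 2 / t)
    (hE : ∀ t, 0 ≤ t → t ≤ T → t ≤ 4 * R + 4 → ∀ x : ℝ × ℝ, (dT u1) (t, x) ^ 2 ≤ CE * ε ^ 2)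
    (h1 : 4 * R + 4 ≤ t) (h2 : t ≤ T) (h3 : t / 2 ≤ r) (h4 : θ ∈ Set.Icc (-π) π) :
    |√r * pol t (dT u1) r θ| ≤ 2 * κ ^ 3 + (14 * Q + P) * ε := by
  have hR := h.sol.hR
  have hA : ∀ t r, 4 * R + 4 ≤ t → t ≤ T → t / 2 ≤ r → |prof 1 u1 t r θ| ≤ κ ^ 3 + 3 * Q * ε := by
    intro t r h1 h2 h3
    have ht : 0 < t := by linarith
    refine (A_bound h hQ hε hκ h1 h2 h3 h4 (m := t / 2) (by linarith) (by linarith) le_rfl).trans ?_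
    have e1 : t / 2 * (2 * κ ^ 3 / t) = κ ^ 3 := by field_simp
    have e2 : t * t ^ (-(5 / 4) : ℝ) = t ^ (-(1 / 4) : ℝ) := by
      rw [← Real.rpow_one_add' ht.le (by norm_num)]; norm_num
    have e3 : t ^ (-(1 / 4) : ℝ) ≤ 1 :=
      Real.rpow_le_one_of_one_le_of_nonpos (by linarith) (by norm_num)
    have e4 : 3 * Q * ε * t ^ (-(1 / 4) : ℝ) ≤ 3 * Q * ε * 1 := by gcongr
    rw [← e2] at e4
    rw [mul_add, e1]
    linarith
  set σ := r - t with hσ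
  set t0 := max (4 * R + 4) (-2 * σ) with ht0
  have ht01 : 4 * R + 4 ≤ t0 := le_max_left _ _
  have ht0σ : -2 * σ ≤ t0 := le_max_right _ _
  have ht0t : t0 ≤ t := max_le h1 (by rw [hσ]; linarith)
  have ht0p : 0 < t0 := by linarith
  have hin : ∀ s ∈ Set.Icc t0 t, 4 * R + 4 ≤ s ∧ s ≤ T ∧ s / 2 ≤ s + σ := fun s hs =>
    ⟨by linarith [hs.1], by linarith [hs.2], by linarith [hs.1]⟩
  -- the entry point
  have hentry : |√(t0 + σ) * pol t0 (dT u1) (t0 + σ) θ| ≤ P * ε := by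
    rcases lt_or_ge (t0 + R) (t0 + σ) with hlt | hle
    · rw [pol_zero h.sol.s1.dT hR ht0p.le hlt]; simp; positivity
    have hr0 : 0 ≤ t0 + σ := by linarith
    refine abs_le_of_sq_le_sq ?_ (by positivity)
    rw [mul_pow, mul_pow, sq_sqrt hr0]
    have hPε := mul_le_mul_of_nonneg_right hP2 (sq_nonneg ε)
    have hpos1 : 0 ≤ (4 * R + 4) * CE * ε ^ 2 := by positivity
    have hpos2 : 0 ≤ CI * ε ^ 2 := by positivity
    rcases le_total (-2 * σ) (4 * R + 4) with hc | hc
    · have e0 : t0 = 4 * R + 4 := max_eq_left hc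
      have := hE t0 ht0p.le (by linarith) e0.le ((t0 + σ) * cos θ, (t0 + σ) * sin θ)
      change pol t0 (dT u1) (t0 + σ) θ ^ 2 ≤ _ at this
      have : (t0 + σ) * pol t0 (dT u1) (t0 + σ) θ ^ 2 ≤ 2 * (4 * R + 4) * (CE * ε ^ 2) := by
        gcongr; linarith
      linarith
    · have e0 : t0 = -2 * σ := max_eq_right hc
      have := hI t0 (by linarith) (by linarith) (by linarith) ((t0 + σ) * cos θ, (t0 + σ) * sin θ) (by
        have : ((t0 + σ) * cos θ) ^ 2 + ((t0 + σ) * sin θ) ^ 2 = (t0 + σ) ^ 2 := by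
          rw [← mul_one ((t0 + σ) ^ 2), ← sin_sq_add_cos_sq θ]; ring
        change 4 * (((t0 + σ) * cos θ) ^ 2 + ((t0 + σ) * sin θ) ^ 2) ≤ t0 ^ 2
        rw [this, e0]; linarith [sq_nonneg σ])
      change pol t0 (dT u1) (t0 + σ) θ ^ 2 ≤ _ at this
      have e2 : t0 + σ ≤ t0 := by linarith
      have : (t0 + σ) * pol t0 (dT u1) (t0 + σ) θ ^ 2 ≤ t0 * (CI * ε ^ 2 / t0) := by gcongr
      rw [mul_div_cancel₀ _ ht0p.ne'] at this
      linarith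
  set K := κ ^ 3 + 3 * Q * ε + P * ε with hK
  have hPε : 0 < P * ε := by positivity
  have hV0 : |prof (-1) u1 t0 (t0 + σ) θ| ≤ K := by
    have a := hA t0 (t0 + σ) ht01 (by linarith) (by linarith)
    rw [prof_sub] at hentry
    have := abs_sub (prof 1 u1 t0 (t0 + σ) θ) (prof 1 u1 t0 (t0 + σ) θ - prof (-1) u1 t0 (t0 + σ) θ)
    rw [sub_sub_cancel] at this
    linarith
  have hg : ∀ s ∈ Set.Icc t0 t, |-(1 / 2) * (ang u1 s (s + σ) θ / √(s + σ) ^ 3)| < 2 * Q * ε * s ^ (-(5 / 4) : ℝ) := by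
    intro s hs
    obtain ⟨a1, a2, a3⟩ := hin s hs
    have := ang_term h hQ hε (t := s) (r := s + σ) (by linarith) a2 a3 h4
    rw [abs_mul, show |(-(1 / 2) : ℝ)| = 1 / 2 by norm_num]
    have : 0 < Q * ε * s ^ (-(5 / 4) : ℝ) := by
      have : 0 < s ^ (-(5 / 4) : ℝ) := Real.rpow_pos_of_pos (by linarith) _
      positivity
    linarith
  have hdV : ∀ s ∈ Set.Icc t0 t, _ := fun s hs =>
    V_hasDerivAt h.sol (t := s) (σ := σ) (by linarith [(hin s hs).1]) (by linarith [(hin s hs).1, (hin s hs).2.2]) θ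
  have hAs : ∀ s ∈ Set.Icc t0 t, |prof 1 u1 s (s + σ) θ| ≤ K := fun s hs =>
    (hA s (s + σ) (hin s hs).1 (hin s hs).2.1 (hin s hs).2.2).trans (by linarith)
  have f1 := fence (V := fun s => prof (-1) u1 s (s + σ) θ) (A := fun s => prof 1 u1 s (s + σ) θ)
    (c := fun s => 1 / 2 * pol s (dT u2) (s + σ) θ ^ 2)
    (g := fun s => -(1 / 2) * (ang u1 s (s + σ) θ / √(s + σ) ^ 3)) (M := 2 * Q * ε) (K := K)
    (by positivity) ht0p ht0t hdV (fun s _ => by positivity) (fun s hs => (abs_le.1 (hAs s hs)).2)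
    (fun s hs => (le_abs_self _).trans_lt (hg s hs)) (abs_le.1 hV0).2
  have f2 := fence (V := fun s => -prof (-1) u1 s (s + σ) θ) (A := fun s => -prof 1 u1 s (s + σ) θ)
    (c := fun s => 1 / 2 * pol s (dT u2) (s + σ) θ ^ 2)
    (g := fun s => -(-(1 / 2) * (ang u1 s (s + σ) θ / √(s + σ) ^ 3))) (M := 2 * Q * ε) (K := K)
    (by positivity) ht0p ht0t (fun s hs => (hdV s hs).neg.congr_deriv (by ring))
    (fun s _ => by positivity) (fun s hs => by linarith [(abs_le.1 (hAs s hs)).1])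
    (fun s hs => (neg_le_abs _).trans_lt (hg s hs)) (by linarith [(abs_le.1 hV0).1])
  have e3 : t0 ^ (-(1 / 4) : ℝ) ≤ 1 :=
    Real.rpow_le_one_of_one_le_of_nonpos (by linarith) (by norm_num)
  have e4 : 4 * (2 * Q * ε) * t0 ^ (-(1 / 4) : ℝ) ≤ 4 * (2 * Q * ε) * 1 := by gcongr
  have hV : |prof (-1) u1 t (t + σ) θ| ≤ K + 8 * Q * ε := abs_le.2 ⟨by linarith, by linarith⟩
  have hrt : t + σ = r := by rw [hσ]; ring
  rw [hrt] at hV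
  rw [prof_sub]
  have := abs_sub (prof 1 u1 t r θ) (prof (-1) u1 t r θ)
  have := hA t r h1 h2 h3
  linarith

/-- The bootstrap bound is improved by a factor `2`. -/
theorem improved {R Q CI CE : ℝ} (hR : 0 ≤ R) (hQ : 0 < Q) (hCI : 0 < CI) (hCE : 0 < CE) :
    ∃ N, 0 < N ∧ ∀ κ ε T u1 u2, WB R Q κ ε T u1 u2 → 0 < ε → 0 < κ → κ ^ 2 ≤ 1 / 16 → N * ε ≤ κ / 8 →
    (∀ t, 1 ≤ t → R ≤ t → t ≤ T → ∀ x : ℝ × ℝ, 4 * (x.1 ^ 2 + x.2 ^ 2) ≤ t ^ 2 →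
      (dT u1) (t, x) ^ 2 ≤ CI * ε ^ 2 / t) →
    (∀ t, 0 ≤ t → t ≤ T → t ≤ 4 * R + 4 → ∀ x : ℝ × ℝ, (dT u1) (t, x) ^ 2 ≤ CE * ε ^ 2) →
    ∀ t, 0 ≤ t → t ≤ T → ∀ x : ℝ × ℝ, (1 + t) * (dT u1) (t, x) ^ 2 ≤ (κ / 2) ^ 2 := by
  set P := √(2 * (4 * R + 4) * CE + CI) with hP
  set N := 14 * Q + P + √(2 * CI) + √((4 * R + 5) * CE) with hN
  have hP0 : 0 < P := sqrt_pos.2 (by positivity)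
  have s1 : 0 < √(2 * CI) := sqrt_pos.2 (by positivity)
  have s2 : 0 < √((4 * R + 5) * CE) := sqrt_pos.2 (by positivity)
  have hN0 : 0 < N := by positivity
  refine ⟨N, hN0, ?_⟩
  intro κ ε T u1 u2 h hε hκ hκ1 hNε hI hE t ht0 htT x
  have small : ∀ X, 0 < X → √X ≤ N → X * ε ^ 2 ≤ (κ / 2) ^ 2 := by
    intro X hX hXN
    have : √X * ε ≤ κ / 2 := by
      have : √X * ε ≤ N * ε := by gcongr
      linarith
    calc X * ε ^ 2 = (√X * ε) ^ 2 := by rw [mul_pow, sq_sqrt hX.le]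
      _ ≤ _ := by gcongr
  rcases le_or_gt t (4 * R + 4) with hc | hc
  · have := hE t ht0 htT hc x
    have h5 := small ((4 * R + 5) * CE) (by positivity) (by linarith)
    have : (1 + t) * (dT u1) (t, x) ^ 2 ≤ (4 * R + 5) * (CE * ε ^ 2) :=
      mul_le_mul (by linarith) this (sq_nonneg _) (by linarith)
    linarith
  rcases le_or_gt (4 * (x.1 ^ 2 + x.2 ^ 2)) (t ^ 2) with hi | hi
  · have := hI t (by linarith) (by linarith) htT x hi
    have h5 := small (2 * CI) (by positivity) (by linarith)
    have h6 : (1 + t) * (dT u1) (t, x) ^ 2 ≤ (2 * t) * (CI * ε ^ 2 / t) := by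
      gcongr; linarith
    have e : (2 * t) * (CI * ε ^ 2 / t) = 2 * CI * ε ^ 2 := by
      have : t ≠ 0 := by linarith
      field_simp
    linarith
  obtain ⟨x1, x2⟩ := x
  obtain ⟨r, θ, hr, hθ, rfl, rfl⟩ := exists_polar x1 x2
  have hx : (r * cos θ) ^ 2 + (r * sin θ) ^ 2 = r ^ 2 := by
    rw [← mul_one (r ^ 2), ← sin_sq_add_cos_sq θ]; ring
  change t ^ 2 < 4 * ((r * cos θ) ^ 2 + (r * sin θ) ^ 2) at hi
  rw [hx] at hi
  have hr2 : t / 2 ≤ r := by nlinarith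
  have w := wave_decay h hQ hε hκ hP0 (sq_sqrt (by positivity)).ge hCI hCE hI hE hc.le htT hr2 hθ
  have h7 : |√r * pol t (dT u1) r θ| ≤ κ / 4 := by
    have a1 : κ ^ 3 ≤ κ / 16 := by nlinarith
    have a2 : (14 * Q + P) * ε ≤ N * ε := by gcongr; linarith
    linarith
  have h8 : r * pol t (dT u1) r θ ^ 2 ≤ (κ / 4) ^ 2 := by
    rw [← sq_sqrt hr, ← mul_pow, ← sq_abs]
    rw [sq_sqrt hr]
    gcongr
  change (1 + t) * pol t (dT u1) r θ ^ 2 ≤ (κ / 2) ^ 2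
  have h9 : (1 + t) * pol t (dT u1) r θ ^ 2 ≤ (4 * r) * pol t (dT u1) r θ ^ 2 := by
    gcongr; linarith
  linarith

/-! ### Global decay by continuity -/

/-- Continuity method: a bound that improves itself on every interval `[0, T]` propagates to all
times. Compactness of the support in `x` makes the bound open in time. -/
theorem continuation {W : ℝ → ℝ × ℝ → ℝ} {R a b : ℝ} (hR : 0 ≤ R) (hab : a < b)
    (hW : Continuous fun p : ℝ × ℝ × ℝ => W p.1 p.2) (h0 : ∀ x, W 0 x ≤ a)
    (hs : ∀ t, 0 ≤ t → ∀ x : ℝ × ℝ, (t + R) ^ 2 < x.1 ^ 2 + x.2 ^ 2 → W t x ≤ a)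
    (hi : ∀ T, 0 ≤ T → (∀ t, 0 ≤ t → t ≤ T → ∀ x, W t x ≤ b) → ∀ x, W T x ≤ a) :
    ∀ t, 0 ≤ t → ∀ x, W t x ≤ b := by
  intro A hA
  set S : Set ℝ := {t | ∀ l ∈ Set.Icc (0 : ℝ) 1, ∀ x, W (l * t) x ≤ b} with hS
  have hcl : IsClosed S := by
    simp only [hS, Set.ofPred_forall]
    refine isClosed_biInter fun l _ => isClosed_iInter fun x => isClosed_le ?_ continuous_const
    exact hW.comp (by fun_prop : Continuous fun t : ℝ => (l * t, x))
  have hS' : ∀ t ∈ S, ∀ s, 0 ≤ s → s ≤ t → ∀ x, W s x ≤ b := by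
    intro t ht s h1 h2 x
    rcases h1.eq_or_lt with rfl | h1
    · exact (h0 x).trans hab.le
    · have := ht (s / t) ⟨div_nonneg h1.le (by linarith), (div_le_one (by linarith)).2 h2⟩ x
      rwa [div_mul_cancel₀ _ (by linarith : t ≠ 0)] at this
  have key : Set.Icc 0 A ⊆ S := by
    refine IsClosed.Icc_subset_of_forall_exists_gt (hcl.inter isClosed_Icc) ?_ ?_
    · intro l _ x
      rw [mul_zero]
      exact (h0 x).trans hab.le
    rintro t ⟨htS, ht0, -⟩ y (hy : t < y)
    have h1 : ∀ x, W t x ≤ a := hi t ht0 (hS' t htS)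
    have h2 : ∀ᶠ s in 𝓝 t, ∀ x ∈ Metric.closedBall (0 : ℝ × ℝ) (t + 1 + R), W s x < b := by
      refine (isCompact_closedBall _ _).eventually_forall_of_forall_eventually fun x _ => ?_
      exact (hW.tendsto (t, x)).eventually (gt_mem_nhds (lt_of_le_of_lt (h1 x) hab))
    obtain ⟨δ, hδ, hδ2⟩ := Metric.eventually_nhds_iff.1 h2
    set z := min y (t + min 1 (δ / 2)) with hz
    have hz1 : t < z := lt_min hy (by have : 0 < min 1 (δ / 2) := by positivity
                                      linarith)
    have hzy : z ≤ y := min_le_left _ _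
    have hz2 : z ≤ t + min 1 (δ / 2) := min_le_right _ _
    have hz3 : z ≤ t + 1 := hz2.trans (by linarith [min_le_left 1 (δ / 2)])
    have hz4 : z ≤ t + δ / 2 := hz2.trans (by linarith [min_le_right 1 (δ / 2)])
    refine ⟨z, ?_, hz1, hzy⟩
    intro l hl x
    have hs0 : 0 ≤ l * z := mul_nonneg hl.1 (by linarith)
    have hsz : l * z ≤ z := mul_le_of_le_one_left (by linarith) hl.2
    generalize l * z = s at hs0 hsz
    rcases le_or_gt s t with hst | hst
    · exact hS' t htS s hs0 hst x
    by_cases hx : x ∈ Metric.closedBall (0 : ℝ × ℝ) (t + 1 + R)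
    · refine (hδ2 ?_ x hx).le
      rw [Real.dist_eq, abs_lt]
      constructor <;> linarith
    · refine (hs s hs0 x ?_).trans hab.le
      rw [mem_closedBall_zero_iff, not_le, Prod.norm_def, lt_max_iff, Real.norm_eq_abs,
        Real.norm_eq_abs] at hx
      have h3 : 0 ≤ s + R := by linarith
      rcases hx with hx | hx
      · have : s + R < |x.1| := by linarith
        nlinarith [sq_abs x.1, sq_nonneg x.2]
      · have : s + R < |x.2| := by linarith
        nlinarith [sq_abs x.2, sq_nonneg x.1]
  exact hS' A (key ⟨hA, le_rfl⟩) A hA le_rfl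

/-- The initial velocity is bounded once it is a fixed profile supported in a bounded set. -/
theorem bounded_of_supp {R : ℝ} (hR : 0 ≤ R) (G : SF)
    (hG : ∀ x : ℝ × ℝ, R ^ 2 < x.1 ^ 2 + x.2 ^ 2 → G (0, x) = 0) :
    ∃ M, 0 < M ∧ ∀ x : ℝ × ℝ, |G (0, x)| ≤ M := by
  have hc : Continuous fun x : ℝ × ℝ => G (0, x) := (SF.continuous G).comp (by fun_prop)
  obtain ⟨M, hM⟩ := (isCompact_closedBall (0 : ℝ × ℝ) R).exists_bound_of_continuousOn
    hc.continuousOn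
  refine ⟨max M 1, by positivity, fun x => ?_⟩
  by_cases hx : x ∈ Metric.closedBall (0 : ℝ × ℝ) R
  · exact (hM x hx).trans (le_max_left _ _)
  · rw [hG x, abs_zero]
    · positivity
    rw [mem_closedBall_zero_iff, not_le, Prod.norm_def, lt_max_iff, Real.norm_eq_abs,
      Real.norm_eq_abs] at hx
    rcases hx with hx | hx
    · nlinarith [sq_abs x.1, sq_nonneg x.2]
    · nlinarith [sq_abs x.2, sq_nonneg x.1]

/-- Small-data global decay: for small `ε` both orderings of the solution satisfy the wave-zone
bounds for all times, with constants independent of `T`. -/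
theorem global_WB {R : ℝ} (hR : 0 ≤ R) (F1 F2 G1 G2 : SF)
    (hG1 : ∀ x : ℝ × ℝ, R ^ 2 < x.1 ^ 2 + x.2 ^ 2 → G1 (0, x) = 0)
    (hG2 : ∀ x : ℝ × ℝ, R ^ 2 < x.1 ^ 2 + x.2 ^ 2 → G2 (0, x) = 0) :
    ∃ ε₀ κ Q, 0 < ε₀ ∧ 0 < κ ∧ 0 < Q ∧ ∀ ε u1 u2, 0 < ε → ε < ε₀ →
      Data R ε F1 F2 G1 G2 u1 u2 → ∀ T, WB R Q κ ε T u1 u2 ∧ WB R Q κ ε T u2 u1 := by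
  obtain ⟨κ, hκ⟩ : ∃ κ : ℝ, κ = 1 / 10 ^ 4 := ⟨_, rfl⟩
  have hκ0 : 0 < κ := by rw [hκ]; norm_num
  have hκ1 : κ ≤ 1 := by rw [hκ]; norm_num
  have hκ2 : κ ^ 2 ≤ 1 / 10 ^ 7 := by rw [hκ]; norm_num
  have hκ3 : κ ^ 2 ≤ 1 / 16 := by rw [hκ]; norm_num
  obtain ⟨C, hC, hE⟩ := energy_bounds R F1 F2 G1 G2
  obtain ⟨Q, hQ, hA⟩ := wave_ang R C hC
  obtain ⟨CI, hCI, hI⟩ := interior_decay R C hC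
  obtain ⟨CE, hCE, hL⟩ := early_bound R C (4 * R + 4) hC (by linarith)
  obtain ⟨N, hN, hF⟩ := improved hR hQ hCI hCE
  obtain ⟨M1, hM1, hb1⟩ := bounded_of_supp hR G1 hG1
  obtain ⟨M2, hM2, hb2⟩ := bounded_of_supp hR G2 hG2
  refine ⟨min (min 1 (κ / (8 * N))) (min (κ / (2 * M1)) (κ / (2 * M2))), κ, Q, by positivity, hκ0,
    hQ, ?_⟩
  intro ε u1 u2 hε hε0 hD
  simp only [lt_min_iff] at hε0
  obtain ⟨⟨e1, e2⟩, e3, e4⟩ := hε0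
  have e2' : N * ε ≤ κ / 8 := by
    rw [lt_div_iff₀ (by positivity)] at e2; linarith
  rw [lt_div_iff₀ (by positivity)] at e3 e4
  have wb : ∀ T, BA T κ u1 u2 → WB R Q κ ε T u1 u2 ∧ WB R Q κ ε T u2 u1 := fun T hB =>
    have h := hE ε κ T u1 u2 hε e1.le hD hκ0 hκ2 hB
    ⟨hA ε κ T u1 u2 hε hD.sol hB fun t h0 h1 => (h t h0 h1).1,
      hA ε κ T u2 u1 hε hD.sol.symm hB.symm fun t h0 h1 => (h t h0 h1).2⟩
  have imp : ∀ T, BA T κ u1 u2 → ∀ t, 0 ≤ t → t ≤ T → ∀ x : ℝ × ℝ,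
      (1 + t) * (dT u1) (t, x) ^ 2 ≤ (κ / 2) ^ 2 ∧ (1 + t) * (dT u2) (t, x) ^ 2 ≤ (κ / 2) ^ 2 := by
    intro T hB t h0 h1 x
    have h := hE ε κ T u1 u2 hε e1.le hD hκ0 hκ2 hB
    constructor
    · exact hF κ ε T u1 u2 (wb T hB).1 hε hκ0 hκ3 e2'
        (fun t a1 a2 a3 => hI T κ ε u1 u2 hD.sol hκ0 hκ1 hB hε t a1 a2 a3
          (h t (by linarith) a3).1)
        (fun t a1 a2 a3 => hL ε u1 u2 hD.sol hε t a1 a3 (h t a1 a2).1) t h0 h1 x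
    · exact hF κ ε T u2 u1 (wb T hB).2 hε hκ0 hκ3 e2'
        (fun t a1 a2 a3 => hI T κ ε u2 u1 hD.sol.symm hκ0 hκ1 hB.symm hε t a1 a2 a3
          (h t (by linarith) a3).2)
        (fun t a1 a2 a3 => hL ε u2 u1 hD.sol.symm hε t a1 a3 (h t a1 a2).2) t h0 h1 x
  have fin : ∀ t, 0 ≤ t → ∀ x : ℝ × ℝ,
      max ((1 + t) * (dT u1) (t, x) ^ 2) ((1 + t) * (dT u2) (t, x) ^ 2) ≤ κ ^ 2 := by
    refine continuation (W := fun t x => max ((1 + t) * (dT u1) (t, x) ^ 2)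
      ((1 + t) * (dT u2) (t, x) ^ 2)) (R := R) (a := (κ / 2) ^ 2) hR (by nlinarith) ?_ ?_ ?_ ?_
    · have c1 := SF.continuous (dT u1)
      have c2 := SF.continuous (dT u2)
      exact ((continuous_const.add continuous_fst).mul (c1.pow 2)).max
        ((continuous_const.add continuous_fst).mul (c2.pow 2))
    · intro x
      have k1 := hD.j1 x
      have k2 := hD.j2 x
      rw [SF.sub_app, SF.smul_app, sub_eq_zero] at k1 k2
      refine max_le ?_ ?_
      · rw [k1, add_zero, one_mul, ← sq_abs, abs_mul, abs_of_pos hε]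
        have := mul_le_mul_of_nonneg_left (hb1 x) hε.le
        exact pow_le_pow_left₀ (by positivity) (by linarith) 2
      · rw [k2, add_zero, one_mul, ← sq_abs, abs_mul, abs_of_pos hε]
        have := mul_le_mul_of_nonneg_left (hb2 x) hε.le
        exact pow_le_pow_left₀ (by positivity) (by linarith) 2
    · intro t ht x hx
      show max _ _ ≤ _
      rw [hD.sol.s1.dT.eq_zero ht hx, hD.sol.s2.dT.eq_zero ht hx]
      simp only [ne_eq, OfNat.ofNat_ne_zero, not_false_eq_true, zero_pow, mul_zero, max_self]
      positivity
    · intro T hT h x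
      have hB : BA T κ u1 u2 := fun t h0 h1 x => max_le_iff.1 (h t h0 h1 x)
      exact max_le_iff.2 (imp T hB T hT le_rfl x)
  exact fun T => wb T fun t h0 _ x => max_le_iff.1 (fin t h0 x)

/-! ### Convergence along a ray -/

/-- A function that late in time can raise neither `max(V, η)` nor `max(-V, η)` by more than `η`
has no oscillation between two levels, hence converges. -/
theorem tendsto_of_barriers {V : ℝ → ℝ} (H : ∀ η, 0 < η → ∃ T, ∀ t0 t1 K, T ≤ t0 → t0 ≤ t1 → η ≤ K →
    (V t0 ≤ K → V t1 ≤ K + η) ∧ (-V t0 ≤ K → -V t1 ≤ K + η)) :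
    ∃ L, Tendsto V atTop (𝓝 L) := by
  have no : ∀ (W : ℝ → ℝ) (a b : ℝ), a < b → 0 < b → (∀ η, 0 < η → ∃ T, ∀ t0 t1 K, T ≤ t0 → t0 ≤ t1 →
      η ≤ K → (W t0 ≤ K → W t1 ≤ K + η)) → (∃ᶠ t in atTop, W t < a) → (∃ᶠ t in atTop, b < W t) →
      False := by
    intro W a b hab hb hW h1 h2
    obtain ⟨η, hη, e1, e2⟩ : ∃ η, 0 < η ∧ 2 * η ≤ b ∧ η ≤ b - a :=
      ⟨min (b / 2) (b - a), lt_min (by linarith) (by linarith),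
        by linarith [min_le_left (b / 2) (b - a)], min_le_right _ _⟩
    obtain ⟨T, hT⟩ := hW η hη
    obtain ⟨t0, ht0, h3⟩ := frequently_atTop.1 h1 T
    obtain ⟨t1, ht1, h4⟩ := frequently_atTop.1 h2 t0
    have h5 := hT t0 t1 (max a η) ht0 ht1 (le_max_right _ _) (h3.le.trans (le_max_left _ _))
    rcases max_cases a η with ⟨h, -⟩ | ⟨h, -⟩ <;> rw [h] at h5 <;> linarith
  obtain ⟨T, hT⟩ := H 1 one_pos
  refine tendsto_of_no_upcrossings dense_univ ?_ ?_ ?_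
  · rintro a - b - hab ⟨h1, h2⟩
    rcases lt_or_ge 0 b with hb | hb
    · exact no V a b hab hb (fun η hη => (H η hη).imp fun T hT t0 t1 K h1 h2 h3 =>
        (hT t0 t1 K h1 h2 h3).1) h1 h2
    · exact no (fun t => -V t) (-b) (-a) (by linarith) (by linarith)
        (fun η hη => (H η hη).imp fun T hT t0 t1 K h1 h2 h3 => (hT t0 t1 K h1 h2 h3).2)
        (h2.mono fun t ht => by linarith) (h1.mono fun t ht => by linarith)
  · refine ⟨max (V T) 1 + 1, eventually_map.2 ?_⟩
    filter_upwards [eventually_ge_atTop T] with t ht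
    exact (hT T t (max (V T) 1) le_rfl ht (le_max_right _ _)).1 (le_max_left _ _)
  · refine ⟨-(max (-V T) 1 + 1), eventually_map.2 ?_⟩
    filter_upwards [eventually_ge_atTop T] with t ht
    have := (hT T t (max (-V T) 1) le_rfl ht (le_max_right _ _)).2 (le_max_left _ _)
    show -(max (-V T) 1 + 1) ≤ V t
    linarith

/-- Along a fixed ray `r = t + σ` the outgoing profile converges. -/
theorem prof_tendsto {R Q κ ε σ θ : ℝ} {u1 u2 : SF} (h : ∀ T, WB R Q κ ε T u1 u2) (hQ : 0 < Q)
    (hε : 0 < ε) (hκ : 0 < κ) (hθ : θ ∈ Set.Icc (-π) π) :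
    ∃ L, Tendsto (fun t => prof (-1) u1 t (t + σ) θ) atTop (𝓝 L) := by
  have hR := (h 0).sol.hR
  set m := max 0 ((R + 1 - σ) / 2) with hm
  have hm0 : 0 ≤ m := le_max_left _ _
  have hm1 : (R + 1 - σ) / 2 ≤ m := le_max_right _ _
  have hA : ∀ t, 4 * R + 4 ≤ t → 2 * m ≤ t → -2 * σ ≤ t → |prof 1 u1 t (t + σ) θ| ≤
      m * (2 * κ ^ 3 / t + 6 * Q * ε * t ^ (-(5 / 4) : ℝ)) := fun t h1 h2 h3 =>
    A_bound (h t) hQ hε hκ h1 le_rfl (by linarith) hθ hm0 (by linarith) (by linarith)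
  have hlim : Tendsto (fun t : ℝ => m * (2 * κ ^ 3 / t + 6 * Q * ε * t ^ (-(5 / 4) : ℝ))) atTop (𝓝 0) := by
    have a1 : Tendsto (fun t : ℝ => 2 * κ ^ 3 / t) atTop (𝓝 0) := tendsto_const_nhds.div_atTop tendsto_id
    have a2 := (tendsto_rpow_neg_atTop (y := 5 / 4) (by norm_num)).const_mul (6 * Q * ε)
    simpa using (a1.add a2).const_mul m
  have hlim2 : Tendsto (fun t : ℝ => 4 * (2 * Q * ε) * t ^ (-(1 / 4) : ℝ)) atTop (𝓝 0) := by
    simpa using (tendsto_rpow_neg_atTop (y := 1 / 4) (by norm_num)).const_mul (4 * (2 * Q * ε))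
  refine tendsto_of_barriers fun η hη => ?_
  obtain ⟨T1, hT1⟩ := eventually_atTop.1 ((hlim.eventually (ge_mem_nhds hη)).and
    (hlim2.eventually (ge_mem_nhds hη)))
  obtain ⟨T, t1', t2', t3', t4'⟩ : ∃ T, T1 ≤ T ∧ 4 * R + 4 ≤ T ∧ 2 * m ≤ T ∧ -2 * σ ≤ T :=
    ⟨max (max T1 (4 * R + 4)) (max (2 * m) (-2 * σ)), by simp, by simp, by simp, by simp⟩
  have hAη : ∀ t, T ≤ t → |prof 1 u1 t (t + σ) θ| ≤ η := fun t ht =>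
    (hA t (by linarith) (by linarith) (by linarith)).trans (hT1 t (by linarith)).1
  have hg : ∀ t, T ≤ t → |-(1 / 2) * (ang u1 t (t + σ) θ / √(t + σ) ^ 3)| <
      2 * Q * ε * t ^ (-(5 / 4) : ℝ) := fun t ht => by
    have h1 := ang_term (h t) hQ hε (r := t + σ) (by linarith) le_rfl (by linarith) hθ
    have h2 : 0 < Q * ε * t ^ (-(5 / 4) : ℝ) :=
      mul_pos (mul_pos hQ hε) (Real.rpow_pos_of_pos (by linarith) _)
    rw [abs_mul, abs_neg, abs_of_pos (by norm_num : (0 : ℝ) < 1 / 2)]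
    linarith
  have hV : ∀ t, T ≤ t → HasDerivAt (fun s => prof (-1) u1 s (s + σ) θ)
      (1 / 2 * pol t (dT u2) (t + σ) θ ^ 2 * (prof 1 u1 t (t + σ) θ - prof (-1) u1 t (t + σ) θ) +
        -(1 / 2) * (ang u1 t (t + σ) θ / √(t + σ) ^ 3)) t := fun t ht =>
    V_hasDerivAt (h t).sol (by linarith) (by linarith) θ
  refine ⟨T, fun t0 t1 K h1 h2 hK => ⟨fun hi => ?_, fun hi => ?_⟩⟩
  · refine (fence (M := 2 * Q * ε) (K := K) (by positivity) (by linarith) h2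
      (fun t ht => hV t (h1.trans ht.1)) (fun t _ => by positivity)
      (fun t ht => (abs_le.1 (hAη t (h1.trans ht.1))).2.trans hK)
      (fun t ht => (abs_lt.1 (hg t (h1.trans ht.1))).2) hi).trans ?_
    linarith [(hT1 t0 (by linarith)).2]
  · refine (fence (V := fun s => -prof (-1) u1 s (s + σ) θ) (A := fun t => -prof 1 u1 t (t + σ) θ)
      (c := fun t => 1 / 2 * pol t (dT u2) (t + σ) θ ^ 2)
      (g := fun t => -(-(1 / 2) * (ang u1 t (t + σ) θ / √(t + σ) ^ 3)))
      (M := 2 * Q * ε) (K := K) (by positivity) (by linarith) h2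
      (fun t ht => (hV t (h1.trans ht.1)).neg.congr_deriv (by ring)) (fun t _ => by positivity)
      (fun t ht => ?_) (fun t ht => ?_) hi).trans ?_
    · show -prof 1 u1 t (t + σ) θ ≤ K
      linarith [(abs_le.1 (hAη t (h1.trans ht.1))).1]
    · linarith [(abs_lt.1 (hg t (h1.trans ht.1))).1]
    · linarith [(hT1 t0 (by linarith)).2]

/-! ### The Cauchy problem in the algebra of smooth functions -/

/-- A curried smooth function as an element of the algebra `SF`. -/
def toSF {u : ℝ → ℝ → ℝ → ℝ} (h : Smooth3 u) : SF := ⟨fun p => u p.1 p.2.1 p.2.2, h⟩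

theorem pt_eq {u : ℝ → ℝ → ℝ → ℝ} (h : Smooth3 u) : pt u = fun t x y => (dT (toSF h)) (t, x, y) := by
  ext t x y
  exact (hasDerivAt_t (toSF h) t (x, y)).deriv

theorem p1_eq {u : ℝ → ℝ → ℝ → ℝ} (h : Smooth3 u) : p1 u = fun t x y => (d1 (toSF h)) (t, x, y) := by
  ext t x y
  exact (hasDerivAt_1 (toSF h) t x y).deriv

theorem p2_eq {u : ℝ → ℝ → ℝ → ℝ} (h : Smooth3 u) : p2 u = fun t x y => (d2 (toSF h)) (t, x, y) := by
  ext t x y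
  exact (hasDerivAt_2 (toSF h) t x y).deriv

theorem dAlembert_eq {u : ℝ → ℝ → ℝ → ℝ} (h : Smooth3 u) (t x y : ℝ) :
    dAlembert u t x y = (box (toSF h)) (t, x, y) := by
  have e1 : pt (pt u) t x y = (dT (dT (toSF h))) (t, x, y) := by
    rw [pt_eq h]; exact (hasDerivAt_t (dT (toSF h)) t (x, y)).deriv
  have e2 : p1 (p1 u) t x y = (d1 (d1 (toSF h))) (t, x, y) := by
    rw [p1_eq h]; exact (hasDerivAt_1 (d1 (toSF h)) t x y).deriv
  have e3 : p2 (p2 u) t x y = (d2 (d2 (toSF h))) (t, x, y) := by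
    rw [p2_eq h]; exact (hasDerivAt_2 (d2 (toSF h)) t x y).deriv
  rw [dAlembert, e1, e2, e3]
  rfl

/-- A datum on the plane, extended to be constant in time. -/
def statSF {f : ℝ → ℝ → ℝ} (h : SmoothCompact2 f) : SF :=
  ⟨fun p => f p.2.1 p.2.2, show ContDiff ℝ (⊤ : ℕ∞) _ from h.1.comp contDiff_snd⟩

theorem support_radius {f : ℝ → ℝ → ℝ} (h : SmoothCompact2 f) :
    ∃ R, 0 ≤ R ∧ ∀ R', R ≤ R' → ∀ x : ℝ × ℝ, R' ^ 2 < x.1 ^ 2 + x.2 ^ 2 → f x.1 x.2 = 0 := by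
  obtain ⟨M, hM⟩ := h.2.isCompact.isBounded.subset_closedBall 0
  refine ⟨2 * |M|, by positivity, fun R' hR x hx => ?_⟩
  by_contra hne
  have h1 : x ∈ Metric.closedBall (0 : ℝ × ℝ) M := hM (subset_tsupport _ hne)
  rw [mem_closedBall_zero_iff, Prod.norm_def, max_le_iff, Real.norm_eq_abs, Real.norm_eq_abs] at h1
  have h2 := le_abs_self M
  nlinarith [sq_abs x.1, sq_abs x.2, abs_nonneg x.1, abs_nonneg x.2, abs_nonneg M, h1.1, h1.2]

/-- A solution of the Cauchy problem, viewed in `SF`. Its support property is `finite_speed`, available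
because `∂ₜu □u ≤ 0`. -/
theorem data_of_solution {R ε : ℝ} (hR : 0 ≤ R) {f1 f2 g1 g2 : ℝ → ℝ → ℝ} {u1 u2 : ℝ → ℝ → ℝ → ℝ}
    (hf1 : SmoothCompact2 f1) (hf2 : SmoothCompact2 f2) (hg1 : SmoothCompact2 g1)
    (hg2 : SmoothCompact2 g2)
    (sf1 : ∀ x : ℝ × ℝ, R ^ 2 < x.1 ^ 2 + x.2 ^ 2 → f1 x.1 x.2 = 0)
    (sf2 : ∀ x : ℝ × ℝ, R ^ 2 < x.1 ^ 2 + x.2 ^ 2 → f2 x.1 x.2 = 0)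
    (sg1 : ∀ x : ℝ × ℝ, R ^ 2 < x.1 ^ 2 + x.2 ^ 2 → g1 x.1 x.2 = 0)
    (sg2 : ∀ x : ℝ × ℝ, R ^ 2 < x.1 ^ 2 + x.2 ^ 2 → g2 x.1 x.2 = 0)
    (hu : IsSolution ε f1 f2 g1 g2 u1 u2) :
    Data R ε (statSF hf1) (statSF hf2) (statSF hg1) (statSF hg2) (toSF hu.smooth1)
      (toSF hu.smooth2) := by
  have pde1 : ∀ p : ℝ × ℝ × ℝ, 0 < p.1 → (box (toSF hu.smooth1)) p =
      -((dT (toSF hu.smooth2)) p) ^ 2 * (dT (toSF hu.smooth1)) p := by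
    rintro ⟨t, x, y⟩ ht
    have := hu.pde1 t x y ht
    rwa [dAlembert_eq hu.smooth1, pt_eq hu.smooth1, pt_eq hu.smooth2] at this
  have pde2 : ∀ p : ℝ × ℝ × ℝ, 0 < p.1 → (box (toSF hu.smooth2)) p =
      -((dT (toSF hu.smooth1)) p) ^ 2 * (dT (toSF hu.smooth2)) p := by
    rintro ⟨t, x, y⟩ ht
    have := hu.pde2 t x y ht
    rwa [dAlembert_eq hu.smooth2, pt_eq hu.smooth1, pt_eq hu.smooth2] at this
  have i1 : ∀ x : ℝ × ℝ, (toSF hu.smooth1) (0, x) = ε * f1 x.1 x.2 := fun x => hu.init1 _ _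
  have i2 : ∀ x : ℝ × ℝ, (toSF hu.smooth2) (0, x) = ε * f2 x.1 x.2 := fun x => hu.init2 _ _
  have j1 : ∀ x : ℝ × ℝ, (dT (toSF hu.smooth1)) (0, x) = ε * g1 x.1 x.2 := fun x => by
    rw [← hu.initd1, pt_eq hu.smooth1]
  have j2 : ∀ x : ℝ × ℝ, (dT (toSF hu.smooth2)) (0, x) = ε * g2 x.1 x.2 := fun x => by
    rw [← hu.initd2, pt_eq hu.smooth2]
  refine ⟨⟨hR, ?_, ?_, ?_, ?_⟩, ?_, ?_, ?_, ?_⟩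
  · intro p hp
    simp only [SF.add_app, SF.mul_app, pde1 p hp]
    ring
  · intro p hp
    simp only [SF.add_app, SF.mul_app, pde2 p hp]
    ring
  · refine finite_speed hR _ (fun p hp => ?_) (fun x hx => ?_) fun x hx => ?_
    · rw [pde1 p hp]
      nlinarith [sq_nonneg ((dT (toSF hu.smooth2)) p * (dT (toSF hu.smooth1)) p)]
    · rw [i1, sf1 x hx, mul_zero]
    · rw [j1, sg1 x hx, mul_zero]
  · refine finite_speed hR _ (fun p hp => ?_) (fun x hx => ?_) fun x hx => ?_
    · rw [pde2 p hp]
      nlinarith [sq_nonneg ((dT (toSF hu.smooth2)) p * (dT (toSF hu.smooth1)) p)]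
    · rw [i2, sf2 x hx, mul_zero]
    · rw [j2, sg2 x hx, mul_zero]
  · intro x; rw [SF.sub_app, i1]; exact sub_self _
  · intro x; rw [SF.sub_app, i2]; exact sub_self _
  · intro x; rw [SF.sub_app, j1]; exact sub_self _
  · intro x; rw [SF.sub_app, j2]; exact sub_self _

/-- In polar coordinates `U = D(|x|^{1/2} u)` is the outgoing profile. -/
theorem Uop_eq {u : ℝ → ℝ → ℝ → ℝ} (h : Smooth3 u) {t r θ : ℝ} (hr : 0 < r) :
    Uop u t (r * cos θ) (r * sin θ) = prof (-1) (toSF h) t r θ := by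
  have hsq : (r * cos θ) ^ 2 + (r * sin θ) ^ 2 = r ^ 2 := by
    linear_combination r ^ 2 * cos_sq_add_sin_sq θ
  have hrad : radius (r * cos θ) (r * sin θ) = r := by
    rw [radius, hsq, sqrt_sq hr.le]
  have hS := sqrt_pos.2 hr
  have hSS := sq_sqrt hr.le
  have hrt : r ^ ((1 : ℝ) / 2) = √r := (sqrt_eq_rpow r).symm
  have hder : ∀ (φ : ℝ → ℝ) (a z : ℝ), φ z = r → HasDerivAt φ a z →
      HasDerivAt (fun s => φ s ^ ((1 : ℝ) / 2)) (a / (2 * √r)) z := by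
    intro φ a z hz hφ
    have := hφ.sqrt (by rw [hz]; exact hr.ne')
    rw [hz] at this
    exact this.congr_of_eventuallyEq (Eventually.of_forall fun s => (sqrt_eq_rpow (φ s)).symm)
  have e1 : p1 (fun s y1 y2 => radius y1 y2 ^ ((1 : ℝ) / 2) * u s y1 y2) t (r * cos θ) (r * sin θ) =
      cos θ / (2 * √r) * pol t (toSF h) r θ + √r * pol t (d1 (toSF h)) r θ := by
    have k1 : HasDerivAt (fun y => radius y (r * sin θ)) (cos θ) (r * cos θ) := by
      have := ((hasDerivAt_pow 2 (r * cos θ)).add_const ((r * sin θ) ^ 2)).sqrt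
        (by rw [hsq]; positivity)
      refine this.congr_deriv ?_
      rw [hsq, sqrt_sq hr.le]
      field_simp
      norm_num
      ring
    have := (hder (fun y => radius y (r * sin θ)) _ _ hrad k1).mul (hasDerivAt_1 (toSF h) t (r * cos θ) (r * sin θ))
    refine this.deriv.trans ?_
    rw [hrad, hrt]
    rfl
  have e2 : p2 (fun s y1 y2 => radius y1 y2 ^ ((1 : ℝ) / 2) * u s y1 y2) t (r * cos θ) (r * sin θ) =
      sin θ / (2 * √r) * pol t (toSF h) r θ + √r * pol t (d2 (toSF h)) r θ := by
    have k1 : HasDerivAt (fun y => radius (r * cos θ) y) (sin θ) (r * sin θ) := by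
      have := ((hasDerivAt_pow 2 (r * sin θ)).const_add ((r * cos θ) ^ 2)).sqrt
        (by rw [hsq]; positivity)
      refine this.congr_deriv ?_
      rw [hsq, sqrt_sq hr.le]
      field_simp
      norm_num
      ring
    have := (hder (fun y => radius (r * cos θ) y) _ _ hrad k1).mul (hasDerivAt_2 (toSF h) t (r * cos θ) (r * sin θ))
    refine this.deriv.trans ?_
    rw [hrad, hrt]
    rfl
  have e3 : pt (fun s y1 y2 => radius y1 y2 ^ ((1 : ℝ) / 2) * u s y1 y2) t (r * cos θ) (r * sin θ) =
      √r * pol t (dT (toSF h)) r θ := by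
    refine ((hasDerivAt_t (toSF h) t (r * cos θ, r * sin θ)).const_mul _).deriv.trans ?_
    rw [hrad, hrt]
    rfl
  rw [Uop, e1, e2, e3, hrad, prof, dr, mul_div_cancel_left₀ _ hr.ne', mul_div_cancel_left₀ _ hr.ne']
  have hcs := cos_sq_add_sin_sq θ
  field_simp
  linear_combination pol t (toSF h) r θ * hcs

theorem Vop_tendsto {u : ℝ → ℝ → ℝ → ℝ} (h : Smooth3 u) {σ θ L : ℝ}
    (hL : Tendsto (fun t => prof (-1) (toSF h) t (t + σ) θ) atTop (𝓝 L)) :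
    Tendsto (fun t => Vop u t σ (cos θ) (sin θ)) atTop (𝓝 L) := by
  refine hL.congr' ?_
  filter_upwards [eventually_gt_atTop (-σ)] with t ht
  exact (Uop_eq h (by linarith)).symm

end DampedWave

/-- existence of the limits `V_j⁺(σ,ω) = lim_{t→∞} V_j(t;σ,ω)`. -/
theorem limit_V_exists (f1 f2 g1 g2 : ℝ → ℝ → ℝ)
    (hf1 : SmoothCompact2 f1) (hf2 : SmoothCompact2 f2)
    (hg1 : SmoothCompact2 g1) (hg2 : SmoothCompact2 g2) :
    ∃ ε₀ : ℝ, 0 < ε₀ ∧ ∀ ε : ℝ, 0 < ε → ε < ε₀ →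
      ∀ u1 u2 : ℝ → ℝ → ℝ → ℝ, IsSolution ε f1 f2 g1 g2 u1 u2 →
        ∀ σ ω1 ω2 : ℝ, ω1 ^ 2 + ω2 ^ 2 = 1 →
          (∃ L1 : ℝ, Tendsto (fun t => Vop u1 t σ ω1 ω2) atTop (nhds L1)) ∧
          (∃ L2 : ℝ, Tendsto (fun t => Vop u2 t σ ω1 ω2) atTop (nhds L2)) := by
  obtain ⟨Ra, ha0, ha⟩ := DampedWave.support_radius hf1
  obtain ⟨Rb, hb0, hb⟩ := DampedWave.support_radius hf2
  obtain ⟨Rc, hc0, hc⟩ := DampedWave.support_radius hg1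
  obtain ⟨Rd, hd0, hd⟩ := DampedWave.support_radius hg2
  have hR : 0 ≤ Ra + Rb + Rc + Rd := by linarith
  have sf1 := ha (Ra + Rb + Rc + Rd) (by linarith)
  have sf2 := hb (Ra + Rb + Rc + Rd) (by linarith)
  have sg1 := hc (Ra + Rb + Rc + Rd) (by linarith)
  have sg2 := hd (Ra + Rb + Rc + Rd) (by linarith)
  obtain ⟨ε₀, κ, Q, hε₀, hκ, hQ, H⟩ := DampedWave.global_WB hR (DampedWave.statSF hf1)
    (DampedWave.statSF hf2) (DampedWave.statSF hg1) (DampedWave.statSF hg2) sg1 sg2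
  refine ⟨ε₀, hε₀, fun ε hε hεε u1 u2 hu σ ω1 ω2 hω => ?_⟩
  have hW := H ε _ _ hε hεε (DampedWave.data_of_solution hR hf1 hf2 hg1 hg2 sf1 sf2 sg1 sg2 hu)
  obtain ⟨r, θ, hr, hθ, rfl, rfl⟩ := DampedWave.exists_polar ω1 ω2
  obtain rfl : r = 1 := by
    have : r ^ 2 = 1 := by linear_combination hω - r ^ 2 * cos_sq_add_sin_sq θ
    nlinarith
  simp only [one_mul]
  obtain ⟨L1, hL1⟩ := DampedWave.prof_tendsto (σ := σ) (fun T => (hW T).1) hQ hε hκ hθ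
  obtain ⟨L2, hL2⟩ := DampedWave.prof_tendsto (σ := σ) (fun T => (hW T).2) hQ hε hκ hθ
  exact ⟨⟨L1, DampedWave.Vop_tendsto hu.smooth1 hL1⟩, L2, DampedWave.Vop_tendsto hu.smooth2 hL2⟩

end
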